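/- arXiv:1506.05746 — 3 statements merged into one kernel-verified Lean document; each statement's English description precedes it below -/
import Mathlib

section
/- Let θ be irrational with finite irrationality measure μ = μ(θ). If α > 1 − 1/(2μ−2), then the series ∑_{n=1}^∞ sin^n(π n θ)/n^α converges absolutely. -/
open Real Filter

/-!
Up to sign, `sin (π (n θ + φ))` is the cosine of `π` times the distance from `n θ + φ - 1 / 2` to
the nearest integer, so its `N`-th power decays like a Gaussian of width `1 / √N` in that distance.
If the distance from `k θ` to the integers is at least `c / k ^ s`, then any `L ≈ N ^ (1 / (2 s))`
consecutive points `n θ + φ` are `c / √N`-separated modulo one, and the `N`-th powers over them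
have bounded sum. Cutting `[N, 2N)` into about `N / L` such windows bounds the dyadic block of the
series by a multiple of `N ^ (1 - 1 / (2 s) - α)`, and these bounds form a geometric series when
`α > 1 - 1 / (2 s)`. Here `s` can be any number above `μ - 1`, and Dirichlet's approximation
theorem forces `s ≥ 1`.
-/

section SeparatedSums

variable {ι : Type*} {I : Finset ι} {x : ι → ℝ} {f : ℝ → ℝ} {g : ℕ → ℝ} {η S : ℝ}

lemma sum_le_of_pairwise_le_abs_sub_of_nonneg (hη : 0 < η)
    (hx : (I : Set ι).Pairwise fun i j => η ≤ |x i - x j|) (hx0 : ∀ i ∈ I, 0 ≤ x i)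
    (hfg : ∀ (n : ℕ) (t : ℝ), n * η ≤ t → f t ≤ g n) (hg0 : ∀ n, 0 ≤ g n) (hg : HasSum g S) :
    ∑ i ∈ I, f (x i) ≤ S := by
  set bin : ι → ℕ := fun i => ⌊x i / η⌋₊
  have hx0' : ∀ i ∈ I, 0 ≤ x i / η := fun i hi => div_nonneg (hx0 i hi) hη.le
  have hbin : Set.InjOn bin I := by
    intro i hi j hj hij
    by_contra hne
    have hfloor : ⌊x i / η⌋ = ⌊x j / η⌋ := by
      rw [← Int.natCast_floor_eq_floor (hx0' i hi), ← Int.natCast_floor_eq_floor (hx0' j hj)]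
      exact congrArg Nat.cast hij
    have hlt := Int.abs_sub_lt_one_of_floor_eq_floor hfloor
    rw [← sub_div, abs_div, abs_of_pos hη, div_lt_one hη] at hlt
    exact (hx hi hj hne).not_gt hlt
  calc ∑ i ∈ I, f (x i) ≤ ∑ i ∈ I, g (bin i) := Finset.sum_le_sum fun i hi =>
        hfg _ _ ((le_div_iff₀ hη).mp (Nat.floor_le (hx0' i hi)))
    _ = ∑ n ∈ I.image bin, g n := (Finset.sum_image hbin).symm
    _ ≤ S := sum_le_hasSum _ (fun n _ => hg0 n) hg

lemma sum_abs_le_of_pairwise_le_abs_sub (hη : 0 < η)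
    (hx : (I : Set ι).Pairwise fun i j => η ≤ |x i - x j|)
    (hfg : ∀ (n : ℕ) (t : ℝ), n * η ≤ t → f t ≤ g n) (hg0 : ∀ n, 0 ≤ g n) (hg : HasSum g S) :
    ∑ i ∈ I, f |x i| ≤ 2 * S := by
  classical
  have hnonneg : ∑ i ∈ I with 0 ≤ x i, f |x i| ≤ S := by
    rw [Finset.sum_congr rfl fun i hi => by rw [abs_of_nonneg (Finset.mem_filter.mp hi).2]]
    exact sum_le_of_pairwise_le_abs_sub_of_nonneg hη
      (hx.mono (Finset.coe_subset.mpr (Finset.filter_subset _ _)))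
      (fun i hi => (Finset.mem_filter.mp hi).2) hfg hg0 hg
  have hneg : ∑ i ∈ I with ¬ 0 ≤ x i, f |x i| ≤ S := by
    have hle : ∀ i ∈ I.filter (¬ 0 ≤ x ·), x i ≤ 0 := fun i hi =>
      (not_le.mp (Finset.mem_filter.mp hi).2).le
    rw [Finset.sum_congr rfl fun i hi => by rw [abs_of_nonpos (hle i hi)]]
    refine sum_le_of_pairwise_le_abs_sub_of_nonneg hη ?_
      (fun i hi => neg_nonneg.mpr (hle i hi)) hfg hg0 hg
    refine (hx.mono (Finset.coe_subset.mpr (Finset.filter_subset _ _))).imp fun i j hij => ?_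
    rwa [neg_sub_neg, abs_sub_comm]
  rw [← Finset.sum_filter_add_sum_filter_not I (0 ≤ x ·)]
  linarith

lemma sum_norm_coe_le_of_pairwise_le_norm_sub (hη : 0 < η)
    (hx : (I : Set ι).Pairwise fun i j => η ≤ ‖(x i : UnitAddCircle) - x j‖)
    (hfg : ∀ (n : ℕ) (t : ℝ), n * η ≤ t → f t ≤ g n) (hg0 : ∀ n, 0 ≤ g n) (hg : HasSum g S) :
    ∑ i ∈ I, f ‖(x i : UnitAddCircle)‖ ≤ 2 * S := by
  simp only [UnitAddCircle.norm_eq]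
  refine sum_abs_le_of_pairwise_le_abs_sub hη (hx.imp fun i j hij => hij.trans ?_) hfg hg0 hg
  rw [← AddCircle.coe_sub, UnitAddCircle.norm_eq]
  refine (round_le _ (round (x i) - round (x j))).trans_eq ?_
  push_cast
  ring_nf

end SeparatedSums

section CosPowers

lemma abs_cos_pi_mul_le_exp (t : ℝ) :
    |cos (π * t)| ≤ exp (-(2 * ‖(t : UnitAddCircle)‖ ^ 2)) := by
  set y := t - round t with hy
  have hπy : |π * y| ≤ π / 2 := by
    rw [abs_mul, abs_of_pos pi_pos, div_eq_mul_one_div]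
    gcongr
    exact abs_sub_round t
  have hcos : |cos (π * t)| = cos (π * y) := by
    rw [← abs_of_nonneg (cos_nonneg_of_mem_Icc (abs_le.mp hπy)), hy, mul_sub,
      mul_comm π (round t : ℝ), cos_sub_int_mul_pi, abs_mul, abs_zpow, abs_neg, abs_one,
      one_zpow, one_mul]
  calc |cos (π * t)| = cos (π * y) := hcos
    _ ≤ 1 - 2 / π ^ 2 * (π * y) ^ 2 :=
      cos_le_one_sub_mul_cos_sq (hπy.trans (half_le_self pi_pos.le))
    _ = -(2 * ‖(t : UnitAddCircle)‖ ^ 2) + 1 := by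
      rw [UnitAddCircle.norm_eq, sq_abs]
      field_simp
      ring
    _ ≤ exp (-(2 * ‖(t : UnitAddCircle)‖ ^ 2)) := add_one_le_exp _

lemma sum_abs_cos_pi_mul_pow_le {ι : Type*} {I : Finset ι} {x : ι → ℝ} {η : ℝ} {N : ℕ}
    (hη : 0 < η) (hN : 0 < N)
    (hx : (I : Set ι).Pairwise fun i j => η ≤ ‖(x i : UnitAddCircle) - x j‖) :
    ∑ i ∈ I, |cos (π * x i)| ^ N ≤ 2 * (1 - exp (-(2 * (N * η ^ 2))))⁻¹ := by
  have hgeom := hasSum_geometric_of_lt_one (exp_nonneg (-(2 * (N * η ^ 2))))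
    (exp_lt_one_iff.mpr (neg_lt_zero.mpr (by positivity)))
  refine (Finset.sum_le_sum fun i _ =>
    pow_le_pow_left₀ (abs_nonneg _) (abs_cos_pi_mul_le_exp (x i)) N).trans ?_
  refine sum_norm_coe_le_of_pairwise_le_norm_sub (f := fun t => exp (-(2 * t ^ 2)) ^ N)
    hη hx (fun n t ht => ?_) (fun n => by positivity) hgeom
  have hsq : n * η ^ 2 ≤ t ^ 2 := by
    calc n * η ^ 2 ≤ (n : ℝ) ^ 2 * η ^ 2 := by
          gcongr
          exact_mod_cast Nat.le_self_pow two_ne_zero n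
      _ = (n * η) ^ 2 := (mul_pow ..).symm
      _ ≤ t ^ 2 := by gcongr
  rw [← exp_nat_mul, ← exp_nat_mul, exp_le_exp]
  linarith [mul_le_mul_of_nonneg_left hsq N.cast_nonneg]

end CosPowers

section BlockSums

variable {f : ℕ → ℝ}

lemma sum_Ico_add_mul_le {C : ℝ} {L : ℕ}
    (hC : ∀ M, ∑ n ∈ Finset.Ico M (M + L), f n ≤ C) (M q : ℕ) :
    ∑ n ∈ Finset.Ico M (M + q * L), f n ≤ q * C := by
  induction q with
  | zero => simp
  | succ q ih =>
    rw [add_one_mul, ← add_assoc,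
      ← Finset.sum_Ico_consecutive f (Nat.le_add_right M _) (Nat.le_add_right _ L)]
    push_cast
    linarith [hC (M + q * L)]

lemma sum_Ico_add_le_of_sum_Ico_add_le {C : ℝ} {L : ℕ} (hf : ∀ n, 0 ≤ f n) (hL : 0 < L)
    (hC : ∀ M, ∑ n ∈ Finset.Ico M (M + L), f n ≤ C) (M K : ℕ) :
    ∑ n ∈ Finset.Ico M (M + K), f n ≤ (K / L + 1) * C := by
  have hC0 : 0 ≤ C := (Finset.sum_nonneg fun n _ => hf n).trans (hC 0)
  have hcover : K ≤ (K / L + 1) * L := by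
    rw [add_one_mul]
    exact (Nat.lt_div_mul_add hL).le
  calc ∑ n ∈ Finset.Ico M (M + K), f n
      ≤ ∑ n ∈ Finset.Ico M (M + (K / L + 1) * L), f n :=
        Finset.sum_le_sum_of_subset_of_nonneg
          (Finset.Ico_subset_Ico_right (by gcongr)) fun n _ _ => hf n
    _ ≤ (K / L + 1 : ℕ) * C := sum_Ico_add_mul_le hC _ _
    _ ≤ (K / L + 1) * C := by
        push_cast
        gcongr
        exact Nat.cast_div_le

lemma summable_of_sum_Ico_two_pow_le {b : ℕ → ℝ} (hf : ∀ n, 0 ≤ f n) (hb : Summable b)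
    (hfb : ∀ k, ∑ n ∈ Finset.Ico (2 ^ k) (2 ^ k + 2 ^ k), f n ≤ b k) : Summable f := by
  have hb0 : ∀ k, 0 ≤ b k := fun k => (Finset.sum_nonneg fun n _ => hf n).trans (hfb k)
  have hdyadic (K : ℕ) :
      ∑ n ∈ Finset.range (2 ^ K), f n ≤ f 0 + ∑ k ∈ Finset.range K, b k := by
    induction K with
    | zero => simp
    | succ K ih =>
      rw [pow_succ, mul_two, ← Finset.sum_range_add_sum_Ico f (Nat.le_add_right _ _),
        Finset.sum_range_succ]
      linarith [hfb K]
  refine summable_of_sum_range_le (c := f 0 + ∑' k, b k) hf fun n => ?_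
  calc ∑ i ∈ Finset.range n, f i ≤ ∑ i ∈ Finset.range (2 ^ n), f i :=
        Finset.sum_le_sum_of_subset_of_nonneg
          (Finset.range_subset_range.mpr Nat.lt_two_pow_self.le) fun i _ _ => hf i
    _ ≤ f 0 + ∑ k ∈ Finset.range n, b k := hdyadic n
    _ ≤ f 0 + ∑' k, b k := by
        gcongr
        exact hb.sum_le_tsum _ fun k _ => hb0 k

end BlockSums

/-- A point `θ` of the circle `ℝ / ℤ` is Diophantine of exponent `s` if, for all `k ≥ 1`, the
distance from `k θ` to zero is at least a fixed positive multiple of `k ^ (-s)`. The exponent refers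
to `‖k θ‖` and not to `|θ - a / k|`, so that irrationality measure `μ` corresponds to exponents
`s > μ - 1`. -/
def IsDiophantine (θ : UnitAddCircle) (s : ℝ) : Prop :=
  ∃ c : ℝ, 0 < c ∧ ∀ k : ℕ, 0 < k → c / (k : ℝ) ^ s ≤ ‖k • θ‖

lemma isDiophantine_of_div_rpow_le_abs_sub {θ c s : ℝ} (hc : 0 < c)
    (h : ∀ (a : ℤ) (b : ℕ), 0 < b → c / (b : ℝ) ^ (s + 1) ≤ |θ - a / b|) :
    IsDiophantine θ s := by
  refine ⟨c, hc, fun k hk => ?_⟩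
  have hk0 : (0 : ℝ) < k := by exact_mod_cast hk
  set a := round (k * θ)
  have hfactor : k * θ - a = k * (θ - a / k) := by field_simp
  calc c / (k : ℝ) ^ s = k * (c / (k : ℝ) ^ (s + 1)) := by
        rw [rpow_add_one hk0.ne']
        field_simp
    _ ≤ k * |θ - a / k| := by gcongr; exact h a k hk
    _ = |k * θ - a| := by rw [hfactor, abs_mul, abs_of_pos hk0]
    _ = ‖k • (θ : UnitAddCircle)‖ := by
        rw [← AddCircle.coe_nsmul, nsmul_eq_mul, UnitAddCircle.norm_eq]

namespace IsDiophantine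

lemma one_le {θ : UnitAddCircle} {s : ℝ} (h : IsDiophantine θ s) : 1 ≤ s := by
  obtain ⟨c, hc, hθ⟩ := h
  by_contra! hs
  set r := max s 0
  have hr : r < 1 := max_lt hs one_pos
  have hbound : ∀ n : ℕ, 0 < n → c ≤ (n : ℝ) ^ (-(1 - r)) := by
    intro n hn
    obtain ⟨k, ⟨hk1, hkn⟩, hk⟩ := AddCircle.exists_norm_nsmul_le θ hn
    have hn0 : (0 : ℝ) < n := by exact_mod_cast hn
    have hk1' : (1 : ℝ) ≤ k := by exact_mod_cast hk1
    calc c ≤ ‖k • θ‖ * (k : ℝ) ^ s := (div_le_iff₀ (by positivity)).mp (hθ k hk1)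
      _ ≤ 1 / (n + 1 : ℕ) * (k : ℝ) ^ r := by
          gcongr
          exact le_max_left s 0
      _ ≤ 1 / n * (n : ℝ) ^ r := by
          gcongr
          exact n.le_succ
      _ = (n : ℝ) ^ (-(1 - r)) := by
          rw [neg_sub, rpow_sub_one hn0.ne', one_div_mul_eq_div]
  have hlim : Tendsto (fun n : ℕ => (n : ℝ) ^ (-(1 - r))) atTop (nhds 0) :=
    (tendsto_rpow_neg_atTop (sub_pos.mpr hr)).comp tendsto_natCast_atTop_atTop
  exact hc.not_ge (ge_of_tendsto hlim ((eventually_gt_atTop 0).mono hbound))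

lemma exists_pairwise_Ico_le_norm_sub {θ : UnitAddCircle} {s : ℝ} (h : IsDiophantine θ s) :
    ∃ c : ℝ, 0 < c ∧ ∀ M L : ℕ,
      (Finset.Ico M (M + L) : Set ℕ).Pairwise fun m n => c / (L : ℝ) ^ s ≤ ‖m • θ - n • θ‖ := by
  have hs := h.one_le
  obtain ⟨c, hc, hθ⟩ := h
  refine ⟨c, hc, fun M L m hm n hn hmn => ?_⟩
  rw [Finset.mem_coe, Finset.mem_Ico] at hm hn
  wlog hlt : n < m generalizing m n
  · rw [norm_sub_rev]
    exact this n hn m hm hmn.symm (by omega)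
  have hsub : 0 < m - n := Nat.sub_pos_of_lt hlt
  rw [sub_eq_add_neg, ← sub_nsmul θ hlt.le]
  refine le_trans ?_ (hθ (m - n) hsub)
  gcongr
  omega

variable {θ s : ℝ}

lemma exists_sum_Ico_add_abs_cos_pow_le (h : IsDiophantine θ s) :
    ∃ C : ℝ, ∀ (φ : ℝ) (M : ℕ) {L N : ℕ}, 0 < L → (L : ℝ) ^ s ≤ √N →
      ∑ n ∈ Finset.Ico M (M + L), |cos (π * (n * θ + φ))| ^ N ≤ C := by
  obtain ⟨c, hc, hsep⟩ := h.exists_pairwise_Ico_le_norm_sub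
  refine ⟨2 * (1 - exp (-(2 * c ^ 2)))⁻¹, fun φ M L N hL hLN => ?_⟩
  have hN : (0 : ℝ) < N := sqrt_pos.mp (lt_of_lt_of_le (by positivity) hLN)
  have hη : N * (c / √N) ^ 2 = c ^ 2 := by
    rw [div_pow, sq_sqrt hN.le, mul_div_cancel₀ _ hN.ne']
  rw [← hη]
  refine sum_abs_cos_pi_mul_pow_le (by positivity) (by exact_mod_cast hN)
    ((hsep M L).imp fun m n hmn => ?_)
  have hdiff : ((m * θ + φ : ℝ) : UnitAddCircle) - (n * θ + φ : ℝ)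
      = m • (θ : UnitAddCircle) - n • (θ : UnitAddCircle) := by
    simp only [← nsmul_eq_mul, AddCircle.coe_add, AddCircle.coe_nsmul, add_sub_add_right_eq_sub]
  rw [hdiff]
  exact le_trans (by gcongr) hmn

lemma exists_sum_Ico_add_self_abs_cos_pow_le (h : IsDiophantine θ s) :
    ∃ C : ℝ, ∀ (φ : ℝ) (N : ℕ), 0 < N →
      ∑ n ∈ Finset.Ico N (N + N), |cos (π * (n * θ + φ))| ^ N
        ≤ C * (N : ℝ) ^ (1 - 1 / (2 * s)) := by
  have hs := h.one_le
  obtain ⟨C, hC⟩ := h.exists_sum_Ico_add_abs_cos_pow_le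
  refine ⟨3 * C, fun φ N hN => ?_⟩
  have hN1 : (1 : ℝ) ≤ N := by exact_mod_cast hN
  set β := 1 / (2 * s) with hβ
  have hβ1 : β ≤ 1 := by
    rw [hβ, div_le_one (by positivity)]
    linarith
  set L := ⌊(N : ℝ) ^ β⌋₊
  have hL : 0 < L := Nat.floor_pos.mpr (one_le_rpow hN1 (by positivity))
  have hL1 : (1 : ℝ) ≤ L := by exact_mod_cast hL
  have hLN : (L : ℝ) ^ s ≤ √N := by
    calc (L : ℝ) ^ s ≤ ((N : ℝ) ^ β) ^ s := by gcongr; exact Nat.floor_le (by positivity)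
      _ = √N := by
        rw [← rpow_mul N.cast_nonneg, sqrt_eq_rpow, hβ]
        field_simp
  have hcount : (N : ℝ) / L + 1 ≤ 3 * (N : ℝ) ^ (1 - β) := by
    have hNL : (N : ℝ) ^ β ≤ 2 * L := by linarith [Nat.lt_floor_add_one ((N : ℝ) ^ β)]
    have hdiv : (N : ℝ) / L ≤ 2 * (N : ℝ) ^ (1 - β) := by
      rw [rpow_sub (by positivity), rpow_one, mul_div_assoc', div_le_div_iff₀ (by positivity)
        (by positivity)]
      linarith [mul_le_mul_of_nonneg_left hNL N.cast_nonneg]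
    linarith [one_le_rpow hN1 (sub_nonneg.mpr hβ1)]
  have hC0 : 0 ≤ C := (Finset.sum_nonneg fun n _ => by positivity).trans (hC φ 0 hL hLN)
  calc ∑ n ∈ Finset.Ico N (N + N), |cos (π * (n * θ + φ))| ^ N
      ≤ (N / L + 1) * C := sum_Ico_add_le_of_sum_Ico_add_le (fun n => by positivity) hL
        (fun M => hC φ M hL hLN) N N
    _ ≤ 3 * (N : ℝ) ^ (1 - β) * C := by gcongr
    _ = 3 * C * (N : ℝ) ^ (1 - β) := by ring

lemma summable_abs_cos_pow_div_rpow (h : IsDiophantine θ s) (φ : ℝ) {α : ℝ}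
    (hα : 1 - 1 / (2 * s) < α) :
    Summable fun n : ℕ => |cos (π * (n * θ + φ))| ^ n / (n : ℝ) ^ α := by
  have hs := h.one_le
  have hα0 : 0 ≤ α := by
    have : 1 / (2 * s) ≤ 1 := (div_le_one (by positivity)).mpr (by linarith)
    linarith
  obtain ⟨C, hC⟩ := h.exists_sum_Ico_add_self_abs_cos_pow_le
  set γ := 1 - 1 / (2 * s)
  have hratio : (2 : ℝ) ^ (γ - α) < 1 :=
    rpow_lt_one_of_one_lt_of_neg one_lt_two (sub_neg.mpr hα)
  refine summable_of_sum_Ico_two_pow_le (fun n => by positivity)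
    ((summable_geometric_of_lt_one (by positivity) hratio).mul_left C) fun k => ?_
  have hpow : ((2 ^ k : ℕ) : ℝ) ^ (γ - α) = ((2 : ℝ) ^ (γ - α)) ^ k := by
    rw [Nat.cast_pow, Nat.cast_ofNat, rpow_pow_comm two_pos.le]
  have hN : 0 < 2 ^ k := by positivity
  set N := 2 ^ k
  have hN0 : (0 : ℝ) < N := by exact_mod_cast hN
  calc ∑ n ∈ Finset.Ico N (N + N), |cos (π * (n * θ + φ))| ^ n / (n : ℝ) ^ α
      ≤ ∑ n ∈ Finset.Ico N (N + N), |cos (π * (n * θ + φ))| ^ N / (N : ℝ) ^ α := by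
        refine Finset.sum_le_sum fun n hn => ?_
        have hNn : N ≤ n := (Finset.mem_Ico.mp hn).1
        have hpow_le := pow_le_pow_of_le_one (abs_nonneg _)
          (abs_cos_le_one (π * (n * θ + φ))) hNn
        gcongr
    _ = (∑ n ∈ Finset.Ico N (N + N), |cos (π * (n * θ + φ))| ^ N) / (N : ℝ) ^ α :=
        (Finset.sum_div ..).symm
    _ ≤ C * (N : ℝ) ^ γ / (N : ℝ) ^ α := by gcongr; exact hC φ N hN
    _ = C * ((2 : ℝ) ^ (γ - α)) ^ k := by rw [← hpow, rpow_sub hN0 γ, mul_div_assoc]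

end IsDiophantine

lemma exists_gt_one_sub_one_div_two_mul_lt {s α : ℝ} (hs : s ≠ 0) (h : 1 - 1 / (2 * s) < α) :
    ∃ t > s, 1 - 1 / (2 * t) < α := by
  have hcont : ContinuousAt (fun t : ℝ => 1 - 1 / (2 * t)) s := by
    have : 2 * s ≠ 0 := mul_ne_zero two_ne_zero hs
    fun_prop (disch := assumption)
  have hev : ∀ᶠ t in nhdsWithin s (Set.Ioi s), 1 - 1 / (2 * t) < α :=
    (hcont.eventually_lt_const h).filter_mono nhdsWithin_le_nhds
  exact (eventually_mem_nhdsWithin.and hev).exists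

theorem stmt11_general (θ μ α φ : ℝ)
    (hμ : ∀ δ' : ℝ, 0 < δ' → ∃ c : ℝ, 0 < c ∧ ∀ (a : ℤ) (b : ℕ), 1 ≤ b →
      c / (b : ℝ) ^ (μ + δ') < |θ - (a : ℝ) / b|)
    (hα : 1 - 1 / (2 * μ - 2) < α) :
    Summable (fun n : ℕ =>
      |sin (π * (((n : ℝ) + 1) * θ + φ)) ^ (n + 1) / ((n : ℝ) + 1) ^ α|) := by
  have hθ : ∀ s > μ - 1, IsDiophantine θ s := by
    intro s hs
    obtain ⟨c, hc, h⟩ := hμ (s + 1 - μ) (by linarith)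
    rw [add_sub_cancel] at h
    exact isDiophantine_of_div_rpow_le_abs_sub hc fun a b hb => (h a b hb).le
  have hμ1 : 1 ≤ μ - 1 := le_of_forall_gt_imp_ge_of_dense fun s hs => (hθ s hs).one_le
  rw [← mul_sub_one] at hα
  obtain ⟨s, hs, hsα⟩ := exists_gt_one_sub_one_div_two_mul_lt (by linarith) hα
  refine ((summable_nat_add_iff 1).mpr
    ((hθ s hs).summable_abs_cos_pow_div_rpow (φ - 1 / 2) hsα)).congr fun n => ?_
  have hphase : π * ((n + 1) * θ + (φ - 1 / 2)) = π * ((n + 1) * θ + φ) - π / 2 := by ring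
  rw [Nat.cast_add_one, hphase, cos_sub_pi_div_two, abs_div, abs_pow,
    abs_of_nonneg (a := ((n : ℝ) + 1) ^ α) (by positivity)]

/-- If θ is irrational with finite irrationality measure μ and α > 1 − 1/(2μ−2),
then ∑ sinⁿ(π n θ)/n^α converges absolutely. -/
theorem stmt11 (θ μ α : ℝ) (hirr : Irrational θ)
    (hμ : ∀ δ' : ℝ, 0 < δ' → ∃ c : ℝ, 0 < c ∧ ∀ (a : ℤ) (b : ℕ), 1 ≤ b →
      c / (b : ℝ) ^ (μ + δ') < |θ - (a : ℝ) / b|)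
    (hα : 1 - 1 / (2 * μ - 2) < α) :
    Summable (fun n : ℕ =>
      |Real.sin (Real.pi * ((n : ℝ) + 1) * θ) ^ (n + 1) / ((n : ℝ) + 1) ^ α|) := by
  simpa only [add_zero, mul_assoc] using stmt11_general θ μ α 0 hμ hα
end

section
/- Let θ be an irrational algebraic number and α > 1/2. Then both series ∑_{n=1}^∞ sin^n(π n θ)/n^α and ∑_{n=1}^∞ cos^n(π n θ)/n^α converge absolutely. -/
open Real Filter

/-!
Since `|cos (π x)| ≤ exp (-2 ‖x‖²)`, with `‖x‖` the distance from `x` to the nearest integer, a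
term `|cos (π (n θ - γ))| ^ n` with `n ∈ [N, 2N)` is negligible unless `n θ - γ` lies within
`N ^ (-1/2 + δ)` of an integer. If `|q θ - p| ≥ c q ^ (1 - μ)` for all `p / q`, then the signed
distances of the `n θ - γ` to the nearest integers are separated by `c N ^ (1 - μ)`, so this happens
for at most `O(N ^ (μ - 3/2 + δ))` values of `n`, and the block contributes
`O(N ^ (μ - 3/2 - α + δ))`. The sine is the cosine with phase `γ = 1/2`.

That every `μ > 2` is allowed for an algebraic `θ` is Roth's theorem. Siegel's lemma produces an
integer polynomial of small length and large index at `(θ, …, θ)`, while Roth's lemma bounds its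
index at a point with rational coordinates of rapidly decreasing denominators. Hence some Taylor
coefficient of low order at such a point is nonzero, so at least the reciprocal of its denominator;
it would be smaller if the coordinates approximated `θ` too well.
-/

namespace Roth

open MvPolynomial
open scoped Polynomial

section Hasse

variable {σ R S : Type*} [CommSemiring R]

/-- The Taylor expansion `P(X) ↦ P(X + Y)`, encoded as a polynomial in `Y` with coefficients in
the polynomials in `X`. Its coefficients are the Hasse derivatives. -/
noncomputable def taylorHom (σ R : Type*) [CommSemiring R] :
    MvPolynomial σ R →ₐ[R] MvPolynomial σ (MvPolynomial σ R) :=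
  aeval fun i => C (X i) + X i

/-- The Hasse derivative `∂^I / I!` of multi-order `I`, defined over any commutative semiring as
the coefficient of `Y ^ I` in `P(X + Y)`. -/
noncomputable def hasse (I : σ →₀ ℕ) : MvPolynomial σ R →ₗ[R] MvPolynomial σ R :=
  ((lcoeff (MvPolynomial σ R) I).restrictScalars R) ∘ₗ (taylorHom σ R).toLinearMap

/-- The translate `P(X + β)`, whose coefficients are the Taylor coefficients of `P` at `β`. The
point `β` may have coordinates in an algebra over the coefficients of `P`. -/
noncomputable def shift [CommSemiring S] [Algebra R S] (β : σ → S) :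
    MvPolynomial σ R →ₐ[R] MvPolynomial σ S :=
  aeval fun i => X i + C (β i)

theorem hasse_apply (I : σ →₀ ℕ) (P : MvPolynomial σ R) :
    hasse I P = coeff I (taylorHom σ R P) := rfl

@[simp] theorem taylorHom_X (i : σ) : taylorHom σ R (X i) = C (X i) + X i := by
  simp [taylorHom]

@[simp] theorem taylorHom_C (a : R) : taylorHom σ R (C a) = C (C a) := by
  simp [taylorHom, MvPolynomial.algebraMap_apply]

section Shift

variable [CommSemiring S] [Algebra R S]

@[simp] theorem shift_X (β : σ → S) (i : σ) :
    shift β (X i : MvPolynomial σ R) = X i + C (β i) := by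
  simp [shift]

@[simp] theorem shift_C (β : σ → S) (a : R) :
    shift β (C a : MvPolynomial σ R) = C (algebraMap R S a) := by
  simp [shift, MvPolynomial.algebraMap_apply]

theorem shift_eq_map_taylorHom (β : σ → S) (P : MvPolynomial σ R) :
    shift β P = map (aeval β : MvPolynomial σ R →ₐ[R] S).toRingHom (taylorHom σ R P) := by
  induction P using MvPolynomial.induction_on with
  | C a => simp
  | add p q hp hq => simp only [map_add, hp, hq]
  | mul_X p i hp => simp [hp, add_comm]

theorem coeff_shift (β : σ → S) (P : MvPolynomial σ R) (I : σ →₀ ℕ) :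
    coeff I (shift β P) = aeval β (hasse I P) := by
  rw [shift_eq_map_taylorHom, coeff_map, hasse_apply]
  rfl

theorem taylorHom_shift (β : σ → S) (P : MvPolynomial σ R) :
    taylorHom σ S (shift β P) =
      map (shift β : MvPolynomial σ R →ₐ[R] MvPolynomial σ S).toRingHom (taylorHom σ R P) := by
  induction P using MvPolynomial.induction_on with
  | C a => simp
  | add p q hp hq => simp only [map_add, hp, hq]
  | mul_X p i hp => simp [hp, add_right_comm]

theorem hasse_shift (β : σ → S) (P : MvPolynomial σ R) (I : σ →₀ ℕ) :
    hasse I (shift β P) = shift β (hasse I P) := by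
  rw [hasse_apply, taylorHom_shift, coeff_map, hasse_apply]
  rfl

theorem shift_shift (β γ : σ → S) (P : MvPolynomial σ R) :
    shift γ (shift β P) = shift (β + γ) P := by
  induction P using MvPolynomial.induction_on with
  | C a => simp
  | add p q hp hq => simp only [map_add, hp, hq]
  | mul_X p i hp => simp [hp, add_assoc, add_comm (C (β i))]

theorem shift_zero (P : MvPolynomial σ R) : shift (0 : σ → S) P = map (algebraMap R S) P := by
  induction P using MvPolynomial.induction_on with
  | C a => simp
  | add p q hp hq => simp only [map_add, hp, hq]
  | mul_X p i hp => simp [hp]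

end Shift

theorem shift_injective [CommRing S] [Algebra R S] (h : Function.Injective (algebraMap R S))
    (β : σ → S) : Function.Injective (shift β : MvPolynomial σ R →ₐ[R] MvPolynomial σ S) := by
  intro P Q hPQ
  have hback := congrArg (shift (-β)) hPQ
  rw [shift_shift, shift_shift, add_neg_cancel, shift_zero, shift_zero] at hback
  exact map_injective _ h hback

variable [Fintype σ]

theorem monomial_eq_C_mul_prod (A : σ →₀ ℕ) (a : R) : monomial A a = C a * ∏ i, X i ^ A i := by
  rw [monomial_eq, Finsupp.prod_fintype _ _ (by simp)]

theorem taylorHom_monomial [DecidableEq σ] (A : σ →₀ ℕ) (a : R) :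
    taylorHom σ R (monomial A a) = ∑ x ∈ Fintype.piFinset fun i => Finset.range (A i + 1),
      monomial (Finsupp.equivFunOnFinite.symm x)
        (monomial (A - Finsupp.equivFunOnFinite.symm x) (a * ∏ i, ((A i).choose (x i) : R))) := by
  rw [monomial_eq_C_mul_prod, map_mul, taylorHom_C, map_prod]
  simp only [map_pow, taylorHom_X, add_comm (C (X _)), add_pow]
  rw [Finset.prod_univ_sum, Finset.mul_sum]
  refine Finset.sum_congr rfl fun x _ => ?_
  rw [monomial_eq_C_mul_prod, monomial_eq_C_mul_prod]
  simp only [Finset.prod_mul_distrib, map_mul, map_prod, map_pow, map_natCast,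
    Finsupp.equivFunOnFinite_symm_apply_apply, Finsupp.tsub_apply]
  ring

theorem hasse_monomial (I A : σ →₀ ℕ) (a : R) :
    hasse I (monomial A a) = monomial (A - I) (a * ∏ i, ((A i).choose (I i) : R)) := by
  classical
  simp_rw [hasse_apply, taylorHom_monomial, coeff_sum, coeff_monomial]
  rw [Finset.sum_eq_single (I : σ → ℕ)]
  · simp
  · rintro x - hx
    rw [if_neg]
    rintro rfl
    exact hx rfl
  · intro hI
    obtain ⟨i, hi⟩ : ∃ i, A i < I i := by
      simpa [Fintype.mem_piFinset, Nat.lt_succ_iff] using hI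
    rw [Finset.prod_eq_zero (Finset.mem_univ i)
      (by rw [Nat.choose_eq_zero_of_lt hi, Nat.cast_zero])]
    simp

theorem hasse_eq_sum (I : σ →₀ ℕ) (P : MvPolynomial σ R) :
    hasse I P = ∑ A ∈ P.support,
      monomial (A - I) (coeff A P * ∏ i, ((A i).choose (I i) : R)) := by
  conv_lhs => rw [P.as_sum, map_sum]
  simp_rw [hasse_monomial]

end Hasse

theorem add_mem_support_of_mem_support_hasse {σ R : Type*} [Finite σ] [CommSemiring R]
    {I B : σ →₀ ℕ} {P : MvPolynomial σ R} (h : B ∈ (hasse I P).support) : B + I ∈ P.support := by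
  classical
  have := Fintype.ofFinite σ
  rw [hasse_eq_sum] at h
  obtain ⟨A, hA, hB⟩ := Finset.mem_biUnion.1 (support_sum h)
  have hle : I ≤ A := by
    intro i
    by_contra hi
    rw [Finset.prod_eq_zero (Finset.mem_univ i)
      (by rw [Nat.choose_eq_zero_of_lt (not_le.1 hi), Nat.cast_zero])] at hB
    simp at hB
  rwa [Finset.mem_singleton.1 (support_monomial_subset hB), tsub_add_cancel_of_le hle]

theorem degreeOf_hasse_le {σ R : Type*} [Finite σ] [CommSemiring R] (I : σ →₀ ℕ)
    (P : MvPolynomial σ R) (i : σ) : degreeOf i (hasse I P) ≤ degreeOf i P := by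
  rw [degreeOf_le_iff]
  intro B hB
  exact le_self_add.trans (monomial_le_degreeOf i (add_mem_support_of_mem_support_hasse hB))

section L1Norm

variable {σ R : Type*} [NormedCommRing R]

/-- The length of a polynomial: the sum of the norms of its coefficients. It plays the role of
the height, and is submultiplicative. -/
noncomputable def l1Norm (P : MvPolynomial σ R) : ℝ := ∑ A ∈ P.support, ‖coeff A P‖

theorem l1Norm_eq_sum {P : MvPolynomial σ R} {s : Finset (σ →₀ ℕ)} (h : P.support ⊆ s) :
    l1Norm P = ∑ A ∈ s, ‖coeff A P‖ :=
  Finset.sum_subset h fun A _ hA => by rw [notMem_support_iff.1 hA, norm_zero]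

theorem l1Norm_nonneg (P : MvPolynomial σ R) : 0 ≤ l1Norm P :=
  Finset.sum_nonneg fun _ _ => norm_nonneg _

@[simp] theorem l1Norm_zero : l1Norm (0 : MvPolynomial σ R) = 0 := by simp [l1Norm]

theorem norm_coeff_le_l1Norm (P : MvPolynomial σ R) (A : σ →₀ ℕ) : ‖coeff A P‖ ≤ l1Norm P := by
  classical
  rw [l1Norm_eq_sum (Finset.subset_insert A P.support)]
  exact Finset.single_le_sum (f := fun A => ‖coeff A P‖) (fun _ _ => norm_nonneg _)
    (Finset.mem_insert_self _ _)

theorem l1Norm_add_le (P Q : MvPolynomial σ R) : l1Norm (P + Q) ≤ l1Norm P + l1Norm Q := by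
  classical
  rw [l1Norm_eq_sum (support_add (p := P) (q := Q)),
    l1Norm_eq_sum (P := P) Finset.subset_union_left,
    l1Norm_eq_sum (P := Q) Finset.subset_union_right, ← Finset.sum_add_distrib]
  exact Finset.sum_le_sum fun A _ => by rw [coeff_add]; exact norm_add_le _ _

theorem l1Norm_sum_le {ι : Type*} (s : Finset ι) (f : ι → MvPolynomial σ R) :
    l1Norm (∑ i ∈ s, f i) ≤ ∑ i ∈ s, l1Norm (f i) :=
  Finset.le_sum_of_subadditive l1Norm l1Norm_zero.le l1Norm_add_le s f

theorem l1Norm_monomial (A : σ →₀ ℕ) (a : R) : l1Norm (monomial A a) = ‖a‖ := by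
  classical
  rw [l1Norm_eq_sum support_monomial_subset]
  simp

@[simp] theorem l1Norm_neg (P : MvPolynomial σ R) : l1Norm (-P) = l1Norm P := by
  simp [l1Norm]

theorem l1Norm_mul_le (P Q : MvPolynomial σ R) : l1Norm (P * Q) ≤ l1Norm P * l1Norm Q := by
  conv_lhs => rw [P.as_sum, Q.as_sum, Finset.sum_mul_sum]
  rw [l1Norm.eq_def P, l1Norm.eq_def Q, Finset.sum_mul_sum]
  refine (l1Norm_sum_le _ _).trans (Finset.sum_le_sum fun A _ => (l1Norm_sum_le _ _).trans
    (Finset.sum_le_sum fun B _ => ?_))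
  rw [monomial_mul, l1Norm_monomial]
  exact norm_mul_le _ _

variable [NormOneClass R]

theorem l1Norm_one : l1Norm (1 : MvPolynomial σ R) = 1 := by
  rw [← C_1, C_apply, l1Norm_monomial, norm_one]

theorem l1Norm_prod_le {ι : Type*} (s : Finset ι) (f : ι → MvPolynomial σ R) :
    l1Norm (∏ i ∈ s, f i) ≤ ∏ i ∈ s, l1Norm (f i) :=
  Finset.le_prod_of_submultiplicative_of_nonneg l1Norm l1Norm_nonneg l1Norm_one.le l1Norm_mul_le s f

theorem l1Norm_det_le {ι : Type*} [Fintype ι] [DecidableEq ι]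
    (M : Matrix ι ι (MvPolynomial σ R)) {b : ℝ} (h : ∀ i j, l1Norm (M i j) ≤ b) :
    l1Norm M.det ≤ (Fintype.card ι).factorial * b ^ Fintype.card ι := by
  have hterm (τ : Equiv.Perm ι) :
      l1Norm (Equiv.Perm.sign τ • ∏ i, M (τ i) i) ≤ b ^ Fintype.card ι := by
    have hprod : l1Norm (∏ i, M (τ i) i) ≤ b ^ Fintype.card ι :=
      calc l1Norm (∏ i, M (τ i) i) ≤ ∏ i, l1Norm (M (τ i) i) := l1Norm_prod_le _ _
        _ ≤ ∏ _i : ι, b := Finset.prod_le_prod (fun _ _ => l1Norm_nonneg _) fun i _ => h (τ i) i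
        _ = b ^ Fintype.card ι := Finset.prod_const b
    rcases Int.units_eq_one_or (Equiv.Perm.sign τ) with hτ | hτ <;> simpa [hτ] using hprod
  calc l1Norm M.det ≤ ∑ τ : Equiv.Perm ι, l1Norm (Equiv.Perm.sign τ • ∏ i, M (τ i) i) := by
        rw [Matrix.det_apply]
        exact l1Norm_sum_le _ _
    _ ≤ ∑ _τ : Equiv.Perm ι, b ^ Fintype.card ι := Finset.sum_le_sum fun τ _ => hterm τ
    _ = (Fintype.card ι).factorial * b ^ Fintype.card ι := by
        rw [Finset.sum_const, Finset.card_univ, Fintype.card_perm, nsmul_eq_mul]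

theorem l1Norm_hasse_le [Fintype σ] {N : ℕ} (I : σ →₀ ℕ) {P : MvPolynomial σ R}
    (h : ∀ A ∈ P.support, ∑ i, A i ≤ N) : l1Norm (hasse I P) ≤ 2 ^ N * l1Norm P := by
  rw [hasse_eq_sum, l1Norm.eq_def P, Finset.mul_sum]
  refine (l1Norm_sum_le _ _).trans (Finset.sum_le_sum fun A hA => ?_)
  have hchoose : ∏ i, (A i).choose (I i) ≤ 2 ^ N :=
    calc ∏ i, (A i).choose (I i) ≤ ∏ i, 2 ^ A i :=
          Finset.prod_le_prod' fun i _ => Nat.choose_le_two_pow _ _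
      _ = 2 ^ ∑ i, A i := Finset.prod_pow_eq_pow_sum _ _ _
      _ ≤ 2 ^ N := Nat.pow_le_pow_right two_pos (h A hA)
  calc l1Norm (monomial (A - I) (coeff A P * ∏ i, ((A i).choose (I i) : R)))
      = ‖coeff A P * ((∏ i, (A i).choose (I i) : ℕ) : R)‖ := by
        rw [l1Norm_monomial, Nat.cast_prod]
    _ ≤ ‖coeff A P‖ * (∏ i, (A i).choose (I i) : ℕ) := by
        refine (norm_mul_le _ _).trans ?_
        gcongr
        simpa only [norm_one, mul_one] using Nat.norm_cast_le (α := R) (∏ i, (A i).choose (I i))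
    _ ≤ 2 ^ N * ‖coeff A P‖ := by
        rw [mul_comm]
        gcongr
        exact_mod_cast hchoose

end L1Norm

theorem sum_le_of_degreeOf_le {σ R : Type*} [Fintype σ] [CommSemiring R] {P : MvPolynomial σ R}
    {r : σ → ℕ} (h : ∀ i, degreeOf i P ≤ r i) {A : σ →₀ ℕ} (hA : A ∈ P.support) :
    ∑ i, A i ≤ ∑ i, r i :=
  Finset.sum_le_sum fun i _ => (monomial_le_degreeOf i hA).trans (h i)

section Wronskian

theorem coeff_taylor_hasseDeriv {R : Type*} [CommSemiring R] (t : R) (g : R[X]) (l n : ℕ) :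
    (Polynomial.taylor t (Polynomial.hasseDeriv l g)).coeff n =
      ((n + l).choose n : R) * (Polynomial.taylor t g).coeff (n + l) := by
  rw [Polynomial.taylor_coeff, Polynomial.taylor_coeff, ← LinearMap.comp_apply,
    Polynomial.hasseDeriv_comp]
  simp

theorem coeff_taylor_mul_hasseDeriv {R : Type*} [CommSemiring R] {t : R} {g : R[X]} {l n : ℕ}
    (h : ∀ i < n + l, (Polynomial.taylor t g).coeff i = 0) (a : R[X]) :
    (Polynomial.taylor t (a * Polynomial.hasseDeriv l g)).coeff n =
      a.eval t * ((n + l).choose n * (Polynomial.taylor t g).coeff (n + l)) := by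
  rw [Polynomial.taylor_mul, Polynomial.coeff_mul, Finset.sum_eq_single (0, n)]
  · rw [coeff_taylor_hasseDeriv, Polynomial.taylor_coeff_zero]
  · rintro ⟨i, j⟩ hij hne
    have hsum : i + j = n := Finset.HasAntidiagonal.mem_antidiagonal.1 hij
    have hj : j < n := by
      simp only [ne_eq, Prod.mk.injEq, not_and] at hne
      omega
    rw [coeff_taylor_hasseDeriv, h _ (by omega), mul_zero, mul_zero]
  · simp

theorem exists_mem_coeff_taylor_eq_zero {F : Type*} [Field F] {V : Submodule F F[X]} {e : ℕ}
    (he : e < Module.finrank F V) (t : F) :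
    ∃ g ∈ V, g ≠ 0 ∧ ∀ i < e, (Polynomial.taylor t g).coeff i = 0 := by
  have := Module.finite_of_finrank_pos (he.trans_le' e.zero_le)
  let Φ : V →ₗ[F] (Fin e → F) :=
    LinearMap.pi fun i => Polynomial.lcoeff F (i : ℕ) ∘ₗ Polynomial.taylor t ∘ₗ V.subtype
  obtain ⟨g, hg, hg0⟩ := (Submodule.ne_bot_iff _).1
    (LinearMap.ker_ne_bot_of_finrank_lt (f := Φ) (by simpa using he))
  exact ⟨g, g.2, by simpa using hg0, fun i hi => congrFun (LinearMap.mem_ker.1 hg) ⟨i, hi⟩⟩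

/-- A nontrivial relation `∑ l, a l * hasseDeriv l (f j) = 0` between the rows passes to the span of
the `f j`. With `e` the largest index such that `a e ≠ 0`, the span contains some `g ≠ 0` vanishing
to order at least `e` at a point `t` where `a e` does not vanish, and then the relation for `g` has
a nonzero Taylor coefficient at `t`. -/
theorem det_hasseDeriv_ne_zero {F : Type*} [Field F] [CharZero F] {k : ℕ} {f : Fin k → F[X]}
    (hf : LinearIndependent F f) :
    (Matrix.of fun l j : Fin k => Polynomial.hasseDeriv (l : ℕ) (f j)).det ≠ 0 := by
  intro hdet
  obtain ⟨a, ha, hM⟩ := Matrix.exists_vecMul_eq_zero_iff.2 hdet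
  have hspan : Submodule.span F (Set.range f) ≤ LinearMap.ker
      (∑ l : Fin k, LinearMap.mulLeft F (a l) ∘ₗ Polynomial.hasseDeriv (l : ℕ)) := by
    rw [Submodule.span_le, Set.range_subset_iff]
    intro j
    simpa [Matrix.vecMul, dotProduct] using congrFun hM j
  obtain ⟨e, he, hmax⟩ : ∃ e, a e ≠ 0 ∧ ∀ l, e < l → a l = 0 := by
    obtain ⟨e, he⟩ := (Set.toFinite {l | a l ≠ 0}).exists_maximal (Function.ne_iff.1 ha)
    exact ⟨e, he.prop, fun l hl => not_not.1 fun h => he.not_gt h hl⟩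
  obtain ⟨t, ht⟩ : ∃ t, (a e).eval t ≠ 0 := by
    by_contra! h
    exact he (Polynomial.funext (by simpa using h))
  obtain ⟨g, hgV, hg0, hge⟩ := exists_mem_coeff_taylor_eq_zero
    (V := Submodule.span F (Set.range f)) (e := e) (by rw [finrank_span_eq_card hf]; simp) t
  set s := (Polynomial.taylor t g).natTrailingDegree
  have hs : (Polynomial.taylor t g).coeff s ≠ 0 :=
    Polynomial.trailingCoeff_nonzero_iff_nonzero.2 (by simpa using hg0)
  have hlow : ∀ i < s, (Polynomial.taylor t g).coeff i = 0 := fun i hi =>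
    Polynomial.coeff_eq_zero_of_lt_natTrailingDegree hi
  have hes : (e : ℕ) ≤ s := not_lt.1 fun h => hs (hge s h)
  have hrel : ∑ l : Fin k,
      (Polynomial.taylor t (a l * Polynomial.hasseDeriv (l : ℕ) g)).coeff (s - e) = 0 := by
    have := congrArg (fun p => (Polynomial.taylor t p).coeff (s - e)) (hspan hgV)
    simpa [map_sum, Polynomial.finsetSum_coeff] using this
  rw [Finset.sum_eq_single e] at hrel
  · rw [coeff_taylor_mul_hasseDeriv (fun i hi => hlow i (by omega)), Nat.sub_add_cancel hes] at hrel
    have hchoose : (s.choose (s - e) : F) ≠ 0 :=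
      Nat.cast_ne_zero.2 (Nat.choose_pos (Nat.sub_le _ _)).ne'
    exact mul_ne_zero ht (mul_ne_zero hchoose hs) hrel
  · intro l _ hle
    rcases lt_or_gt_of_ne hle with h | h
    · have : (l : ℕ) < e := h
      rw [coeff_taylor_mul_hasseDeriv (fun i hi => hlow i (by omega)), hlow _ (by omega), mul_zero,
        mul_zero]
    · simp [hmax l h]
  · simp

theorem coeff_taylor_X_map_C {R : Type*} [CommSemiring R] (f : R[X]) (l : ℕ) :
    (Polynomial.taylor Polynomial.X (f.map Polynomial.C)).coeff l =
      Polynomial.hasseDeriv l f := by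
  have hmap : Polynomial.hasseDeriv l (f.map Polynomial.C) =
      (Polynomial.hasseDeriv l f).map Polynomial.C := by
    ext1 n
    rw [Polynomial.hasseDeriv_coeff, Polynomial.coeff_map, Polynomial.coeff_map,
      Polynomial.hasseDeriv_coeff, map_mul, map_natCast]
  rw [Polynomial.taylor_coeff, hmap, Polynomial.eval_map, Polynomial.eval₂_C_X]

theorem taylor_X_map_C_aeval {σ R : Type*} [CommRing R] (κ : σ → R[X]) (P : MvPolynomial σ R) :
    Polynomial.taylor Polynomial.X ((aeval κ P).map Polynomial.C) =
      eval₂ (Polynomial.C.comp (aeval κ : MvPolynomial σ R →ₐ[R] R[X]).toRingHom)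
        (fun i => Polynomial.taylor Polynomial.X ((κ i).map Polynomial.C) - Polynomial.C (κ i))
        (taylorHom σ R P) := by
  induction P using MvPolynomial.induction_on with
  | C a => simp
  | add p q hp hq => rw [map_add, map_add, Polynomial.map_add, map_add, eval₂_add, hp, hq]
  | mul_X p i hp =>
    rw [map_mul, map_mul, Polynomial.map_mul, Polynomial.taylor_mul, eval₂_mul, hp]
    simp

/-- A Hasse derivative of a specialization to a curve is a combination of the specializations
of the Hasse derivatives of at most the same total order. -/
theorem exists_hasseDeriv_aeval {σ R : Type*} [Fintype σ] [CommRing R] (κ : σ → R[X]) (l : ℕ) :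
    ∃ g : (σ →₀ ℕ) → R[X], (∀ I, l < ∑ i, I i → g I = 0) ∧
      ∀ (P : MvPolynomial σ R) (s : Finset (σ →₀ ℕ)), (taylorHom σ R P).support ⊆ s →
        Polynomial.hasseDeriv l (aeval κ P) = ∑ I ∈ s, g I * aeval κ (hasse I P) := by
  let Y : σ → R[X][X] := fun i =>
    Polynomial.taylor Polynomial.X ((κ i).map Polynomial.C) - Polynomial.C (κ i)
  have hY (i : σ) : Polynomial.X ∣ Y i := by
    rw [Polynomial.X_dvd_iff, Polynomial.coeff_sub, coeff_taylor_X_map_C,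
      Polynomial.hasseDeriv_zero, Polynomial.coeff_C_zero, LinearMap.id_apply, sub_self]
  refine ⟨fun I => (∏ i, Y i ^ I i).coeff l, fun I hI => ?_, fun P s hs => ?_⟩
  · have hdvd : (Polynomial.X : R[X][X]) ^ (∑ i, I i) ∣ ∏ i, Y i ^ I i := by
      rw [← Finset.prod_pow_eq_pow_sum]
      exact Finset.prod_dvd_prod_of_dvd _ _ fun i _ => pow_dvd_pow_of_dvd (hY i) _
    exact Polynomial.X_pow_dvd_iff.1 hdvd l hI
  · rw [← coeff_taylor_X_map_C, taylor_X_map_C_aeval, eval₂_eq', Finset.sum_subset hs]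
    · rw [Polynomial.finsetSum_coeff]
      refine Finset.sum_congr rfl fun I _ => ?_
      rw [hasse_apply, RingHom.comp_apply, Polynomial.coeff_C_mul, mul_comm]
      rfl
    · intro A _ hA
      rw [notMem_support_iff.1 hA, map_zero, zero_mul]

theorem eq_of_sum_mul_pow_eq {n N : ℕ} {A B : Fin n → ℕ} (hA : ∀ i, A i < N) (hB : ∀ i, B i < N)
    (h : ∑ i, A i * N ^ (i : ℕ) = ∑ i, B i * N ^ (i : ℕ)) : A = B := by
  have hfin := finFunctionFinEquiv.injective (a₁ := fun i => (⟨A i, hA i⟩ : Fin N))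
    (a₂ := fun i => (⟨B i, hB i⟩ : Fin N)) (by ext; simpa [finFunctionFinEquiv_apply] using h)
  ext i
  simpa using congrFun hfin i

theorem coeff_aeval_X_pow_pow {R : Type*} [CommSemiring R] {n N : ℕ} {P : MvPolynomial (Fin n) R}
    (hN : ∀ i, degreeOf i P < N) {A : Fin n →₀ ℕ} (hA : ∀ i, A i < N) :
    (aeval (fun i : Fin n => (Polynomial.X ^ N ^ (i : ℕ) : R[X])) P).coeff
      (∑ i, A i * N ^ (i : ℕ)) = coeff A P := by
  simp only [aeval_def, eval₂_eq', Polynomial.finsetSum_coeff, ← pow_mul, mul_comm (N ^ _),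
    Finset.prod_pow_eq_pow_sum, Polynomial.algebraMap_apply, Algebra.algebraMap_self,
    RingHom.id_apply, Polynomial.coeff_C_mul, Polynomial.coeff_X_pow]
  rw [Finset.sum_eq_single A]
  · rw [if_pos rfl, mul_one]
  · intro B hB hBA
    rw [if_neg, mul_zero]
    intro heq
    exact hBA (DFunLike.coe_injective (eq_of_sum_mul_pow_eq
      (fun i => (monomial_le_degreeOf i hB).trans_lt (hN i)) hA heq.symm))
  · intro hA
    rw [notMem_support_iff.1 hA, zero_mul]

theorem linearIndependent_aeval_X_pow_pow {R ι : Type*} [Finite ι] [CommRing R] {n N : ℕ}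
    {φ : ι → MvPolynomial (Fin n) R} (hφ : LinearIndependent R φ)
    (hN : ∀ i j, degreeOf i (φ j) < N) :
    LinearIndependent R fun j =>
      aeval (fun i : Fin n => (Polynomial.X ^ N ^ (i : ℕ) : R[X])) (φ j) := by
  have := Fintype.ofFinite ι
  rw [Fintype.linearIndependent_iff] at hφ ⊢
  intro c hc
  cases isEmpty_or_nonempty ι with
  | inl h => exact h.elim
  | inr h =>
    have hdeg (i : Fin n) : degreeOf i (∑ j, c j • φ j) < N := by
      refine (degreeOf_sum_le i _ _).trans_lt
        ((Finset.sup_lt_iff ((Nat.zero_le _).trans_lt (hN i h.some))).2 fun j _ => ?_)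
      rw [smul_eq_C_mul]
      exact (degreeOf_C_mul_le _ _ _).trans_lt (hN i j)
    refine hφ c (MvPolynomial.ext _ _ fun A => ?_)
    by_contra hA
    have hAN (i : Fin n) : A i < N :=
      (monomial_le_degreeOf i (mem_support_iff.2 hA)).trans_lt (hdeg i)
    refine hA ?_
    rw [← coeff_aeval_X_pow_pow hdeg hAN, map_sum]
    simp [hc]

theorem exists_det_ne_zero_of_det_sum_smul_ne_zero {R ι κ : Type*} [CommRing R] [Fintype ι]
    [DecidableEq ι] (s : Finset κ) (g : ι → κ → R) (w : κ → ι → R)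
    (h : (Matrix.of fun i => ∑ a ∈ s, g i a • w a).det ≠ 0) :
    ∃ c : ι → κ, (∀ i, g i (c i) ≠ 0) ∧ (Matrix.of fun i => w (c i)).det ≠ 0 := by
  classical
  change Matrix.detRowAlternating.toMultilinearMap (fun i => ∑ a ∈ s, g i a • w a) ≠ 0 at h
  rw [MultilinearMap.map_sum_finset] at h
  obtain ⟨c, -, hc⟩ := Finset.exists_ne_zero_of_sum_ne_zero h
  rw [MultilinearMap.map_smul_univ] at hc
  refine ⟨c, fun i hi => hc ?_, fun h0 => hc ?_⟩
  · rw [Finset.prod_eq_zero (Finset.mem_univ i) hi, zero_smul]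
  · exact (congrArg _ h0).trans (smul_zero _)

/-- A nonvanishing generalized Wronskian. The Kronecker substitution `X i ↦ X ^ N ^ i` reduces
the statement to polynomials in one variable. -/
theorem exists_det_hasse_ne_zero {F : Type*} [Field F] [CharZero F] {n k : ℕ}
    {φ : Fin k → MvPolynomial (Fin n) F} (hφ : LinearIndependent F φ) :
    ∃ I : Fin k → (Fin n →₀ ℕ), (∀ l, ∑ i, I l i ≤ l) ∧
      (Matrix.of fun l j => hasse (I l) (φ j)).det ≠ 0 := by
  classical
  obtain ⟨N, hN⟩ : ∃ N, ∀ i j, degreeOf i (φ j) < N := by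
    obtain ⟨M, hM⟩ := (Set.finite_range fun p : Fin n × Fin k => degreeOf p.1 (φ p.2)).bddAbove
    exact ⟨M + 1, fun i j => Nat.lt_succ_of_le (hM ⟨(i, j), rfl⟩)⟩
  set κ : Fin n → F[X] := fun i => Polynomial.X ^ N ^ (i : ℕ)
  choose g hg hgs using fun l : ℕ => exists_hasseDeriv_aeval κ l
  let s : Finset (Fin n →₀ ℕ) := Finset.univ.biUnion fun j => (taylorHom (Fin n) F (φ j)).support
  have hs (j : Fin k) : (taylorHom (Fin n) F (φ j)).support ⊆ s :=
    Finset.subset_biUnion_of_mem (fun j => (taylorHom (Fin n) F (φ j)).support) (Finset.mem_univ j)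
  have hrows : (Matrix.of fun l j : Fin k => Polynomial.hasseDeriv (l : ℕ) (aeval κ (φ j))) =
      Matrix.of fun l : Fin k => ∑ I ∈ s, g l I • fun j => aeval κ (hasse I (φ j)) := by
    ext1 l j
    simp only [Matrix.of_apply, hgs l (φ j) s (hs j), Finset.sum_apply, Pi.smul_apply, smul_eq_mul]
  have hdet := det_hasseDeriv_ne_zero (linearIndependent_aeval_X_pow_pow hφ hN)
  rw [hrows] at hdet
  obtain ⟨I, hI, hI0⟩ := exists_det_ne_zero_of_det_sum_smul_ne_zero s _ _ hdet
  refine ⟨I, fun l => not_lt.1 fun h => hI l (hg l (I l) h), fun h0 => hI0 ?_⟩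
  have hmap := congrArg (aeval κ) h0
  rwa [AlgHom.map_det, map_zero] at hmap

end Wronskian

section SepProd

variable {n : ℕ} {R : Type*} [CommRing R]

/-- The product `ψ(X₀) φ(X₁, …, Xₙ)` of polynomials in separate variables. -/
noncomputable def sepProd (ψ : R[X]) (φ : MvPolynomial (Fin n) R) : MvPolynomial (Fin (n + 1)) R :=
  Polynomial.aeval (X 0) ψ * rename Fin.succ φ

theorem sepProd_add_left (ψ ψ' : R[X]) (φ : MvPolynomial (Fin n) R) :
    sepProd (ψ + ψ') φ = sepProd ψ φ + sepProd ψ' φ := by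
  simp only [sepProd, map_add, add_mul]

theorem sepProd_add_right (ψ : R[X]) (φ φ' : MvPolynomial (Fin n) R) :
    sepProd ψ (φ + φ') = sepProd ψ φ + sepProd ψ φ' := by
  simp only [sepProd, map_add, mul_add]

theorem sepProd_monomial (b : ℕ) (c : R) (A : Fin n →₀ ℕ) (a : R) :
    sepProd (Polynomial.monomial b c) (monomial A a) = monomial (Finsupp.cons b A) (c * a) := by
  rw [sepProd, Polynomial.aeval_monomial, monomial_eq_C_mul_prod A,
    monomial_eq_C_mul_prod (Finsupp.cons b A), Fin.prod_univ_succ]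
  simp only [algebraMap_eq, map_mul, map_prod, map_pow, rename_C, rename_X, Finsupp.cons_zero,
    Finsupp.cons_succ]
  ring

@[elab_as_elim]
theorem sepProd_induction {motive : R[X] → MvPolynomial (Fin n) R → Prop}
    (add_left : ∀ ψ ψ' φ, motive ψ φ → motive ψ' φ → motive (ψ + ψ') φ)
    (add_right : ∀ ψ φ φ', motive ψ φ → motive ψ φ' → motive ψ (φ + φ'))
    (monomial : ∀ b c A a, motive (Polynomial.monomial b c) (MvPolynomial.monomial A a))
    (ψ : R[X]) (φ : MvPolynomial (Fin n) R) : motive ψ φ := by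
  induction ψ using Polynomial.induction_on' with
  | add p q hp hq => exact add_left _ _ _ hp hq
  | monomial b c =>
    induction φ using MvPolynomial.induction_on' with
    | monomial A a => exact monomial _ _ _ _
    | add p q hp hq => exact add_right _ _ _ hp hq

theorem coeff_cons_sepProd (ψ : R[X]) (φ : MvPolynomial (Fin n) R) (b : ℕ) (A : Fin n →₀ ℕ) :
    coeff (Finsupp.cons b A) (sepProd ψ φ) = ψ.coeff b * coeff A φ := by
  classical
  induction ψ, φ using sepProd_induction with
  | add_left ψ ψ' φ h h' => simp [sepProd_add_left, add_mul, h, h']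
  | add_right ψ φ φ' h h' => simp [sepProd_add_right, mul_add, h, h']
  | monomial b' c A' a =>
    have hcons : Finsupp.cons b' A' = Finsupp.cons b A ↔ b' = b ∧ A' = A :=
      ⟨fun h => ⟨by simpa using DFunLike.congr_fun h 0, by simpa using congrArg Finsupp.tail h⟩,
        fun h => by rw [h.1, h.2]⟩
    rw [sepProd_monomial, coeff_monomial, coeff_monomial, Polynomial.coeff_monomial]
    simp only [hcons, ite_and]
    split_ifs <;> simp

theorem hasse_cons_sepProd (ψ : R[X]) (φ : MvPolynomial (Fin n) R) (l : ℕ) (I : Fin n →₀ ℕ) :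
    hasse (Finsupp.cons l I) (sepProd ψ φ) = sepProd (Polynomial.hasseDeriv l ψ) (hasse I φ) := by
  induction ψ, φ using sepProd_induction with
  | add_left ψ ψ' φ h h' => simp only [sepProd_add_left, map_add, h, h']
  | add_right ψ φ φ' h h' => simp only [sepProd_add_right, map_add, h, h']
  | monomial b c A a =>
    have hsub : (Finsupp.cons b A - Finsupp.cons l I : Fin (n + 1) →₀ ℕ) =
        Finsupp.cons (b - l) (A - I) := by
      ext i
      refine Fin.cases ?_ (fun i => ?_) i <;> simp
    rw [sepProd_monomial, hasse_monomial, hasse_monomial, Polynomial.hasseDeriv_monomial,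
      sepProd_monomial, Fin.prod_univ_succ, hsub]
    simp only [Finsupp.cons_zero, Finsupp.cons_succ]
    congr 1
    ring

theorem shift_sepProd (β : Fin (n + 1) → R) (ψ : R[X]) (φ : MvPolynomial (Fin n) R) :
    shift β (sepProd ψ φ) =
      sepProd (Polynomial.taylor (β 0) ψ) (shift (fun i => β i.succ) φ) := by
  rw [sepProd, sepProd, map_mul]
  congr 1
  · rw [← Polynomial.aeval_algHom_apply, shift_X, Polynomial.taylor_apply, Polynomial.aeval_comp]
    simp [algebraMap_eq]
  · induction φ using MvPolynomial.induction_on with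
    | C a => simp
    | add p q hp hq => simp only [map_add, hp, hq]
    | mul_X p i hp => simp [hp]

theorem sepProd_det {k : ℕ} (M : Matrix (Fin k) (Fin k) R[X])
    (N : Matrix (Fin k) (Fin k) (MvPolynomial (Fin n) R)) :
    sepProd M.det N.det = (Matrix.of fun l j => ∑ i, sepProd (M l i) (N j i)).det := by
  rw [sepProd, AlgHom.map_det, ← Matrix.det_transpose N, AlgHom.map_det, ← Matrix.det_mul]
  rfl

theorem coeff_cons_shift_sepProd_ne_zero [IsDomain R] {β : Fin (n + 1) → R} {ψ : R[X]}
    {φ : MvPolynomial (Fin n) R} (hψ : ψ ≠ 0) {J : Fin n →₀ ℕ}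
    (hJ : coeff J (shift (fun i => β i.succ) φ) ≠ 0) :
    coeff (Finsupp.cons (ψ.rootMultiplicity (β 0)) J) (shift β (sepProd ψ φ)) ≠ 0 := by
  rw [shift_sepProd, coeff_cons_sepProd, Polynomial.rootMultiplicity_eq_natTrailingDegree,
    ← Polynomial.taylor_apply]
  exact mul_ne_zero (Polynomial.trailingCoeff_nonzero_iff_nonzero.2 (by simpa using hψ)) hJ

end SepProd

section Slice

variable {n : ℕ}

theorem exists_dual_linearIndependent {F V ι : Type*} [Field F] [AddCommGroup V] [Module F V]
    [Fintype ι] (v : ι → V) :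
    ∃ k ≤ Fintype.card ι, ∃ (a : Fin k → ι) (g : ι → Fin k → F), LinearIndependent F (v ∘ a) ∧
      (∀ b, ∑ j, g b j • v (a j) = v b) ∧ ∀ i j, g (a i) j = if j = i then 1 else 0 := by
  obtain ⟨κ, a, ha, hspan, hind⟩ := exists_linearIndependent' F v
  have := Finite.of_injective a ha
  have := Fintype.ofFinite κ
  let e := (Fintype.equivFin κ).symm
  replace hind : LinearIndependent F (v ∘ a ∘ e) := hind.comp e e.injective
  have hmem (b : ι) : ∃ g : Fin (Fintype.card κ) → F, ∑ j, g j • v (a (e j)) = v b := by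
    have hb : v b ∈ Submodule.span F (Set.range ((v ∘ a) ∘ e)) := by
      rw [e.surjective.range_comp, hspan]
      exact Submodule.subset_span (Set.mem_range_self b)
    exact (Submodule.mem_span_range_iff_exists_fun F).1 hb
  choose g hg using hmem
  refine ⟨_, Fintype.card_le_of_injective a ha, a ∘ e, g, hind, hg, fun i j => ?_⟩
  have hzero : ∑ j, (g (a (e i)) j - if j = i then 1 else 0) • (v ∘ a ∘ e) j = 0 := by
    simp only [sub_smul, Finset.sum_sub_distrib, Function.comp_apply, hg]
    simp
  exact sub_eq_zero.1 (Fintype.linearIndependent_iff.1 hind _ hzero j)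

theorem eq_sum_sepProd {R : Type*} [CommRing R] {r k : ℕ} {P : MvPolynomial (Fin (n + 1)) R}
    (hr : degreeOf 0 P ≤ r) {g : Fin (r + 1) → Fin k → R} {φ : Fin k → MvPolynomial (Fin n) R}
    (hg : ∀ b : Fin (r + 1), ∑ j, g b j • φ j = (finSuccEquiv R n P).coeff b) :
    P = ∑ j, sepProd (∑ b : Fin (r + 1), Polynomial.monomial (b : ℕ) (g b j)) (φ j) := by
  ext m
  rw [← Finsupp.cons_tail m, coeff_sum, ← finSuccEquiv_coeff_coeff]
  simp only [coeff_cons_sepProd, Polynomial.finsetSum_coeff, Polynomial.coeff_monomial]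
  rcases lt_or_ge r (m 0) with hm | hm
  · rw [Polynomial.coeff_eq_zero_of_natDegree_lt (by rw [natDegree_finSuccEquiv]; omega),
      coeff_zero]
    refine (Finset.sum_eq_zero fun j _ => ?_).symm
    rw [Finset.sum_eq_zero fun b _ => if_neg (by omega), zero_mul]
  · rw [← hg ⟨m 0, Nat.lt_succ_of_le hm⟩, coeff_sum]
    refine Finset.sum_congr rfl fun j _ => ?_
    rw [coeff_smul, smul_eq_mul, Finset.sum_eq_single ⟨m 0, Nat.lt_succ_of_le hm⟩]
    · rw [if_pos rfl]
    · exact fun b _ hb => if_neg fun h => hb (Fin.ext h)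
    · simp

/-- A shortest decomposition separating `X₀` from the other variables: choosing the `φ j` to be a
basis of the span of the coefficients of `P` in `X₀` makes both families independent. -/
theorem exists_eq_sum_sepProd {r : ℕ} {F : Type*} [Field F] {P : MvPolynomial (Fin (n + 1)) F}
    (hr : degreeOf 0 P ≤ r) :
    ∃ k ≤ r + 1, ∃ (b : Fin k → ℕ) (ψ : Fin k → F[X]), LinearIndependent F ψ ∧
      LinearIndependent F (fun j => (finSuccEquiv F n P).coeff (b j)) ∧
      P = ∑ j, sepProd (ψ j) ((finSuccEquiv F n P).coeff (b j)) := by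
  obtain ⟨k, hk, a, g, hind, hg, hga⟩ :=
    exists_dual_linearIndependent (F := F) fun b : Fin (r + 1) => (finSuccEquiv F n P).coeff b
  refine ⟨k, by simpa using hk, fun j => a j, _, ?_, hind, eq_sum_sepProd hr hg⟩
  rw [Fintype.linearIndependent_iff]
  intro c hc i
  have hcoeff := congrArg (fun p => p.coeff (a i)) hc
  simpa [Polynomial.finsetSum_coeff, Polynomial.coeff_monomial, ← Fin.ext_iff, hga] using hcoeff

theorem l1Norm_coeff_finSuccEquiv_le {R : Type*} [NormedCommRing R]
    (P : MvPolynomial (Fin (n + 1)) R) (b : ℕ) :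
    l1Norm ((finSuccEquiv R n P).coeff b) ≤ l1Norm P := by
  classical
  rw [l1Norm]
  simp only [finSuccEquiv_coeff_coeff]
  rw [← Finset.sum_image (f := fun A => ‖coeff A P‖)
    (s := ((finSuccEquiv R n P).coeff b).support) (g := Finsupp.cons b)
    (Finsupp.cons_right_injective b).injOn]
  refine Finset.sum_le_sum_of_subset_of_nonneg ?_ fun _ _ _ => norm_nonneg _
  intro A hA
  obtain ⟨B, hB, rfl⟩ := Finset.mem_image.1 hA
  rw [mem_support_iff, finSuccEquiv_coeff_coeff] at hB
  exact mem_support_iff.2 hB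

theorem exists_coeff_eq_coeff_cons {R : Type*} [CommRing R] (W : MvPolynomial (Fin (n + 1)) R)
    (A : Fin n →₀ ℕ) : ∃ V : R[X], ∀ a, V.coeff a = coeff (Finsupp.cons a A) W := by
  refine ⟨∑ a ∈ (finSuccEquiv R n W).support,
    Polynomial.monomial a (coeff (Finsupp.cons a A) W), fun a => ?_⟩
  simp only [Polynomial.finsetSum_coeff, Polynomial.coeff_monomial, Finset.sum_ite_eq']
  split_ifs with h
  · rfl
  · rw [← finSuccEquiv_coeff_coeff, Polynomial.notMem_support_iff.1 h, coeff_zero]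

theorem exists_coeff_shift_ne_zero {σ : Type*} {P : MvPolynomial σ ℤ} (hP : P ≠ 0) (β : σ → ℚ) :
    ∃ I, coeff I (shift β P) ≠ 0 := by
  rw [← ne_zero_iff]
  exact (map_ne_zero_iff _ (shift_injective (Int.cast_injective (α := ℚ)) β)).2 hP

theorem shift_map_intCast {σ : Type*} (P : MvPolynomial σ ℤ) (β : σ → ℚ) :
    shift β (map (Int.castRingHom ℚ) P) = shift β P := by
  induction P using MvPolynomial.induction_on with
  | C a => simp
  | add p q hp hq => simp only [map_add, hp, hq]
  | mul_X p i hp => simp [hp]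

theorem hasse_map {σ R S : Type*} [CommRing R] [CommRing S] (f : R →+* S) (P : MvPolynomial σ R)
    (I : σ →₀ ℕ) : hasse I (map f P) = map f (hasse I P) := by
  have htaylor : taylorHom σ S (map f P) = map (map f) (taylorHom σ R P) := by
    induction P using MvPolynomial.induction_on with
    | C a => simp
    | add p q hp hq => simp only [map_add, hp, hq]
    | mul_X p i hp => simp [hp]
  rw [hasse_apply, htaylor, coeff_map, hasse_apply]

theorem finSuccEquiv_map_coeff {R S : Type*} [CommRing R] [CommRing S] (f : R →+* S)
    (P : MvPolynomial (Fin (n + 1)) R) (b : ℕ) :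
    (finSuccEquiv S n (map f P)).coeff b = map f ((finSuccEquiv R n P).coeff b) := by
  ext A
  rw [finSuccEquiv_coeff_coeff, coeff_map, coeff_map, finSuccEquiv_coeff_coeff]

/-- The generalized Wronskian `det (∂₀ˡ ∂^(I j) P)` of a polynomial in `n + 1` variables, for the
matrix of Hasse derivatives of order `l` in `X₀` and multi-order `I j` in the other variables. -/
noncomputable def wronskian {R : Type*} [CommRing R] {k : ℕ} (I : Fin k → Fin n →₀ ℕ)
    (P : MvPolynomial (Fin (n + 1)) R) : MvPolynomial (Fin (n + 1)) R :=
  (Matrix.of fun l j : Fin k => hasse (Finsupp.cons (l : ℕ) (I j)) P).det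

/-- The generalized Wronskian `det (∂^(I j) P_(b i))` of the coefficients `P_(b i)` of
`P = ∑ P_b X₀ ^ b`. -/
noncomputable def sliceWronskian {R : Type*} [CommRing R] {k : ℕ} (I : Fin k → Fin n →₀ ℕ)
    (b : Fin k → ℕ) (P : MvPolynomial (Fin (n + 1)) R) : MvPolynomial (Fin n) R :=
  (Matrix.of fun j i => hasse (I j) ((finSuccEquiv R n P).coeff (b i))).det

section Map

variable {R S : Type*} [CommRing R] [CommRing S] (f : R →+* S) {k : ℕ} (I : Fin k → Fin n →₀ ℕ)
  (P : MvPolynomial (Fin (n + 1)) R)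

theorem wronskian_map : wronskian I (map f P) = map f (wronskian I P) := by
  rw [wronskian, wronskian, RingHom.map_det]
  congr 1
  ext1 l j
  exact hasse_map f P _

theorem sliceWronskian_map (b : Fin k → ℕ) :
    sliceWronskian I b (map f P) = map f (sliceWronskian I b P) := by
  rw [sliceWronskian, sliceWronskian, RingHom.map_det]
  congr 1
  ext1 j i
  simp [finSuccEquiv_map_coeff, hasse_map]

end Map

theorem exists_wronskian_eq_sepProd {F : Type*} [Field F] [CharZero F] {r : ℕ}
    {P : MvPolynomial (Fin (n + 1)) F} (hP : P ≠ 0) (hr : degreeOf 0 P ≤ r) :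
    ∃ k, 0 < k ∧ k ≤ r + 1 ∧ ∃ (b : Fin k → ℕ) (I : Fin k → Fin n →₀ ℕ) (V : F[X]),
      (∀ j, ∑ i, I j i ≤ j) ∧ V ≠ 0 ∧ sliceWronskian I b P ≠ 0 ∧
      wronskian I P = sepProd V (sliceWronskian I b P) := by
  obtain ⟨k, hk, b, ψ, hψ, hφ, hsum⟩ := exists_eq_sum_sepProd hr
  obtain ⟨I, hI, hdet⟩ := exists_det_hasse_ne_zero hφ
  refine ⟨k, Nat.pos_of_ne_zero ?_, hk, b, I, _, hI, det_hasseDeriv_ne_zero hψ, hdet, ?_⟩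
  · rintro rfl
    exact hP (by rw [hsum, Finset.univ_eq_empty, Finset.sum_empty])
  · rw [wronskian, sliceWronskian, sepProd_det]
    congr 1
    ext1 l j
    simp only [Matrix.of_apply]
    conv_lhs => rw [hsum, map_sum]
    simp only [hasse_cons_sepProd]

theorem exists_map_wronskian_eq_sepProd {r : ℕ} {P : MvPolynomial (Fin (n + 1)) ℤ} (hP : P ≠ 0)
    (hr : degreeOf 0 P ≤ r) :
    ∃ k, 0 < k ∧ k ≤ r + 1 ∧ ∃ (b : Fin k → ℕ) (I : Fin k → Fin n →₀ ℕ) (V : ℚ[X]),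
      (∀ j, ∑ i, I j i ≤ j) ∧ V ≠ 0 ∧ sliceWronskian I b P ≠ 0 ∧
      map (Int.castRingHom ℚ) (wronskian I P) =
        sepProd V (map (Int.castRingHom ℚ) (sliceWronskian I b P)) := by
  have hinj := map_injective (σ := Fin (n + 1)) _ (Int.castRingHom ℚ).injective_int
  have hdeg : degreeOf 0 (map (Int.castRingHom ℚ) P) ≤ r := by
    rw [degreeOf_le_iff]
    exact fun m hm => (monomial_le_degreeOf 0 (support_map_subset _ _ hm)).trans hr
  obtain ⟨k, hk0, hk, b, I, V, hI, hV, hU, hW⟩ :=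
    exists_wronskian_eq_sepProd ((map_ne_zero_iff _ hinj).2 hP) hdeg
  rw [sliceWronskian_map] at hU hW
  refine ⟨k, hk0, hk, b, I, V, hI, hV, fun h => hU (by rw [h, map_zero]), ?_⟩
  rw [← hW, wronskian_map]

end Slice

section RootMultiplicity

theorem isPrimitive_C_den_mul_X_sub_C_num (x : ℚ) :
    (Polynomial.C (x.den : ℤ) * Polynomial.X + Polynomial.C (-x.num)).IsPrimitive := by
  rw [Polynomial.isPrimitive_iff_isUnit_of_C_dvd]
  intro d hd
  rw [Polynomial.C_dvd_iff_dvd_coeff] at hd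
  have hden := hd 1
  have hnum := hd 0
  simp only [Polynomial.coeff_add, Polynomial.coeff_C_mul, Polynomial.coeff_X_zero,
    Polynomial.coeff_X_one, Polynomial.coeff_C, mul_zero, mul_one, zero_add, add_zero, if_true,
    one_ne_zero, if_false, dvd_neg] at hden hnum
  exact x.isCoprime_num_den.isUnit_of_dvd' hnum hden

theorem isPrimitive_pow {R : Type*} [CommRing R] [IsDomain R] [NormalizedGCDMonoid R] {p : R[X]}
    (hp : p.IsPrimitive) (v : ℕ) : (p ^ v).IsPrimitive := by
  induction v with
  | zero => simp
  | succ v ih => rw [pow_succ]; exact ih.mul hp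

/-- By Gauss's lemma `den x * X - num x` divides `V` over `ℤ` as often as `X - x` does over `ℚ`. -/
theorem den_pow_rootMultiplicity_dvd_leadingCoeff (V : ℤ[X]) (x : ℚ) :
    (x.den : ℤ) ^ (V.map (Int.castRingHom ℚ)).rootMultiplicity x ∣ V.leadingCoeff := by
  set v := (V.map (Int.castRingHom ℚ)).rootMultiplicity x
  set L : ℤ[X] := Polynomial.C (x.den : ℤ) * Polynomial.X + Polynomial.C (-x.num)
  have hden : (x.den : ℚ) ≠ 0 := by exact_mod_cast x.den_nz
  have hLmap : L.map (Int.castRingHom ℚ) =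
      Polynomial.C (x.den : ℚ) * (Polynomial.X - Polynomial.C x) := by
    have hnum : (x.num : ℚ) = x.den * x := by rw [mul_comm, Rat.mul_den_eq_num]
    simp only [L, Polynomial.map_add, Polynomial.map_mul, Polynomial.map_C, Polynomial.map_X,
      mul_sub, ← Polynomial.C_mul, ← hnum]
    simp [sub_eq_add_neg]
  obtain ⟨R, hR⟩ : L ^ v ∣ V := by
    rw [Polynomial.IsPrimitive.Int.dvd_iff_map_cast_dvd_map_cast _ _
      (isPrimitive_pow (isPrimitive_C_den_mul_X_sub_C_num x) v), Polynomial.map_pow, hLmap,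
      mul_pow, ← Polynomial.C_pow]
    exact (Polynomial.C_mul_dvd (pow_ne_zero _ hden)).2 (Polynomial.pow_rootMultiplicity_dvd _ _)
  rw [hR, Polynomial.leadingCoeff_mul, Polynomial.leadingCoeff_pow,
    Polynomial.leadingCoeff_linear (by exact_mod_cast x.den_nz)]
  exact dvd_mul_right _ _

theorem den_pow_rootMultiplicity_le_l1Norm {n : ℕ} {W : MvPolynomial (Fin (n + 1)) ℤ} {V : ℚ[X]}
    {U : MvPolynomial (Fin n) ℤ} (hV : V ≠ 0) (hU : U ≠ 0)
    (hW : map (Int.castRingHom ℚ) W = sepProd V (map (Int.castRingHom ℚ) U)) (x : ℚ) :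
    (x.den : ℝ) ^ V.rootMultiplicity x ≤ l1Norm W := by
  obtain ⟨A, hA⟩ := ne_zero_iff.1 hU
  obtain ⟨V', hV'⟩ := exists_coeff_eq_coeff_cons W A
  have hmap : V'.map (Int.castRingHom ℚ) = Polynomial.C ((coeff A U : ℤ) : ℚ) * V := by
    ext a
    have hcoeff := congrArg (coeff (Finsupp.cons a A)) hW
    rw [coeff_map, coeff_cons_sepProd, coeff_map] at hcoeff
    rw [Polynomial.coeff_map, hV', hcoeff, Polynomial.coeff_C_mul, mul_comm]
    rfl
  have hne : Polynomial.C ((coeff A U : ℤ) : ℚ) * V ≠ 0 :=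
    mul_ne_zero (Polynomial.C_ne_zero.2 (by exact_mod_cast hA)) hV
  have hV'0 : V' ≠ 0 := by
    rintro rfl
    exact hne (by rw [← hmap, Polynomial.map_zero])
  have hdvd := den_pow_rootMultiplicity_dvd_leadingCoeff V' x
  rw [hmap, Polynomial.rootMultiplicity_mul hne, Polynomial.rootMultiplicity_C, zero_add] at hdvd
  have hle := Int.le_of_dvd (abs_pos.2 (Polynomial.leadingCoeff_ne_zero.2 hV'0))
    ((dvd_abs _ _).2 hdvd)
  calc (x.den : ℝ) ^ V.rootMultiplicity x ≤ ‖V'.leadingCoeff‖ := by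
        rw [Int.norm_eq_abs]
        exact_mod_cast hle
    _ = ‖coeff (Finsupp.cons V'.natDegree A) W‖ := by rw [← hV', Polynomial.leadingCoeff]
    _ ≤ l1Norm W := norm_coeff_le_l1Norm _ _

end RootMultiplicity

section Weight

variable {σ R ι : Type*} [Fintype σ]

/-- All monomials of `Q` have weight at least `t`, where `X i` has weight `w i`. For `Q = shift β P`
this says that the index of `P` at `β` with respect to the weights `w` is at least `t`. -/
def WeightGE [CommSemiring R] (w : σ → ℝ) (t : ℝ) (Q : MvPolynomial σ R) : Prop :=
  ∀ A ∈ Q.support, t ≤ ∑ i, A i * w i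

variable {w : σ → ℝ} {s t : ℝ}

section CommSemiring

variable [CommSemiring R] {P Q : MvPolynomial σ R}

theorem WeightGE.mono (h : WeightGE w t Q) (hst : s ≤ t) : WeightGE w s Q :=
  fun A hA => hst.trans (h A hA)

theorem WeightGE.mul (hP : WeightGE w s P) (hQ : WeightGE w t Q) :
    WeightGE w (s + t) (P * Q) := by
  classical
  intro A hA
  obtain ⟨B, hB, D, hD, rfl⟩ := Finset.mem_add.1 (support_mul P Q hA)
  simp only [Finsupp.add_apply, Nat.cast_add, add_mul, Finset.sum_add_distrib]
  exact add_le_add (hP B hB) (hQ D hD)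

theorem WeightGE.sum {S : Finset ι} {f : ι → MvPolynomial σ R}
    (h : ∀ i ∈ S, WeightGE w t (f i)) : WeightGE w t (∑ i ∈ S, f i) := by
  classical
  intro A hA
  obtain ⟨i, hi, hAi⟩ := Finset.mem_biUnion.1 (support_sum hA)
  exact h i hi A hAi

theorem WeightGE.prod {S : Finset ι} {t : ι → ℝ} {f : ι → MvPolynomial σ R}
    (h : ∀ i ∈ S, WeightGE w (t i) (f i)) : WeightGE w (∑ i ∈ S, t i) (∏ i ∈ S, f i) := by
  classical
  induction S using Finset.induction_on with
  | empty =>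
    intro A hA
    rw [Finset.prod_empty, ← C_1, C_apply] at hA
    simp [Finset.mem_singleton.1 (support_monomial_subset hA)]
  | insert a S ha ih =>
    rw [Finset.sum_insert ha, Finset.prod_insert ha]
    exact (h a (Finset.mem_insert_self _ _)).mul
      (ih fun i hi => h i (Finset.mem_insert_of_mem hi))

theorem WeightGE.hasse (h : WeightGE w t Q) (I : σ →₀ ℕ) :
    WeightGE w (t - ∑ i, I i * w i) (hasse I Q) := by
  intro B hB
  have hadd := h _ (add_mem_support_of_mem_support_hasse hB)
  simp only [Finsupp.add_apply, Nat.cast_add, add_mul, Finset.sum_add_distrib] at hadd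
  linarith

end CommSemiring

theorem WeightGE.det [CommRing R] [Fintype ι] [DecidableEq ι] {t : ι → ℝ}
    {M : Matrix ι ι (MvPolynomial σ R)} (h : ∀ i j, WeightGE w (t i) (M i j)) :
    WeightGE w (∑ i, t i) M.det := by
  rw [Matrix.det_apply]
  refine WeightGE.sum fun τ _ => ?_
  have hprod : WeightGE w (∑ i, t i) (∏ i, M (τ i) i) := by
    rw [← Equiv.sum_comp τ t]
    exact WeightGE.prod fun i _ => h (τ i) i
  rcases Int.units_eq_one_or (Equiv.Perm.sign τ) with hτ | hτ
  · simpa [hτ] using hprod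
  · intro A hA
    exact hprod A (by simpa [hτ] using hA)

end Weight

section RothLemma

theorem degreeOf_det_le {σ R ι : Type*} [CommRing R] [Fintype ι] [DecidableEq ι] {d : ℕ}
    {M : Matrix ι ι (MvPolynomial σ R)} {i : σ} (h : ∀ a b, degreeOf i (M a b) ≤ d) :
    degreeOf i M.det ≤ Fintype.card ι * d := by
  rw [Matrix.det_apply]
  refine (degreeOf_sum_le _ _ _).trans (Finset.sup_le fun τ _ => ?_)
  have hprod : degreeOf i (∏ j, M (τ j) j) ≤ Fintype.card ι * d := by
    refine (degreeOf_prod_le _ _ _).trans ((Finset.sum_le_sum fun j _ => h (τ j) j).trans ?_)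
    simp
  rcases Int.units_eq_one_or (Equiv.Perm.sign τ) with hτ | hτ
  · simpa [hτ] using hprod
  · rwa [hτ, Units.neg_smul, one_smul, degreeOf_neg]

theorem l1Norm_det_hasse_le {σ ι : Type*} [Fintype σ] [Fintype ι] [DecidableEq ι] {N : ℕ} {B : ℝ}
    (hι : Fintype.card ι ≤ N + 1) (hNB : (N : ℝ) ≤ B) (I : ι → ι → σ →₀ ℕ)
    (P : ι → ι → MvPolynomial σ ℤ) (hdeg : ∀ i j, ∀ A ∈ (P i j).support, ∑ s, A s ≤ N)
    (hP : ∀ i j, l1Norm (P i j) ≤ exp B) :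
    l1Norm (Matrix.of fun i j => hasse (I i j) (P i j)).det ≤ exp (3 * Fintype.card ι * B) := by
  set k := Fintype.card ι
  have htwo : (2 : ℝ) ^ N ≤ exp B :=
    calc (2 : ℝ) ^ N ≤ exp 1 ^ N := by
          gcongr
          linarith [add_one_le_exp (1 : ℝ)]
      _ = exp N := by rw [← exp_nat_mul, mul_one]
      _ ≤ exp B := exp_le_exp.2 hNB
  have hentry (i j : ι) : l1Norm (hasse (I i j) (P i j)) ≤ exp B * exp B := by
    refine (l1Norm_hasse_le _ (hdeg i j)).trans ?_
    gcongr
    · exact l1Norm_nonneg _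
    · exact hP i j
  have hk : (k : ℝ) ≤ exp B :=
    le_trans (by exact_mod_cast hι.trans Nat.lt_two_pow_self) htwo
  calc l1Norm (Matrix.of fun i j => hasse (I i j) (P i j)).det
      ≤ k.factorial * (exp B * exp B) ^ k := l1Norm_det_le _ hentry
    _ ≤ (k : ℝ) ^ k * (exp B * exp B) ^ k := by
        gcongr
        exact_mod_cast Nat.factorial_le_pow k
    _ ≤ exp B ^ k * (exp B * exp B) ^ k := by gcongr
    _ = exp (3 * k * B) := by
        rw [← mul_pow, ← exp_add, ← exp_add, ← exp_nat_mul]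
        congr 1
        ring

theorem mul_sq_div_eight_le_sum_max {k r : ℕ} {t : ℝ} (hk : 0 < k) (hkr : k ≤ r + 1) (hr : 0 < r)
    (ht0 : 0 ≤ t) (ht1 : t ≤ 1) : k * t ^ 2 / 8 ≤ ∑ l : Fin k, max 0 (t - l / r) := by
  have hr' : (0 : ℝ) < r := by exact_mod_cast hr
  have hk' : (1 : ℝ) ≤ k := by exact_mod_cast hk
  have hkr' : (k : ℝ) ≤ 2 * r := by exact_mod_cast (by omega : k ≤ 2 * r)
  rw [Fin.sum_univ_eq_sum_range fun l : ℕ => max 0 (t - (l : ℝ) / r)]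
  set c := ⌈k * t / 4⌉₊
  have hck : c ≤ k := Nat.ceil_le.2 (by nlinarith)
  have hhalf : ∑ l ∈ Finset.range c, t / 2 ≤ ∑ l ∈ Finset.range k, max 0 (t - (l : ℝ) / r) := by
    refine (Finset.sum_le_sum fun l hl => ?_).trans
      (Finset.sum_le_sum_of_subset_of_nonneg (Finset.range_mono hck)
        fun _ _ _ => le_max_left _ _)
    have hl' : (l : ℝ) < k * t / 4 := Nat.lt_ceil.1 (Finset.mem_range.1 hl)
    have hlr : (l : ℝ) / r ≤ t / 2 := by
      rw [div_le_iff₀ hr']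
      nlinarith
    exact le_max_of_le_right (by linarith)
  rw [Finset.sum_const, Finset.card_range, nsmul_eq_mul] at hhalf
  nlinarith [Nat.le_ceil (k * t / 4)]

variable {n : ℕ}

/-- The hypotheses of Roth's lemma on the degrees `r` and the point `x`: the degrees increase
rapidly, and `ω * r j * log (den (x j))` dominates a bound `B` for the total degree and for the
logarithm of the length of the polynomial. -/
structure Admissible (ω B : ℝ) (r : Fin n → ℕ) (x : Fin n → ℚ) : Prop where
  pos : ∀ j, 0 < r j
  ratio_le : ∀ i j, i < j → (r i : ℝ) ≤ ω * r j
  sum_le : ∑ j, (r j : ℝ) ≤ B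
  le_log : ∀ j, B ≤ ω * (r j * log (x j).den)

section Admissible

variable {ω B c : ℝ} {r : Fin n → ℕ} {x : Fin n → ℚ}

theorem Admissible.log_den_pos (h : Admissible ω B r x) (hω : 0 < ω) (j : Fin n) :
    0 < log (x j).den := by
  have hr (i : Fin n) : (0 : ℝ) < r i := by exact_mod_cast h.pos i
  have hB : 0 < B := (Finset.sum_pos (fun i _ => hr i) ⟨j, Finset.mem_univ j⟩).trans_le h.sum_le
  exact (mul_pos_iff_of_pos_left (hr j)).1
    ((mul_pos_iff_of_pos_left hω).1 (hB.trans_le (h.le_log j)))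

theorem Admissible.mul_inv_le (h : Admissible ω B r x) (hω : 0 < ω) (hc : 0 ≤ c) {j : Fin n}
    {v : ℕ} (hv : ((x j).den : ℝ) ^ v ≤ exp (c * B)) : v * (r j : ℝ)⁻¹ ≤ c * ω := by
  have hr : (0 : ℝ) < r j := by exact_mod_cast h.pos j
  have hden : (0 : ℝ) < (x j).den := by exact_mod_cast (x j).den_pos
  have hlog : v * log (x j).den ≤ c * B := by
    simpa only [log_exp, log_pow] using log_le_log (pow_pos hden v) hv
  rw [← div_eq_mul_inv, div_le_iff₀ hr]
  refine le_of_mul_le_mul_right ?_ (h.log_den_pos hω j)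
  calc v * log (x j).den ≤ c * (ω * (r j * log (x j).den)) :=
        hlog.trans (mul_le_mul_of_nonneg_left (h.le_log j) hc)
    _ = c * ω * r j * log (x j).den := by ring

theorem Admissible.tail {ω' : ℝ} {r : Fin (n + 1) → ℕ} {x : Fin (n + 1) → ℚ} {k : ℕ}
    (h : Admissible ω B r x) (hk : 0 < k) (hω : 0 < ω) (hω' : 3 * ω ≤ ω') :
    Admissible ω' (3 * k * B) (fun j => k * r j.succ) fun j => x j.succ where
  pos j := Nat.mul_pos hk (h.pos _)
  ratio_le i j hij := by
    push_cast
    calc (k : ℝ) * r i.succ ≤ k * (ω * r j.succ) := by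
          gcongr
          exact h.ratio_le _ _ (Fin.succ_lt_succ_iff.2 hij)
      _ ≤ k * (ω' * r j.succ) := by
          gcongr
          linarith
      _ = ω' * (k * r j.succ) := by ring
  sum_le := by
    have hsum := h.sum_le
    rw [Fin.sum_univ_succ] at hsum
    have htail : 0 ≤ ∑ j : Fin n, (r j.succ : ℝ) := Finset.sum_nonneg fun _ _ => Nat.cast_nonneg _
    have : (0 : ℝ) ≤ r 0 := Nat.cast_nonneg _
    push_cast
    rw [← Finset.mul_sum, mul_comm (3 : ℝ), mul_assoc]
    gcongr
    linarith
  le_log j := by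
    have : (0 : ℝ) ≤ r j.succ * log (x j.succ).den :=
      mul_nonneg (Nat.cast_nonneg _) (h.log_den_pos hω _).le
    push_cast
    calc 3 * k * B ≤ 3 * k * (ω * (r j.succ * log (x j.succ).den)) := by
          gcongr
          exact h.le_log _
      _ = k * (3 * ω * (r j.succ * log (x j.succ).den)) := by ring
      _ ≤ k * (ω' * (r j.succ * log (x j.succ).den)) := by gcongr
      _ = ω' * (k * r j.succ * log (x j.succ).den) := by ring

end Admissible

section Wronskian

variable {k : ℕ} {I : Fin k → Fin n →₀ ℕ} {r : Fin (n + 1) → ℕ}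

theorem l1Norm_wronskian_le {B : ℝ} {P : MvPolynomial (Fin (n + 1)) ℤ} (hk : k ≤ r 0 + 1)
    (hdeg : ∀ i, degreeOf i P ≤ r i) (hr : ∑ j, (r j : ℝ) ≤ B) (hP : l1Norm P ≤ exp B) :
    l1Norm (wronskian I P) ≤ exp (3 * k * B) := by
  have hr0 : r 0 ≤ ∑ j, r j := Finset.single_le_sum (fun _ _ => Nat.zero_le _) (Finset.mem_univ 0)
  rw [wronskian]
  simpa only [Fintype.card_fin] using l1Norm_det_hasse_le (N := ∑ j, r j) (ι := Fin k)
    (by rw [Fintype.card_fin]; omega) (by exact_mod_cast hr)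
    (fun l j => Finsupp.cons (l : ℕ) (I j)) (fun _ _ => P)
    (fun _ _ _ hA => sum_le_of_degreeOf_le hdeg hA) fun _ _ => hP

theorem l1Norm_sliceWronskian_le {B : ℝ} {P : MvPolynomial (Fin (n + 1)) ℤ} (b : Fin k → ℕ)
    (hk : k ≤ r 0 + 1) (hdeg : ∀ i, degreeOf i P ≤ r i) (hr : ∑ j, (r j : ℝ) ≤ B)
    (hP : l1Norm P ≤ exp B) : l1Norm (sliceWronskian I b P) ≤ exp (3 * k * B) := by
  have hr0 : r 0 ≤ ∑ j, r j := Finset.single_le_sum (fun _ _ => Nat.zero_le _) (Finset.mem_univ 0)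
  have hdeg' (i : Fin k) {A : Fin n →₀ ℕ} (hA : A ∈ ((finSuccEquiv ℤ n P).coeff (b i)).support) :
      ∑ s, A s ≤ ∑ j, r j := by
    refine (sum_le_of_degreeOf_le (r := fun j => r j.succ)
      (fun j => (degreeOf_coeff_finSuccEquiv P j _).trans (hdeg _)) hA).trans ?_
    rw [Fin.sum_univ_succ]
    exact Nat.le_add_left _ _
  rw [sliceWronskian]
  simpa only [Fintype.card_fin] using l1Norm_det_hasse_le (ι := Fin k)
    (by rw [Fintype.card_fin]; omega) (by exact_mod_cast hr)
    (fun j _ => I j) (fun _ i => (finSuccEquiv ℤ n P).coeff (b i))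
    (fun _ i _ hA => hdeg' i hA) fun _ _ => (l1Norm_coeff_finSuccEquiv_le P _).trans hP

theorem degreeOf_sliceWronskian_le {R : Type*} [CommRing R] {P : MvPolynomial (Fin (n + 1)) R}
    (b : Fin k → ℕ) {j : Fin n} {d : ℕ} (hdeg : degreeOf j.succ P ≤ d) :
    degreeOf j (sliceWronskian I b P) ≤ k * d := by
  rw [sliceWronskian]
  simpa only [Fintype.card_fin] using degreeOf_det_le (ι := Fin k)
    (M := Matrix.of fun l i => hasse (I l) ((finSuccEquiv R n P).coeff (b i)))
    fun l i => (degreeOf_hasse_le (I l) _ _).trans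
    ((degreeOf_coeff_finSuccEquiv P j (b i)).trans hdeg)

variable {R S : Type*} [CommRing R] [CommRing S] [Algebra R S] {β : Fin (n + 1) → S} {ε ω : ℝ}
  {P : MvPolynomial (Fin (n + 1)) R}

theorem WeightGE.shift_hasse_cons (h : WeightGE (fun j => (r j : ℝ)⁻¹) ε (shift β P))
    (hr : ∀ j, 0 < r j) (hω : ∀ i : Fin n, (r 0 : ℝ) ≤ ω * r i.succ) (hω0 : 0 ≤ ω) (l : ℕ)
    {I : Fin n →₀ ℕ} (hI : ∑ i, I i ≤ r 0) :
    WeightGE (fun j => (r j : ℝ)⁻¹) (max 0 (ε - ω - (l : ℝ) / r 0))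
      (shift β (Roth.hasse (Finsupp.cons l I) P)) := by
  have hr' (j : Fin (n + 1)) : (0 : ℝ) < r j := by exact_mod_cast hr j
  have hsum : ∑ i : Fin n, (I i : ℝ) * (r i.succ : ℝ)⁻¹ ≤ ω :=
    calc ∑ i : Fin n, (I i : ℝ) * (r i.succ : ℝ)⁻¹ ≤ ∑ i : Fin n, (I i : ℝ) * (ω / r 0) := by
          gcongr with i
          rw [inv_eq_one_div, div_le_div_iff₀ (hr' _) (hr' 0)]
          linarith [hω i]
      _ = ((∑ i, I i : ℕ) : ℝ) * (ω / r 0) := by rw [Nat.cast_sum, Finset.sum_mul]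
      _ ≤ r 0 * (ω / r 0) := by gcongr
      _ = ω := mul_div_cancel₀ _ (hr' 0).ne'
  intro A hA
  refine max_le (Finset.sum_nonneg fun i _ => by positivity)
    (le_trans ?_ (h.hasse (Finsupp.cons l I) A ?_))
  · rw [Fin.sum_univ_succ, div_eq_mul_inv]
    simp only [Finsupp.cons_zero, Finsupp.cons_succ]
    linarith
  · rwa [hasse_shift]

theorem WeightGE.shift_wronskian (h : WeightGE (fun j => (r j : ℝ)⁻¹) ε (shift β P))
    (hr : ∀ j, 0 < r j) (hω : ∀ i : Fin n, (r 0 : ℝ) ≤ ω * r i.succ) (hω0 : 0 ≤ ω)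
    (hωε : ω ≤ ε) (hε : ε ≤ 1) (hk0 : 0 < k) (hk : k ≤ r 0 + 1) (hI : ∀ j, ∑ i, I j i ≤ j) :
    WeightGE (fun j => (r j : ℝ)⁻¹) (k * (ε - ω) ^ 2 / 8) (shift β (wronskian I P)) := by
  have hdet : shift β (wronskian I P) =
      (Matrix.of fun l j : Fin k => shift β (Roth.hasse (Finsupp.cons (l : ℕ) (I j)) P)).det :=
    AlgHom.map_det _ _
  rw [hdet]
  refine WeightGE.mono (WeightGE.det (t := fun l : Fin k => max 0 (ε - ω - (l : ℝ) / r 0))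
    fun l j => h.shift_hasse_cons hr hω hω0 l ?_)
    (mul_sq_div_eight_le_sum_max hk0 hk (hr 0) (by linarith) (by linarith))
  have := hI j
  omega

end Wronskian

theorem roth_lemma_step {ε ω : ℝ} (hε0 : 0 < ε) (hε1 : ε ≤ 1) (hω : 0 < ω)
    (hωε : ω ≤ ε ^ 2 / 384) {r : Fin (n + 1) → ℕ} {x : Fin (n + 1) → ℚ} {B : ℝ}
    (h : Admissible ω B r x) {P : MvPolynomial (Fin (n + 1)) ℤ} (hP0 : P ≠ 0)
    (hdeg : ∀ j, degreeOf j P ≤ r j) (hP : l1Norm P ≤ exp B)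
    (hind : WeightGE (fun j => (r j : ℝ)⁻¹) ε (shift x P)) :
    ∃ k, 0 < k ∧ ∃ U : MvPolynomial (Fin n) ℤ, U ≠ 0 ∧ (∀ j, degreeOf j U ≤ k * r j.succ) ∧
      l1Norm U ≤ exp (3 * k * B) ∧
      WeightGE (fun j => (↑(k * r j.succ) : ℝ)⁻¹) (ε ^ 2 / 128) (shift (fun j => x j.succ) U) := by
  obtain ⟨k, hk0, hkr, b, I, V, hI, hV, hU, hW⟩ := exists_map_wronskian_eq_sepProd hP0 (hdeg 0)
  refine ⟨k, hk0, sliceWronskian I b P, hU, fun j => degreeOf_sliceWronskian_le b (hdeg _),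
    l1Norm_sliceWronskian_le b hkr hdeg h.sum_le hP, fun J hJ => ?_⟩
  have hωε2 : ω ≤ ε / 2 := by nlinarith
  have hk : (0 : ℝ) < k := by exact_mod_cast hk0
  have hlow := hind.shift_wronskian h.pos (fun i => h.ratio_le _ _ (Fin.succ_pos i)) hω.le
    (by linarith) hε1 hk0 hkr hI (Finsupp.cons (V.rootMultiplicity (x 0)) J) (by
      rw [mem_support_iff, ← shift_map_intCast, hW]
      refine coeff_cons_shift_sepProd_ne_zero hV ?_
      rwa [shift_map_intCast, ← mem_support_iff])
  rw [Fin.sum_univ_succ] at hlow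
  simp only [Finsupp.cons_zero, Finsupp.cons_succ] at hlow
  have hmult : V.rootMultiplicity (x 0) * (r 0 : ℝ)⁻¹ ≤ 3 * k * ω :=
    h.mul_inv_le hω (by positivity) ((den_pow_rootMultiplicity_le_l1Norm hV hU hW (x 0)).trans
      (l1Norm_wronskian_le hkr hdeg h.sum_le hP))
  have hsum : ∑ j : Fin n, (J j : ℝ) * (↑(k * r j.succ) : ℝ)⁻¹ =
      (∑ j : Fin n, (J j : ℝ) * (r j.succ : ℝ)⁻¹) / k := by
    rw [Finset.sum_div]
    refine Finset.sum_congr rfl fun j _ => ?_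
    push_cast
    rw [mul_inv]
    ring
  have hsq : k * (ε / 2) ^ 2 / 8 ≤ k * (ε - ω) ^ 2 / 8 := by
    gcongr
    linarith
  rw [hsum, le_div_iff₀ hk]
  nlinarith [mul_pos hk (pow_pos hε0 2)]

/-- By induction on `n`: if the index of `P` were large, so would be the index of the Wronskian,
which is a product `V(X₀) U(X₁, …)`; Gauss's lemma bounds the index of `V`, induction that of
`U`. -/
theorem roth_lemma (n : ℕ) : ∀ ε : ℝ, 0 < ε → ∃ ω : ℝ, 0 < ω ∧
    ∀ (r : Fin n → ℕ) (x : Fin n → ℚ) (B : ℝ) (P : MvPolynomial (Fin n) ℤ), P ≠ 0 →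
      Admissible ω B r x → (∀ j, degreeOf j P ≤ r j) → l1Norm P ≤ exp B →
      ¬ WeightGE (fun j => (r j : ℝ)⁻¹) ε (shift x P) := by
  induction n with
  | zero =>
    refine fun ε hε => ⟨1, one_pos, fun r x B P hP _ _ _ hind => ?_⟩
    obtain ⟨I, hI⟩ := exists_coeff_shift_ne_zero hP x
    have hle := hind I (mem_support_iff.2 hI)
    rw [Finset.univ_eq_empty, Finset.sum_empty] at hle
    exact hle.not_gt hε
  | succ n ih =>
    intro ε' hε'
    obtain ⟨ε, hε, hε1, hεε'⟩ : ∃ ε : ℝ, 0 < ε ∧ ε ≤ 1 ∧ ε ≤ ε' :=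
      ⟨min 1 ε', lt_min one_pos hε', min_le_left _ _, min_le_right _ _⟩
    obtain ⟨ω', hω', IH⟩ := ih (ε ^ 2 / 128) (by positivity)
    have hω : 0 < min (ω' / 3) (ε ^ 2 / 384) := by positivity
    have hω3 : 3 * min (ω' / 3) (ε ^ 2 / 384) ≤ ω' := by
      linarith [min_le_left (ω' / 3) (ε ^ 2 / 384)]
    refine ⟨_, hω, fun r x B P hP0 h hdeg hP hind => ?_⟩
    obtain ⟨k, hk, U, hU0, hUdeg, hU, hUind⟩ :=
      roth_lemma_step hε hε1 hω (min_le_right _ _) h hP0 hdeg hP (hind.mono hεε')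
    exact IH _ _ _ U hU0 (h.tail hk hω hω3) hUdeg hU hUind

end RothLemma

section PowerReduction

variable {A : Type*} [CommRing A] {φ : A} {p : ℤ[X]}

theorem exists_aeval_eq_mul_aeval (hp : p.Monic) (hroot : Polynomial.aeval φ p = 0) {H B : ℤ}
    (hH : ∀ i, |p.coeff i| ≤ H) {g : ℤ[X]} (hg : g.degree < p.natDegree)
    (hB : ∀ i, |g.coeff i| ≤ B) :
    ∃ f : ℤ[X], f.degree < p.natDegree ∧ Polynomial.aeval φ f = φ * Polynomial.aeval φ g ∧
      ∀ i, |f.coeff i| ≤ B * (1 + H) := by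
  refine ⟨Polynomial.X * g - Polynomial.C (g.coeff (p.natDegree - 1)) * p, ?_, ?_, fun i => ?_⟩
  · rw [Polynomial.degree_lt_iff_coeff_zero] at hg ⊢
    rintro (_ | i) hi
    · have hp0 : p.natDegree = 0 := by simpa using hi
      have hg0 := hg 0 hp0.le
      simp [hp0, hg0]
    rw [Polynomial.coeff_sub, Polynomial.coeff_X_mul, Polynomial.coeff_C_mul]
    rcases hi.eq_or_lt with heq | hlt
    · rw [← heq, hp.coeff_natDegree, heq, Nat.add_sub_cancel, mul_one, sub_self]
    · rw [Polynomial.coeff_eq_zero_of_natDegree_lt hlt, hg i (Nat.lt_succ_iff.1 hlt), mul_zero,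
        sub_self]
  · rw [map_sub, map_mul, map_mul, hroot, Polynomial.aeval_X, mul_zero, sub_zero]
  · have hX : |(Polynomial.X * g).coeff i| ≤ B := by
      cases i with
      | zero => simpa using (abs_nonneg _).trans (hB 0)
      | succ i => simpa only [Polynomial.coeff_X_mul] using hB i
    rw [Polynomial.coeff_sub, Polynomial.coeff_C_mul]
    calc |(Polynomial.X * g).coeff i - g.coeff (p.natDegree - 1) * p.coeff i|
        ≤ |(Polynomial.X * g).coeff i| + |g.coeff (p.natDegree - 1)| * |p.coeff i| :=
          (abs_sub _ _).trans_eq (by rw [abs_mul])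
      _ ≤ B + B * H := by
          gcongr
          exacts [(abs_nonneg _).trans (hB 0), hB _, hH i]
      _ = B * (1 + H) := by ring

theorem exists_forall_abs_coeff_le (p : ℤ[X]) : ∃ H : ℤ, ∀ i, |p.coeff i| ≤ H := by
  refine ⟨∑ i ∈ p.support, |p.coeff i|, fun i => ?_⟩
  by_cases hi : i ∈ p.support
  · exact Finset.single_le_sum (f := fun i => |p.coeff i|) (fun _ _ => abs_nonneg _) hi
  · rw [Polynomial.notMem_support_iff.1 hi, abs_zero]
    exact Finset.sum_nonneg fun _ _ => abs_nonneg _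

theorem exists_pow_eq_sum_of_isIntegral [Nontrivial A] (h : IsIntegral ℤ φ) :
    ∃ d : ℕ, 0 < d ∧ ∃ C : ℤ, 1 ≤ C ∧ ∀ s : ℕ, ∃ g : Fin d → ℤ,
      φ ^ s = ∑ i, (g i : A) * φ ^ (i : ℕ) ∧ ∀ i, |g i| ≤ C ^ s := by
  obtain ⟨p, hp, hroot⟩ := h
  rw [← Polynomial.aeval_def] at hroot
  have hd : 0 < p.natDegree := by
    refine Nat.pos_of_ne_zero fun h0 => ?_
    rw [Polynomial.eq_one_of_monic_natDegree_zero hp h0, map_one] at hroot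
    exact one_ne_zero hroot
  obtain ⟨H, hH⟩ := exists_forall_abs_coeff_le p
  have hH0 : 0 ≤ H := (abs_nonneg _).trans (hH 0)
  refine ⟨p.natDegree, hd, 1 + H, by linarith, fun s => ?_⟩
  obtain ⟨g, hg, hgs, hgc⟩ : ∃ g : ℤ[X], g.degree < p.natDegree ∧
      Polynomial.aeval φ g = φ ^ s ∧ ∀ i, |g.coeff i| ≤ (1 + H) ^ s := by
    induction s with
    | zero =>
      refine ⟨1, ?_, by rw [map_one, pow_zero], fun i => ?_⟩
      · rw [Polynomial.degree_one]
        exact_mod_cast hd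
      · rw [Polynomial.coeff_one]
        split_ifs <;> simp
    | succ s ih =>
      obtain ⟨g, hg, hgs, hgc⟩ := ih
      simpa only [hgs, ← pow_succ, ← pow_succ'] using exists_aeval_eq_mul_aeval hp hroot hH hg hgc
  refine ⟨fun i => g.coeff i, ?_, fun i => hgc i⟩
  have hg' : g.natDegree < p.natDegree := by
    rcases eq_or_ne g 0 with rfl | hg0
    · rwa [Polynomial.natDegree_zero]
    · exact (Polynomial.natDegree_lt_iff_degree_lt hg0).2 hg
  rw [← hgs, Polynomial.aeval_eq_sum_range' hg',
    ← Fin.sum_univ_eq_sum_range (fun i => g.coeff i • φ ^ i)]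
  simp only [zsmul_eq_mul]

end PowerReduction

theorem exists_pow_mul_pow_eq_sum_of_isAlgebraic {θ : ℝ} (h : IsAlgebraic ℚ θ) :
    ∃ d : ℕ, 0 < d ∧ ∃ C : ℤ, 1 ≤ C ∧ ∃ a : ℤ, a ≠ 0 ∧ ∃ b : Fin d → ℝ, ∀ R, ∀ s ≤ R,
      ∃ g : Fin d → ℤ, a ^ R * θ ^ s = ∑ i, (g i : ℝ) * b i ∧ ∀ i, |g i| ≤ C ^ R := by
  obtain ⟨a, ha, hint⟩ := ((IsFractionRing.isAlgebraic_iff ℤ ℚ ℝ).2 h).exists_integral_multiple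
  obtain ⟨d, hd, C, hC, hpow⟩ := exists_pow_eq_sum_of_isIntegral hint
  have ha1 : 1 ≤ |a| := Int.one_le_abs ha
  refine ⟨d, hd, |a| * C, one_le_mul_of_one_le_of_one_le ha1 hC, a, ha,
    fun i => (a • θ) ^ (i : ℕ), fun R s hs => ?_⟩
  obtain ⟨g, hg, hgC⟩ := hpow s
  refine ⟨fun i => a ^ (R - s) * g i, ?_, fun i => ?_⟩
  · simp only [Int.cast_mul, mul_assoc]
    rw [← Finset.mul_sum, ← hg, zsmul_eq_mul, mul_pow, ← mul_assoc, Int.cast_pow, ← pow_add,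
      Nat.sub_add_cancel hs]
  · rw [abs_mul, abs_pow, mul_pow]
    gcongr
    · exact Nat.sub_le R s
    · exact (hgC i).trans (pow_le_pow_right₀ hC hs)

section LatticePoints

theorem sum_exp_mul_half_sub_le {r : ℕ} (hr : 0 < r) (l : ℝ) :
    ∑ i : Fin (r + 1), exp (l * (1 / 2 - i / r)) ≤ (r + 1) * exp (l ^ 2 / 8) := by
  have hr' : (0 : ℝ) < r := by exact_mod_cast hr
  have hrev (i : Fin (r + 1)) : l * (1 / 2 - (i.rev : ℕ) / r) = -(l * (1 / 2 - i / r)) := by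
    rw [Fin.val_rev, Nat.add_sub_add_right, Nat.cast_sub (Nat.lt_succ_iff.1 i.2)]
    field_simp
    ring
  have hsymm : ∑ i : Fin (r + 1), exp (l * (1 / 2 - i / r)) =
      ∑ i : Fin (r + 1), cosh (l * (1 / 2 - i / r)) := by
    have h := Equiv.sum_comp Fin.revPerm fun i : Fin (r + 1) => exp (l * (1 / 2 - i / r))
    simp only [Fin.revPerm_apply, hrev] at h
    simp only [cosh_eq, ← Finset.sum_div, Finset.sum_add_distrib]
    linarith
  have hcosh (i : Fin (r + 1)) : cosh (l * (1 / 2 - i / r)) ≤ exp (l ^ 2 / 8) := by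
    have hi0 : (0 : ℝ) ≤ i / r := by positivity
    have hi1 : (i : ℝ) / r ≤ 1 := (div_le_one hr').2 (by exact_mod_cast Nat.lt_succ_iff.1 i.2)
    refine (cosh_le_exp_half_sq _).trans (exp_le_exp.2 ?_)
    have hsq : (1 / 2 - (i : ℝ) / r) ^ 2 ≤ 1 / 4 := by nlinarith
    calc (l * (1 / 2 - i / r)) ^ 2 / 2 = l ^ 2 * (1 / 2 - (i : ℝ) / r) ^ 2 / 2 := by ring
      _ ≤ l ^ 2 * (1 / 4) / 2 := by gcongr
      _ = l ^ 2 / 8 := by ring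
  rw [hsymm]
  refine (Finset.sum_le_sum fun i _ => hcosh i).trans_eq ?_
  rw [Finset.sum_const, Finset.card_univ, Fintype.card_fin, nsmul_eq_mul, Nat.cast_succ]

variable {ι : Type*} [Fintype ι] [DecidableEq ι] {r : ι → ℕ}

theorem card_weight_lt_le (hr : ∀ j, 0 < r j) {t : ℝ} (ht : t ≤ 1 / 2) :
    (Fintype.card {I : ∀ j, Fin (r j + 1) //
        ∑ j, (I j : ℝ) * (r j : ℝ)⁻¹ < t * Fintype.card ι} : ℝ) ≤
      exp (-2 * (1 / 2 - t) ^ 2) ^ Fintype.card ι * Fintype.card (∀ j, Fin (r j + 1)) := by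
  classical
  -- The value of `l` minimising the Chernoff bound `exp (l ^ 2 / 8 - l * (1 / 2 - t))`.
  set l := 4 * (1 / 2 - t) with hl
  have hl0 : 0 ≤ l := by linarith
  have hmarkov (I : ∀ j, Fin (r j + 1)) :
      (if ∑ j, (I j : ℝ) * (r j : ℝ)⁻¹ < t * Fintype.card ι then 1 else 0 : ℝ) ≤
        ∏ j, exp (-l * (1 / 2 - t)) * exp (l * (1 / 2 - I j / r j)) := by
    simp only [← exp_add, ← exp_sum]
    split_ifs with h
    · have hsum : ∑ j, (-l * (1 / 2 - t) + l * (1 / 2 - I j / r j)) =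
          l * (t * Fintype.card ι - ∑ j, (I j : ℝ) * (r j : ℝ)⁻¹) := by
        rw [mul_comm t, ← nsmul_eq_mul, ← Finset.card_univ, ← Finset.sum_const,
          ← Finset.sum_sub_distrib, Finset.mul_sum]
        exact Finset.sum_congr rfl fun j _ => by ring
      rw [hsum]
      exact one_le_exp (mul_nonneg hl0 (sub_nonneg.2 h.le))
    · exact (exp_pos _).le
  rw [Fintype.card_subtype, Finset.card_filter, Nat.cast_sum, Fintype.card_pi, Nat.cast_prod]
  calc ∑ I : ∀ j, Fin (r j + 1),
        ((if ∑ j, (I j : ℝ) * (r j : ℝ)⁻¹ < t * Fintype.card ι then 1 else 0 : ℕ) : ℝ)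
      ≤ ∑ I : ∀ j, Fin (r j + 1),
          ∏ j, exp (-l * (1 / 2 - t)) * exp (l * (1 / 2 - I j / r j)) :=
        Finset.sum_le_sum fun I _ => (by exact_mod_cast hmarkov I)
    _ = ∏ j, exp (-l * (1 / 2 - t)) * ∑ i : Fin (r j + 1), exp (l * (1 / 2 - i / r j)) := by
        simp only [Finset.mul_sum]
        rw [Finset.prod_univ_sum, Fintype.piFinset_univ]
    _ ≤ ∏ j, exp (-l * (1 / 2 - t)) * ((r j + 1) * exp (l ^ 2 / 8)) := by
        gcongr with j
        exact sum_exp_mul_half_sub_le (hr j) l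
    _ = ∏ j, exp (-2 * (1 / 2 - t) ^ 2) * (Fintype.card (Fin (r j + 1)) : ℝ) := by
        refine Finset.prod_congr rfl fun j _ => ?_
        rw [Fintype.card_fin, Nat.cast_succ, mul_left_comm, ← exp_add, mul_comm, hl]
        ring_nf
    _ = exp (-2 * (1 / 2 - t) ^ 2) ^ Fintype.card ι *
          ∏ j, (Fintype.card (Fin (r j + 1)) : ℝ) := by
        rw [Finset.prod_mul_distrib, Finset.prod_const, Finset.card_univ]

theorem two_mul_card_weight_lt_mul_lt (hr : ∀ j, 0 < r j) {t N : ℝ} (ht : t ≤ 1 / 2) (hN : 0 ≤ N)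
    (h : exp (-2 * (1 / 2 - t) ^ 2) ^ Fintype.card ι * (2 * N) < 1) :
    2 * (Fintype.card {I : ∀ j, Fin (r j + 1) //
        ∑ j, (I j : ℝ) * (r j : ℝ)⁻¹ < t * Fintype.card ι} * N) <
      Fintype.card (∀ j, Fin (r j + 1)) := by
  have hbox : (0 : ℝ) < Fintype.card (∀ j, Fin (r j + 1)) := by exact_mod_cast Fintype.card_pos
  calc 2 * (Fintype.card {I : ∀ j, Fin (r j + 1) //
          ∑ j, (I j : ℝ) * (r j : ℝ)⁻¹ < t * Fintype.card ι} * N)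
      ≤ 2 * (exp (-2 * (1 / 2 - t) ^ 2) ^ Fintype.card ι *
          Fintype.card (∀ j, Fin (r j + 1)) * N) := by
        gcongr
        exact card_weight_lt_le hr ht
    _ = exp (-2 * (1 / 2 - t) ^ 2) ^ Fintype.card ι * (2 * N) *
          Fintype.card (∀ j, Fin (r j + 1)) := by ring
    _ < Fintype.card (∀ j, Fin (r j + 1)) := mul_lt_of_lt_one_left hbox h

theorem card_box_le (r : ι → ℕ) :
    (Fintype.card (∀ j, Fin (r j + 1)) : ℝ) ≤ 2 ^ ∑ j, r j := by
  rw [Fintype.card_pi, ← Finset.prod_pow_eq_pow_sum]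
  simp only [Fintype.card_fin]
  exact_mod_cast Finset.prod_le_prod' fun j _ => Nat.lt_two_pow_self (n := r j)

end LatticePoints

open scoped Matrix.Norms.Elementwise in
theorem exists_ne_zero_mulVec_eq_zero_abs_le {α β : Type*} [Fintype α] [Fintype β]
    (M : Matrix α β ℤ) {B : ℝ} (hB : 1 ≤ B) (hM : ∀ i j, |(M i j : ℝ)| ≤ B)
    (hcard : (2 * Fintype.card α : ℝ) < Fintype.card β) :
    ∃ v : β → ℤ, v ≠ 0 ∧ M.mulVec v = 0 ∧ ∀ j, |(v j : ℝ)| ≤ Fintype.card β * B := by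
  classical
  have hcard' : 2 * Fintype.card α < Fintype.card β := by exact_mod_cast hcard
  have hβ : (1 : ℝ) ≤ Fintype.card β := by exact_mod_cast Nat.one_le_of_lt hcard'
  rcases isEmpty_or_nonempty α with hα | hα
  · obtain ⟨j⟩ := Fintype.card_pos_iff.1 (Nat.zero_lt_of_lt hcard')
    refine ⟨1, fun h => one_ne_zero (congrFun h j), Subsingleton.elim _ _, fun j => ?_⟩
    simpa using one_le_mul_of_one_le_of_one_le hβ hB
  have hMB : max 1 ‖M‖ ≤ B := max_le hB ((Matrix.norm_le_iff (by linarith)).2 fun i j => by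
    simpa only [Int.norm_eq_abs] using hM i j)
  have hα' : (0 : ℝ) < Fintype.card α := by exact_mod_cast Fintype.card_pos
  obtain ⟨v, hv0, hMv, hv⟩ := Int.Matrix.exists_ne_zero_int_vec_norm_le M (by omega)
    Fintype.card_pos
  refine ⟨v, hv0, hMv, fun j => ?_⟩
  have hbase : 1 ≤ Fintype.card β * max 1 ‖M‖ :=
    one_le_mul_of_one_le_of_one_le hβ (le_max_left _ _)
  have hexp : (Fintype.card α : ℝ) / (Fintype.card β - Fintype.card α) ≤ 1 := by
    rw [div_le_one] <;> linarith
  calc |(v j : ℝ)| = ‖v j‖ := (Int.norm_eq_abs _).symm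
    _ ≤ ‖v‖ := norm_le_pi_norm v j
    _ ≤ (Fintype.card β * max 1 ‖M‖) ^ ((Fintype.card α : ℝ) / (Fintype.card β - Fintype.card α)) :=
        hv
    _ ≤ Fintype.card β * max 1 ‖M‖ :=
        (rpow_le_rpow_of_exponent_le hbase hexp).trans_eq (rpow_one _)
    _ ≤ Fintype.card β * B := by gcongr

section BoxPolynomial

variable {ι : Type*} [Fintype ι] {r : ι → ℕ}

theorem sum_sub_le_sum (A : ∀ j, Fin (r j + 1)) (I : ι → ℕ) :
    ∑ j, ((A j : ℕ) - I j) ≤ ∑ j, r j :=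
  Finset.sum_le_sum fun j _ => (Nat.sub_le _ _).trans (Nat.lt_succ_iff.1 (A j).2)

/-- The matrix taking the coefficients of a polynomial `P` with `deg_j P ≤ r j` to the coordinates
of its Taylor coefficients at `(θ, …, θ)`, where `g s` lists the coordinates of `θ ^ s` with respect
to some finite set of real numbers, up to a common factor. -/
def taylorMatrix {κ : Type*} (g : ℕ → κ → ℤ) (r : ι → ℕ) :
    Matrix ((∀ j, Fin (r j + 1)) × κ) (∀ j, Fin (r j + 1)) ℤ :=
  Matrix.of fun I A =>
    (∏ j, (A j : ℕ).choose (I.1 j) : ℕ) * g (∑ j, ((A j : ℕ) - I.1 j)) I.2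

variable {κ : Type*} {g : ℕ → κ → ℤ}

theorem abs_taylorMatrix_le {B : ℝ} (hg : ∀ s ≤ ∑ j, r j, ∀ i, |(g s i : ℝ)| ≤ B)
    (I : (∀ j, Fin (r j + 1)) × κ) (A : ∀ j, Fin (r j + 1)) :
    |(taylorMatrix g r I A : ℝ)| ≤ 2 ^ (∑ j, r j) * B := by
  have hchoose : ∏ j, (A j : ℕ).choose (I.1 j) ≤ 2 ^ ∑ j, r j := by
    rw [← Finset.prod_pow_eq_pow_sum]
    exact Finset.prod_le_prod' fun j _ => (Nat.choose_le_two_pow _ _).trans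
      (Nat.pow_le_pow_right two_pos (Nat.lt_succ_iff.1 (A j).2))
  rw [taylorMatrix, Matrix.of_apply, Int.cast_mul, abs_mul, Int.cast_natCast, Nat.abs_cast]
  gcongr
  · exact_mod_cast hchoose
  · exact hg _ (sum_sub_le_sum A fun j => I.1 j) _

variable [DecidableEq ι]

/-- The polynomial of degree at most `r j` in `X j` with coefficient vector `v`. -/
noncomputable def boxPolynomial (v : (∀ j, Fin (r j + 1)) → ℤ) : MvPolynomial ι ℤ :=
  ∑ A, monomial (Finsupp.equivFunOnFinite.symm fun j => (A j : ℕ)) (v A)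

theorem boxPolynomial_ne_zero {v : (∀ j, Fin (r j + 1)) → ℤ} (hv : v ≠ 0) :
    boxPolynomial v ≠ 0 := by
  obtain ⟨A, hA⟩ := Function.ne_iff.1 hv
  refine ne_zero_iff.2 ⟨Finsupp.equivFunOnFinite.symm fun j => (A j : ℕ), ?_⟩
  rw [boxPolynomial, coeff_sum, Finset.sum_eq_single A, coeff_monomial, if_pos rfl]
  · exact hA
  · intro B _ hB
    rw [coeff_monomial, if_neg]
    refine fun h => hB (funext fun j => Fin.ext ?_)
    simpa using DFunLike.congr_fun h j
  · simp

theorem degreeOf_boxPolynomial_le (v : (∀ j, Fin (r j + 1)) → ℤ) (j : ι) :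
    degreeOf j (boxPolynomial v) ≤ r j := by
  refine (degreeOf_sum_le _ _ _).trans (Finset.sup_le fun A _ => degreeOf_le_iff.2 fun B hB => ?_)
  rw [Finset.mem_singleton.1 (support_monomial_subset hB)]
  exact Nat.lt_succ_iff.1 (A j).2

theorem l1Norm_boxPolynomial_le (v : (∀ j, Fin (r j + 1)) → ℤ) :
    l1Norm (boxPolynomial v) ≤ ∑ A, |(v A : ℝ)| :=
  (l1Norm_sum_le _ _).trans_eq (Finset.sum_congr rfl fun A _ => by
    rw [l1Norm_monomial, Int.norm_eq_abs])

theorem coeff_shift_boxPolynomial (v : (∀ j, Fin (r j + 1)) → ℤ) (θ : ℝ) (I : ι →₀ ℕ) :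
    coeff I (shift (fun _ => θ) (boxPolynomial v)) =
      ∑ A, (v A : ℝ) * ((∏ j, (A j : ℕ).choose (I j) : ℕ) * θ ^ ∑ j, ((A j : ℕ) - I j)) := by
  rw [coeff_shift, boxPolynomial, map_sum, map_sum]
  refine Finset.sum_congr rfl fun A _ => ?_
  rw [hasse_monomial, aeval_monomial, Finsupp.prod_fintype _ _ (by simp),
    ← Finset.prod_pow_eq_pow_sum]
  simp [mul_assoc]

theorem coeff_shift_boxPolynomial_eq_zero [Fintype κ] {θ c : ℝ} {b : κ → ℝ} (hc : c ≠ 0)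
    (hg : ∀ s ≤ ∑ j, r j, c * θ ^ s = ∑ i, (g s i : ℝ) * b i) {v : (∀ j, Fin (r j + 1)) → ℤ}
    {I : ∀ j, Fin (r j + 1)} (hv : ∀ i, (taylorMatrix g r).mulVec v (I, i) = 0) :
    coeff (Finsupp.equivFunOnFinite.symm fun j => (I j : ℕ))
      (shift (fun _ => θ) (boxPolynomial v)) = 0 := by
  refine (mul_eq_zero.1 ?_).resolve_left hc
  have hv' (i : κ) : ∑ A, (taylorMatrix g r (I, i) A : ℝ) * v A = 0 := by exact_mod_cast hv i
  rw [coeff_shift_boxPolynomial, Finset.mul_sum]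
  calc ∑ A, c * ((v A : ℝ) * ((∏ j, (A j : ℕ).choose (I j) : ℕ) * θ ^ ∑ j, ((A j : ℕ) - I j)))
      = ∑ A, ∑ i, (taylorMatrix g r (I, i) A : ℝ) * v A * b i := by
        refine Finset.sum_congr rfl fun A _ => ?_
        rw [mul_left_comm, mul_left_comm c, hg _ (sum_sub_le_sum A _), Finset.mul_sum,
          Finset.mul_sum]
        refine Finset.sum_congr rfl fun i _ => ?_
        rw [taylorMatrix, Matrix.of_apply, Int.cast_mul, Int.cast_natCast]
        ring
    _ = ∑ i, (∑ A, (taylorMatrix g r (I, i) A : ℝ) * v A) * b i := by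
        rw [Finset.sum_comm]
        simp only [Finset.sum_mul]
    _ = 0 := Finset.sum_eq_zero fun i _ => by rw [hv', zero_mul]

end BoxPolynomial

theorem le_degreeOf_of_mem_support_shift {σ R S : Type*} [Finite σ] [CommSemiring R]
    [CommSemiring S] [Algebra R S] {β : σ → S} {P : MvPolynomial σ R} {I : σ →₀ ℕ}
    (hI : I ∈ (shift β P).support) (j : σ) : I j ≤ degreeOf j P := by
  rw [mem_support_iff, coeff_shift] at hI
  obtain ⟨B, hB⟩ := support_nonempty.2 fun h : hasse I P = 0 => hI (by rw [h, map_zero])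
  exact le_add_self.trans (monomial_le_degreeOf j (add_mem_support_of_mem_support_hasse hB))

theorem exists_weightGE_shift_of_pow_eq_sum {ι κ : Type*} [Fintype ι] [Fintype κ]
    {r : ι → ℕ} (hr : ∀ j, 0 < r j) {θ c B t : ℝ} (hc : c ≠ 0) (hB : 1 ≤ B)
    {b : κ → ℝ} {g : ℕ → κ → ℤ} (hg : ∀ s ≤ ∑ j, r j, c * θ ^ s = ∑ i, (g s i : ℝ) * b i)
    (hgB : ∀ s ≤ ∑ j, r j, ∀ i, |(g s i : ℝ)| ≤ B) (ht : t ≤ 1 / 2)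
    (hcard : exp (-2 * (1 / 2 - t) ^ 2) ^ Fintype.card ι * (2 * Fintype.card κ) < 1) :
    ∃ P : MvPolynomial ι ℤ, P ≠ 0 ∧ (∀ j, degreeOf j P ≤ r j) ∧
      l1Norm P ≤ 8 ^ (∑ j, r j) * B ∧
      WeightGE (fun j => (r j : ℝ)⁻¹) (t * Fintype.card ι) (shift (fun _ => θ) P) := by
  classical
  let light := {I : ∀ j, Fin (r j + 1) // ∑ j, (I j : ℝ) * (r j : ℝ)⁻¹ < t * Fintype.card ι}
  obtain ⟨v, hv0, hMv, hv⟩ := exists_ne_zero_mulVec_eq_zero_abs_le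
    ((taylorMatrix g r).submatrix (fun I : light × κ => (I.1.1, I.2)) id)
    (one_le_mul_of_one_le_of_one_le (one_le_pow₀ one_le_two) hB)
    (fun I A => abs_taylorMatrix_le hgB _ A) (by
      rw [Fintype.card_prod, Nat.cast_mul]
      exact two_mul_card_weight_lt_mul_lt hr ht (Nat.cast_nonneg _) hcard)
  refine ⟨boxPolynomial v, boxPolynomial_ne_zero hv0, degreeOf_boxPolynomial_le v, ?_, ?_⟩
  · calc l1Norm (boxPolynomial v) ≤ ∑ A, |(v A : ℝ)| := l1Norm_boxPolynomial_le v
      _ ≤ Fintype.card (∀ j, Fin (r j + 1)) *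
            (Fintype.card (∀ j, Fin (r j + 1)) * (2 ^ (∑ j, r j) * B)) := by
          refine (Finset.sum_le_sum fun A _ => hv A).trans_eq ?_
          rw [Finset.sum_const, Finset.card_univ, nsmul_eq_mul]
      _ ≤ 2 ^ (∑ j, r j) * (2 ^ (∑ j, r j) * (2 ^ (∑ j, r j) * B)) := by
          gcongr <;> exact card_box_le r
      _ = 8 ^ (∑ j, r j) * B := by
          rw [← mul_assoc, ← mul_assoc, ← mul_pow, ← mul_pow]
          norm_num
  · intro I hI
    by_contra! hlt
    let J : ∀ j, Fin (r j + 1) := fun j => ⟨I j, Nat.lt_succ_iff.2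
      ((le_degreeOf_of_mem_support_shift hI j).trans (degreeOf_boxPolynomial_le v j))⟩
    refine mem_support_iff.1 hI ?_
    convert coeff_shift_boxPolynomial_eq_zero hc hg (I := J)
      fun i => congrFun hMv (⟨J, hlt⟩, i) using 2
    exact (Finsupp.equivFunOnFinite_symm_coe I).symm

theorem exists_weightGE_shift_of_isAlgebraic {θ t : ℝ} (h : IsAlgebraic ℚ θ) (ht : t < 1 / 2) :
    ∃ m : ℕ, 0 < m ∧ ∃ C : ℝ, 1 ≤ C ∧ ∀ r : Fin m → ℕ, (∀ j, 0 < r j) →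
      ∃ P : MvPolynomial (Fin m) ℤ, P ≠ 0 ∧ (∀ j, degreeOf j P ≤ r j) ∧
        l1Norm P ≤ C ^ (∑ j, r j) ∧
        WeightGE (fun j => (r j : ℝ)⁻¹) (t * m) (shift (fun _ => θ) P) := by
  obtain ⟨d, hd, C, hC, a, ha, b, hpow⟩ := exists_pow_mul_pow_eq_sum_of_isAlgebraic h
  have hd1 : (1 : ℝ) ≤ d := by exact_mod_cast hd
  have hC1 : (1 : ℝ) ≤ C := by exact_mod_cast hC
  obtain ⟨m, hm⟩ := exists_pow_lt_of_lt_one (show (0 : ℝ) < 1 / (2 * d) by positivity)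
    (exp_lt_one_iff.2 (show -2 * (1 / 2 - t) ^ 2 < 0 by nlinarith [pow_pos (sub_pos.2 ht) 2]))
  rw [lt_div_iff₀ (by positivity)] at hm
  have hm0 : m ≠ 0 := by
    rintro rfl
    rw [pow_zero] at hm
    linarith
  refine ⟨m, Nat.pos_of_ne_zero hm0, 8 * C, by linarith, fun r hr => ?_⟩
  choose! g hg hgC using hpow (∑ j, r j)
  simpa only [mul_pow, Fintype.card_fin] using exists_weightGE_shift_of_pow_eq_sum hr
    (pow_ne_zero _ (Int.cast_ne_zero.2 ha)) (one_le_pow₀ hC1) hg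
    (fun s hs i => by exact_mod_cast hgC s hs i) ht.le (by simpa only [Fintype.card_fin] using hm)

section Bounds

variable {σ : Type*} [Fintype σ]

theorem l1Norm_shift_le {N : ℕ} {θ : σ → ℝ} {b : ℝ} (hb : 0 ≤ b) (hθ : ∀ i, |θ i| ≤ b)
    {P : MvPolynomial σ ℤ} (h : ∀ A ∈ P.support, ∑ i, A i ≤ N) :
    l1Norm (shift θ P) ≤ (1 + b) ^ N * l1Norm P := by
  have hX (i : σ) : l1Norm (X i + C (θ i)) ≤ 1 + b := by
    refine (l1Norm_add_le _ _).trans ?_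
    rw [X, C_apply, l1Norm_monomial, l1Norm_monomial, norm_one, Real.norm_eq_abs]
    gcongr
    exact hθ i
  have hpow (i : σ) (k : ℕ) : l1Norm ((X i + C (θ i)) ^ k) ≤ (1 + b) ^ k := by
    simpa only [Finset.prod_const, Finset.card_range] using
      (l1Norm_prod_le (Finset.range k) fun _ => X i + C (θ i)).trans
        (Finset.prod_le_prod (fun _ _ => l1Norm_nonneg _) fun _ _ => hX i)
  conv_lhs => rw [P.as_sum, map_sum]
  rw [l1Norm.eq_def P, Finset.mul_sum]
  refine (l1Norm_sum_le _ _).trans (Finset.sum_le_sum fun A hA => ?_)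
  rw [shift, aeval_monomial, Finsupp.prod_fintype _ _ (by simp), mul_comm,
    MvPolynomial.algebraMap_apply, C_apply (a := algebraMap ℤ ℝ _)]
  refine (l1Norm_mul_le _ _).trans ?_
  rw [l1Norm_monomial, algebraMap_int_eq, eq_intCast,
    Int.norm_cast_real]
  gcongr
  calc l1Norm (∏ i, (X i + C (θ i)) ^ A i) ≤ ∏ i, (1 + b) ^ A i :=
        (l1Norm_prod_le _ _).trans
          (Finset.prod_le_prod (fun _ _ => l1Norm_nonneg _) fun i _ => hpow i _)
    _ = (1 + b) ^ ∑ i, A i := Finset.prod_pow_eq_pow_sum _ _ _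
    _ ≤ (1 + b) ^ N := pow_le_pow_right₀ (by linarith) (h A hA)

theorem exists_int_eq_aeval_mul_prod {r : σ → ℕ} (x : σ → ℚ) {G : MvPolynomial σ ℤ}
    (h : ∀ j, degreeOf j G ≤ r j) : ∃ z : ℤ, aeval x G * ∏ j, ((x j).den : ℚ) ^ r j = z := by
  refine ⟨∑ A ∈ G.support, coeff A G * ∏ j, (x j).num ^ A j * (x j).den ^ (r j - A j), ?_⟩
  conv_lhs => rw [G.as_sum, map_sum]
  rw [Finset.sum_mul, Int.cast_sum]
  refine Finset.sum_congr rfl fun A hA => ?_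
  rw [aeval_monomial, Finsupp.prod_fintype _ _ (by simp), mul_assoc, ← Finset.prod_mul_distrib]
  push_cast
  congr 1
  refine Finset.prod_congr rfl fun j _ => ?_
  have hle : A j ≤ r j := (monomial_le_degreeOf j hA).trans (h j)
  rw [← Rat.mul_den_eq_num, mul_pow, mul_assoc, ← pow_add, Nat.add_sub_cancel' hle]

theorem inv_prod_den_pow_le_abs_aeval {r : σ → ℕ} {x : σ → ℚ} {G : MvPolynomial σ ℤ}
    (h : ∀ j, degreeOf j G ≤ r j) (hG : aeval x G ≠ 0) :
    (∏ j, ((x j).den : ℚ) ^ r j)⁻¹ ≤ |aeval x G| := by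
  obtain ⟨z, hz⟩ := exists_int_eq_aeval_mul_prod x h
  have hpos : (0 : ℚ) < ∏ j, ((x j).den : ℚ) ^ r j :=
    Finset.prod_pos fun j _ => pow_pos (by exact_mod_cast (x j).den_pos) _
  have hz0 : z ≠ 0 := by
    rintro rfl
    exact mul_ne_zero hG hpos.ne' (by rw [hz, Int.cast_zero])
  rw [inv_le_iff_one_le_mul₀ hpos, ← abs_of_pos hpos, ← abs_mul, hz]
  exact_mod_cast Int.one_le_abs hz0

theorem WeightGE.abs_aeval_le {w : σ → ℝ} {c t : ℝ} {G : MvPolynomial σ ℝ} (h : WeightGE w t G)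
    (hc : 0 ≤ c) {γ : σ → ℝ} (hγ : ∀ i, |γ i| ≤ exp (-(c * w i))) :
    |aeval γ G| ≤ l1Norm G * exp (-(c * t)) := by
  conv_lhs => rw [G.as_sum, map_sum]
  rw [l1Norm, Finset.sum_mul]
  refine (Finset.abs_sum_le_sum_abs _ _).trans (Finset.sum_le_sum fun A hA => ?_)
  rw [aeval_monomial, Finsupp.prod_fintype _ _ (by simp), Algebra.algebraMap_self_apply, abs_mul,
    Finset.abs_prod, Real.norm_eq_abs]
  gcongr
  calc ∏ i, |γ i ^ A i| ≤ ∏ i, exp (-(c * w i)) ^ A i := by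
        simp only [abs_pow]
        gcongr with i
        exact hγ i
    _ = exp (-(c * ∑ i, A i * w i)) := by
        rw [Finset.mul_sum, ← Finset.sum_neg_distrib, exp_sum]
        refine Finset.prod_congr rfl fun i _ => ?_
        rw [← exp_nat_mul]
        ring_nf
    _ ≤ exp (-(c * t)) := by
        gcongr
        exact h A hA

/-- A nonzero Taylor coefficient of `P` at `x` is at least the reciprocal of its denominator, but
small if the point `x` is close to `(θ, …, θ)`, where `P` has large index. -/
theorem mul_sub_le_sum_mul_log_den {r : σ → ℕ} {w : σ → ℝ} {θ c t C : ℝ} (hc : 0 ≤ c)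
    (hC : 1 ≤ C) {x : σ → ℚ} (hx : ∀ j, |(x j : ℝ) - θ| ≤ exp (-(c * w j)))
    {P : MvPolynomial σ ℤ} (hdeg : ∀ j, degreeOf j P ≤ r j) (hP : l1Norm P ≤ C ^ ∑ j, r j)
    (hind : WeightGE w t (shift (fun _ => θ) P)) {I : σ →₀ ℕ} (hI : coeff I (shift x P) ≠ 0) :
    c * (t - ∑ j, I j * w j) ≤
      ∑ j, r j * log (x j).den + (∑ j, r j : ℕ) * log (2 * ((1 + |θ|) * C)) := by
  set R := ∑ j, r j
  set Q := shift (fun _ => θ) P with hQ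
  have hK : 0 < 2 * ((1 + |θ|) * C) := by positivity
  have hden (j : σ) : (0 : ℝ) < (x j).den := by exact_mod_cast (x j).den_pos
  have hPR : ∀ A ∈ P.support, ∑ j, A j ≤ R := fun A hA => sum_le_of_degreeOf_le hdeg hA
  have hQR : ∀ A ∈ Q.support, ∑ j, A j ≤ R := fun A hA =>
    Finset.sum_le_sum fun j _ => (le_degreeOf_of_mem_support_shift hA j).trans (hdeg j)
  rw [coeff_shift] at hI
  have hcoeff : ((aeval x (hasse I P) : ℚ) : ℝ) = aeval (fun j => (x j : ℝ) - θ) (hasse I Q) := by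
    have hsum : ((fun _ => θ) + fun j => (x j : ℝ) - θ) = fun j => (x j : ℝ) :=
      funext fun j => add_sub_cancel θ _
    rw [← coeff_shift (fun j => (x j : ℝ) - θ), hQ, shift_shift, hsum, coeff_shift]
    exact (aeval_algebraMap_apply ℝ x (hasse I P)).symm
  have hlower : exp (-∑ j, r j * log (x j).den) ≤ |((aeval x (hasse I P) : ℚ) : ℝ)| := by
    rw [exp_neg, exp_sum]
    simp only [exp_nat_mul, exp_log (hden _)]
    rw [← Rat.cast_abs]
    simpa using (Rat.cast_le (K := ℝ)).2 (inv_prod_den_pow_le_abs_aeval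
      (fun j => (degreeOf_hasse_le I P j).trans (hdeg j)) hI)
  have hlength : l1Norm (hasse I Q) ≤ exp (R * log (2 * ((1 + |θ|) * C))) := by
    rw [exp_nat_mul, exp_log hK, mul_pow, mul_pow]
    refine (l1Norm_hasse_le I hQR).trans ?_
    gcongr
    refine (l1Norm_shift_le (abs_nonneg θ) (fun _ => le_rfl) hPR).trans ?_
    gcongr
  have hexp : exp (-∑ j, r j * log (x j).den) ≤
      exp (R * log (2 * ((1 + |θ|) * C)) + -(c * (t - ∑ j, I j * w j))) := by
    rw [exp_add]
    refine (hlower.trans_eq (congrArg _ hcoeff)).trans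
      (((hind.hasse I).abs_aeval_le hc hx).trans ?_)
    gcongr
  linarith [exp_le_exp.1 hexp]

end Bounds

theorem exists_rapidly_decreasing {X : Type*} {p : X → Prop} {f : X → ℝ}
    (h : ∀ D : ℝ, ∃ x, D < f x ∧ p x) (L κ : ℝ) (n : ℕ) :
    ∃ x : Fin n → X, (∀ j, p (x j)) ∧ (∀ j, L ≤ f (x j)) ∧
      ∀ i j, i < j → κ * f (x j) ≤ f (x i) := by
  obtain ⟨y, hy, hlt⟩ := exists_seq_of_forall_finset_exists (fun x => p x ∧ L ≤ f x)
    (fun x y => κ * f x ≤ f y) fun s _ => by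
      obtain ⟨M, hM⟩ := (s.finite_toSet.image fun x => κ * f x).bddAbove
      obtain ⟨z, hz, hpz⟩ := h (max L M)
      exact ⟨z, ⟨hpz, (le_max_left _ _).trans hz.le⟩, fun x hx =>
        (hM (Set.mem_image_of_mem _ hx)).trans ((le_max_right _ _).trans hz.le)⟩
  exact ⟨fun j => y j.rev, fun j => (hy _).1, fun j => (hy _).2,
    fun i j hij => hlt _ _ (Fin.rev_lt_rev.2 hij)⟩

theorem exists_nat_mul_mem_Icc {ι : Type*} [Finite ι] {l : ι → ℝ} (hl : ∀ j, 0 < l j) {ε : ℝ}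
    (hε : 0 < ε) :
    ∃ (r : ι → ℕ) (Λ : ℝ), 0 < Λ ∧ ∀ j, r j * l j ∈ Set.Icc Λ ((1 + ε) * Λ) := by
  have := Fintype.ofFinite ι
  have hsum : 0 ≤ ∑ j, l j := Finset.sum_nonneg fun j _ => (hl j).le
  set Λ := (1 + ∑ j, l j) / ε with hΛ
  have hΛ0 : 0 < Λ := by positivity
  refine ⟨fun j => ⌈Λ / l j⌉₊, Λ, hΛ0, fun j => ⟨(div_le_iff₀ (hl j)).1 (Nat.le_ceil _), ?_⟩⟩
  have hlj : l j ≤ ε * Λ := by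
    rw [hΛ, mul_div_cancel₀ _ hε.ne']
    linarith [Finset.single_le_sum (f := l) (fun j _ => (hl j).le) (Finset.mem_univ j)]
  calc ⌈Λ / l j⌉₊ * l j ≤ (Λ / l j + 1) * l j :=
        mul_le_mul_of_nonneg_right (Nat.ceil_lt_add_one (div_pos hΛ0 (hl j)).le).le (hl j).le
    _ = Λ + l j := by rw [add_mul, div_mul_cancel₀ _ (hl j).ne', one_mul]
    _ ≤ (1 + ε) * Λ := by linarith

section Approximations

variable {n : ℕ} {r : Fin n → ℕ} {x : Fin n → ℚ} {ω Λ B C : ℝ}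

theorem mul_sum_le_mul (hω : 0 ≤ ω) (hΛ : 0 ≤ Λ) (hupper : ∀ j, r j * log (x j).den ≤ 2 * Λ)
    (hden : ∀ j, 2 * C * n ≤ ω * log (x j).den) : C * ∑ j, (r j : ℝ) ≤ ω * Λ := by
  rcases n.eq_zero_or_pos with rfl | hn
  · simpa using mul_nonneg hω hΛ
  have hterm (j : Fin n) : C * n * r j ≤ ω * Λ := by
    have hj := mul_le_mul_of_nonneg_left (hden j) (Nat.cast_nonneg (r j) : (0 : ℝ) ≤ r j)
    have hu := mul_le_mul_of_nonneg_left (hupper j) hω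
    linarith
  have hsum := Finset.sum_le_sum fun j (_ : j ∈ Finset.univ) => hterm j
  rw [← Finset.mul_sum, Finset.sum_const, Finset.card_univ, Fintype.card_fin, nsmul_eq_mul] at hsum
  exact le_of_mul_le_mul_left (by linarith) (Nat.cast_pos.2 hn : (0 : ℝ) < n)

theorem admissible_of_mul_log_den_mem_Icc (hω : 0 < ω) (hΛ : 0 < Λ)
    (hr : ∀ j, r j * log (x j).den ∈ Set.Icc Λ (2 * Λ))
    (hgap : ∀ i j, i < j → 2 / ω * log (x j).den ≤ log (x i).den)
    (hsum : ∑ j, (r j : ℝ) ≤ B) (hB : B ≤ ω * Λ) : Admissible ω B r x where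
  pos j := by
    refine Nat.pos_of_ne_zero fun h0 => ?_
    have hj := (hr j).1
    rw [h0, Nat.cast_zero, zero_mul] at hj
    exact hΛ.not_ge hj
  ratio_le i j hij := by
    have hli : 0 < log (x i).den :=
      pos_of_mul_pos_right (hΛ.trans_le (hr i).1) (Nat.cast_nonneg _)
    have hgap' : 2 * log (x j).den ≤ ω * log (x i).den := by
      have hij := hgap i j hij
      rw [div_mul_eq_mul_div, div_le_iff₀ hω] at hij
      linarith
    refine le_of_mul_le_mul_right ?_ hli
    calc r i * log (x i).den ≤ 2 * Λ := (hr i).2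
      _ ≤ r j * (2 * log (x j).den) := by linarith [(hr j).1]
      _ ≤ r j * (ω * log (x i).den) := by gcongr
      _ = ω * r j * log (x i).den := by ring
  sum_le := hsum
  le_log j := hB.trans (mul_le_mul_of_nonneg_left (hr j).1 hω.le)

theorem abs_sub_le_exp_of_lt_rpow_neg {μ θ : ℝ} (hμ : 0 ≤ μ) {x : ℚ} {r : ℕ} (hr : 0 < r)
    (hx : |(x : ℝ) - θ| < (x.den : ℝ) ^ (-μ)) (hΛ : Λ ≤ r * log x.den) :
    |(x : ℝ) - θ| ≤ exp (-(μ * Λ * (r : ℝ)⁻¹)) := by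
  have hr' : (0 : ℝ) < r := by exact_mod_cast hr
  refine hx.le.trans ?_
  rw [rpow_def_of_pos (by exact_mod_cast x.den_pos), mul_neg, mul_comm (log _), mul_assoc]
  gcongr
  rwa [← div_eq_mul_inv, div_le_iff₀ hr', mul_comm]

theorem exists_admissible_approximations {θ μ ε : ℝ} (hμ : 0 ≤ μ)
    (h : ∀ D : ℝ, ∃ x : ℚ, D < log x.den ∧ |(x : ℝ) - θ| < (x.den : ℝ) ^ (-μ)) (n : ℕ)
    (hω : 0 < ω) (hε : 0 < ε) (hε1 : ε ≤ 1) (hC : 1 ≤ C) :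
    ∃ (r : Fin n → ℕ) (x : Fin n → ℚ) (Λ : ℝ), 0 < Λ ∧
      (∀ j, |(x j : ℝ) - θ| ≤ exp (-(μ * Λ * (r j : ℝ)⁻¹))) ∧
      ∑ j, r j * log (x j).den ≤ n * ((1 + ε) * Λ) ∧ C * ∑ j, (r j : ℝ) ≤ ω * Λ ∧
      Admissible ω (C * ∑ j, (r j : ℝ)) r x := by
  obtain ⟨x, hx, hL, hgap⟩ := exists_rapidly_decreasing h (max 1 (2 * C * n / ω)) (2 / ω) n
  obtain ⟨r, Λ, hΛ, hr⟩ := exists_nat_mul_mem_Icc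
    (fun j => one_pos.trans_le ((le_max_left _ _).trans (hL j))) hε
  have hr2 (j : Fin n) : r j * log (x j).den ∈ Set.Icc Λ (2 * Λ) :=
    ⟨(hr j).1, (hr j).2.trans (by gcongr; linarith)⟩
  have hB : C * ∑ j, (r j : ℝ) ≤ ω * Λ := mul_sum_le_mul hω.le hΛ.le (fun j => (hr2 j).2)
    fun j => (div_le_iff₀' hω).1 ((le_max_right _ _).trans (hL j))
  have hadm := admissible_of_mul_log_den_mem_Icc hω hΛ hr2 hgap
    (le_mul_of_one_le_left (by positivity) hC) hB
  refine ⟨r, x, Λ, hΛ, fun j => abs_sub_le_exp_of_lt_rpow_neg hμ (hadm.pos j) (hx j) (hr j).1,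
    ?_, hB, hadm⟩
  refine (Finset.sum_le_sum fun j _ => (hr j).2).trans_eq ?_
  rw [Finset.sum_const, Finset.card_univ, Fintype.card_fin, nsmul_eq_mul]

end Approximations

theorem mul_half_sub_le_of_isAlgebraic {θ μ ε : ℝ} (hθ : IsAlgebraic ℚ θ) (hμ : 0 ≤ μ)
    (h : ∀ D : ℝ, ∃ x : ℚ, D < log x.den ∧ |(x : ℝ) - θ| < (x.den : ℝ) ^ (-μ))
    (hε : 0 < ε) (hε1 : ε ≤ 1) : μ * (1 / 2 - 2 * ε) ≤ 1 + 2 * ε := by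
  obtain ⟨m, hm, C, hC, haux⟩ :=
    exists_weightGE_shift_of_isAlgebraic hθ (show 1 / 2 - ε < 1 / 2 by linarith)
  obtain ⟨ω, hω, hroth⟩ := roth_lemma m ε hε
  set K := 2 * ((1 + |θ|) * C)
  have hCK : C ≤ K := by nlinarith [abs_nonneg θ]
  obtain ⟨B, hB⟩ : ∃ B, B = max (max 1 (log K)) (ω * log K / ε) := ⟨_, rfl⟩
  have hB1 : 1 ≤ B := hB ▸ (le_max_left _ _).trans (le_max_left _ _)
  have hCB : C ≤ exp B := hCK.trans ((log_le_iff_le_exp (by linarith)).1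
    (hB ▸ (le_max_right _ _).trans (le_max_left _ _)))
  have hKB : ω * log K ≤ B * ε := (div_le_iff₀ hε).1 (hB ▸ le_max_right _ _)
  obtain ⟨r, x, Λ, hΛ, hx, hrl, hrB, hadm⟩ :=
    exists_admissible_approximations hμ h m hω hε hε1 hB1
  obtain ⟨P, hP0, hdeg, hP, hind⟩ := haux r hadm.pos
  have hP' : l1Norm P ≤ exp (B * ∑ j, (r j : ℝ)) := by
    rw [mul_comm, ← Nat.cast_sum, exp_nat_mul]
    exact hP.trans (by gcongr)
  obtain ⟨I, hI, hIw⟩ : ∃ I ∈ (shift x P).support, ∑ j, I j * (r j : ℝ)⁻¹ < ε := by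
    simpa only [WeightGE, not_forall, not_le, exists_prop] using hroth r x _ P hP0 hadm hdeg hP'
  have hmain := mul_sub_le_sum_mul_log_den (by positivity) hC hx hdeg hP hind
    (mem_support_iff.1 hI)
  have hKΛ : (∑ j, r j : ℕ) * log K ≤ ε * Λ := by
    refine le_of_mul_le_mul_left ?_ hω
    calc ω * ((∑ j, r j : ℕ) * log K) = ω * log K * ∑ j, (r j : ℝ) := by push_cast; ring
      _ ≤ B * ε * ∑ j, (r j : ℝ) := by gcongr
      _ = ε * (B * ∑ j, (r j : ℝ)) := by ring
      _ ≤ ε * (ω * Λ) := by gcongr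
      _ = ω * (ε * Λ) := by ring
  have hm1 : (1 : ℝ) ≤ m := by exact_mod_cast hm
  have hindex : m * (1 / 2 - 2 * ε) ≤ (1 / 2 - ε) * m - ∑ j, I j * (r j : ℝ)⁻¹ := by
    linarith [mul_le_mul_of_nonneg_right hm1 hε.le]
  refine le_of_mul_le_mul_left ?_ (show 0 < Λ * m by positivity)
  calc Λ * m * (μ * (1 / 2 - 2 * ε)) = μ * Λ * (m * (1 / 2 - 2 * ε)) := by ring
    _ ≤ μ * Λ * ((1 / 2 - ε) * m - ∑ j, I j * (r j : ℝ)⁻¹) := by gcongr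
    _ ≤ m * ((1 + ε) * Λ) + ε * Λ := hmain.trans (add_le_add hrl hKΛ)
    _ ≤ Λ * m * (1 + 2 * ε) := by nlinarith [mul_nonneg hε.le hΛ.le]

theorem exists_lt_log_den_of_liouvilleWith {θ μ ν : ℝ} (h : LiouvilleWith μ θ)
    (hirr : Irrational θ) (hν : 0 < ν) (hνμ : ν < μ) (D : ℝ) :
    ∃ x : ℚ, D < log x.den ∧ |(x : ℝ) - θ| < (x.den : ℝ) ^ (-ν) := by
  obtain ⟨ε, hε, hε0⟩ :=
    ((eventually_nhdsWithin_of_eventually_nhds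
      (hirr.eventually_forall_le_dist_cast_rat_of_den_le ⌊exp D⌋₊)).and
        (self_mem_nhdsWithin (s := Set.Ioi (0 : ℝ)))).exists
  have hsmall : ∀ᶠ n : ℕ in atTop, (n : ℝ) ^ (-ν) < ε :=
    ((tendsto_rpow_neg_atTop hν).comp tendsto_natCast_atTop_atTop).eventually_lt_const hε0
  obtain ⟨n, ⟨p, -, hp⟩, hnε, hn⟩ :=
    ((h.frequently_lt_rpow_neg hνμ).and_eventually (hsmall.and (eventually_gt_atTop 0))).exists
  have hdist : |((p / n : ℚ) : ℝ) - θ| < (n : ℝ) ^ (-ν) := by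
    rw [abs_sub_comm]
    exact_mod_cast hp
  have hden : ((p / n : ℚ).den : ℝ) ≤ n := by
    have hdvd : ((p / n : ℚ).den : ℤ) ∣ n := by
      simpa only [Rat.divInt_eq_div, Int.cast_natCast] using Rat.den_dvd p n
    exact_mod_cast Nat.le_of_dvd hn (Int.natCast_dvd_natCast.1 hdvd)
  have hpos : (0 : ℝ) < (p / n : ℚ).den := by exact_mod_cast Rat.den_pos _
  refine ⟨p / n, ?_, hdist.trans_le (rpow_le_rpow_of_nonpos hpos hden (by linarith))⟩
  by_contra! hle
  have hfar := hε (p / n) (Nat.le_floor ((log_le_iff_le_exp hpos).1 hle))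
  rw [dist_comm, Real.dist_eq] at hfar
  exact hfar.not_gt (hdist.trans hnε)

/-- **Roth's theorem.** -/
theorem not_liouvilleWith_of_isAlgebraic {θ μ : ℝ} (h : IsAlgebraic ℚ θ) (hμ : 2 < μ) :
    ¬ LiouvilleWith μ θ := by
  intro hL
  obtain ⟨ν, hν, hνμ⟩ := exists_between hμ
  have hirr : Irrational θ := hL.irrational (one_lt_two.trans hμ)
  set ε := (ν - 2) / (8 * (ν + 1))
  have hmul : ε * (8 * (ν + 1)) = ν - 2 := div_mul_cancel₀ _ (by linarith)
  have hε0 : 0 < ε := div_pos (by linarith) (by linarith)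
  have hε1 : ε ≤ 1 := (div_le_one₀ (by linarith)).2 (by linarith)
  linarith [mul_half_sub_le_of_isAlgebraic h (by linarith)
    (exists_lt_log_den_of_liouvilleWith hL hirr (by linarith) hνμ) hε0 hε1]

theorem exists_forall_mul_rpow_le_abs_sub {θ μ : ℝ} (hirr : Irrational θ) (hμ : 0 ≤ μ)
    (h : ¬ LiouvilleWith μ θ) :
    ∃ c : ℝ, 0 < c ∧ ∀ (q : ℕ) (p : ℤ), 0 < q → c * (q : ℝ) ^ (1 - μ) ≤ |q * θ - p| := by
  obtain ⟨n, hn⟩ : ∃ n, ∀ q : ℕ, n ≤ q → ∀ p : ℤ, 1 / (q : ℝ) ^ μ ≤ |θ - p / q| := by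
    simp only [LiouvilleWith, not_exists, not_frequently, not_and, not_lt] at h
    obtain ⟨n, hn⟩ := eventually_atTop.1 (h 1)
    exact ⟨n, fun q hq p => hn q hq p (hirr.ne_rat (p / q) <| by simpa using ·)⟩
  obtain ⟨ε, hε, hε0⟩ :=
    ((eventually_nhdsWithin_of_eventually_nhds
      (hirr.eventually_forall_le_dist_cast_div_of_denom_le n)).and
        (self_mem_nhdsWithin (s := Set.Ioi (0 : ℝ)))).exists
  refine ⟨min ε 1, lt_min hε0 one_pos, fun q p hq => ?_⟩
  have hq0 : (0 : ℝ) < q := by exact_mod_cast hq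
  have hq1 : (1 : ℝ) ≤ q := by exact_mod_cast hq
  have hfrac : min ε 1 * (q : ℝ) ^ (-μ) ≤ |θ - p / q| := by
    rcases le_total q n with hqn | hnq
    · calc min ε 1 * (q : ℝ) ^ (-μ) ≤ ε * 1 := by
            gcongr
            · exact min_le_left _ _
            · exact rpow_le_one_of_one_le_of_nonpos hq1 (by linarith)
        _ ≤ |θ - p / q| := by simpa only [mul_one, Real.dist_eq] using hε q hqn p
    · calc min ε 1 * (q : ℝ) ^ (-μ) ≤ 1 * (q : ℝ) ^ (-μ) := by
            gcongr
            exact min_le_right _ _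
        _ = 1 / (q : ℝ) ^ μ := by rw [one_mul, rpow_neg hq0.le, one_div]
        _ ≤ |θ - p / q| := hn q hnq p
  calc min ε 1 * (q : ℝ) ^ (1 - μ) = q * (min ε 1 * (q : ℝ) ^ (-μ)) := by
        rw [sub_eq_add_neg, rpow_add hq0, rpow_one]
        ring
    _ ≤ q * |θ - p / q| := by gcongr
    _ = |q * θ - p| := by
        rw [← abs_of_pos hq0, ← abs_mul, abs_of_pos hq0, mul_sub, mul_div_cancel₀ _ hq0.ne']

theorem summable_of_dyadic_le {f : ℕ → ℝ} (hf : ∀ n, 0 ≤ f n) {K ρ : ℝ} (hρ0 : 0 ≤ ρ)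
    (hρ : ρ < 1) (h : ∀ k, ∑ n ∈ Finset.Ico (2 ^ k) (2 ^ (k + 1)), f n ≤ K * ρ ^ k) :
    Summable f := by
  have hrange (k : ℕ) :
      ∑ n ∈ Finset.range (2 ^ k), f n ≤ f 0 + ∑ j ∈ Finset.range k, K * ρ ^ j := by
    induction k with
    | zero => simp
    | succ k ih =>
      rw [Finset.sum_range_succ, ← Finset.sum_range_add_sum_Ico f
        (Nat.pow_le_pow_right two_pos k.le_succ)]
      linarith [h k]
  have hs : Summable fun j => K * ρ ^ j := (summable_geometric_of_lt_one hρ0 hρ).mul_left K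
  have hK (j : ℕ) : 0 ≤ K * ρ ^ j := (Finset.sum_nonneg fun n _ => hf n).trans (h j)
  refine summable_of_sum_range_le (c := f 0 + ∑' j, K * ρ ^ j) hf fun n => ?_
  calc ∑ i ∈ Finset.range n, f i ≤ ∑ i ∈ Finset.range (2 ^ n), f i :=
        Finset.sum_le_sum_of_subset_of_nonneg
          (Finset.range_mono Nat.lt_two_pow_self.le) fun i _ _ => hf i
    _ ≤ f 0 + ∑ j ∈ Finset.range n, K * ρ ^ j := hrange n
    _ ≤ f 0 + ∑' j, K * ρ ^ j := by
        gcongr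
        exact hs.sum_le_tsum _ fun j _ => hK j

theorem abs_cos_pi_mul_le (x : ℝ) : |cos (π * x)| ≤ exp (-(2 * (x - round x) ^ 2)) := by
  set y := x - round x with hy
  have hcos : |cos (π * x)| = |cos (π * y)| := by
    rw [hy, mul_sub, mul_comm π (round x : ℝ), cos_sub_int_mul_pi, abs_mul, abs_zpow, abs_neg,
      abs_one, one_zpow, one_mul]
  have hyπ : |π * y| ≤ π / 2 := by
    rw [abs_mul, abs_of_pos pi_pos]
    nlinarith [abs_sub_round x, pi_pos]
  rw [hcos, abs_of_nonneg (cos_nonneg_of_mem_Icc (abs_le.1 hyπ))]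
  calc cos (π * y) ≤ 1 - 2 / π ^ 2 * (π * y) ^ 2 :=
        cos_le_one_sub_mul_cos_sq (hyπ.trans (half_le_self pi_pos.le))
    _ = -(2 * y ^ 2) + 1 := by
        field_simp
        ring
    _ ≤ exp (-(2 * y ^ 2)) := add_one_le_exp _

theorem abs_cos_pi_mul_pow_le {x a : ℝ} {n : ℕ} (h : a ≤ n * (x - round x) ^ 2) :
    |cos (π * x)| ^ n ≤ exp (-a) := by
  calc |cos (π * x)| ^ n ≤ exp (-(2 * (x - round x) ^ 2)) ^ n := by
        gcongr
        exact abs_cos_pi_mul_le x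
    _ = exp (-(2 * (n * (x - round x) ^ 2))) := by
        rw [← exp_nat_mul]
        ring_nf
    _ ≤ exp (-a) := by
        gcongr
        linarith [show 0 ≤ n * (x - round x) ^ 2 by positivity]

theorem card_le_of_pairwise_le_abs_sub {ι : Type*} {S : Finset ι} {y : ι → ℝ} {s D : ℝ}
    (hs : 0 < s) (hD : 0 ≤ D) (hy : ∀ i ∈ S, |y i| ≤ D)
    (hsep : (S : Set ι).Pairwise fun i j => s ≤ |y i - y j|) : (S.card : ℝ) ≤ 2 * D / s + 2 := by
  have hDs : -(D / s) ≤ D / s := neg_le_self (by positivity)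
  have hmaps : Set.MapsTo (fun i => ⌊y i / s⌋) S (Finset.Icc ⌊-(D / s)⌋ ⌊D / s⌋) := fun i hi => by
    obtain ⟨hl, hu⟩ := abs_le.1 (hy i hi)
    rw [Finset.coe_Icc, Set.mem_Icc, ← neg_div]
    exact ⟨Int.floor_le_floor (by gcongr), Int.floor_le_floor (by gcongr)⟩
  have hinj : Set.InjOn (fun i => ⌊y i / s⌋) S := fun i hi j hj hij => by
    by_contra hne
    have hlt := Int.abs_sub_lt_one_of_floor_eq_floor hij
    rw [← sub_div, abs_div, abs_of_pos hs, div_lt_one hs] at hlt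
    exact hlt.not_ge (hsep hi hj hne)
  have hcard : (S.card : ℤ) ≤ ⌊D / s⌋ + 1 - ⌊-(D / s)⌋ := by
    have hle := Finset.card_le_card_of_injOn _ hmaps hinj
    have hfloor := Int.floor_le_floor hDs
    rw [Int.card_Icc] at hle
    omega
  have hcard' : (S.card : ℝ) ≤ ⌊D / s⌋ + 1 - ⌊-(D / s)⌋ := by exact_mod_cast hcard
  rw [mul_div_assoc]
  linarith [Int.floor_le (D / s), Int.lt_floor_add_one (-(D / s))]

theorem mul_exp_neg_rpow_le {a x : ℝ} (ha : 0 < a) (hx : 1 ≤ x) :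
    x * exp (-x ^ a) ≤ (⌈1 / a⌉₊.factorial : ℝ) := by
  have hx0 : 0 ≤ x := zero_le_one.trans hx
  have hpow : x ≤ (x ^ a) ^ ⌈1 / a⌉₊ := by
    rw [← rpow_natCast, ← rpow_mul hx0]
    refine self_le_rpow_of_one_le hx ?_
    rw [mul_comm, ← div_le_iff₀ ha]
    exact Nat.le_ceil _
  rw [exp_neg, mul_inv_le_iff₀ (exp_pos _), mul_comm, ← div_le_iff₀ (by positivity)]
  exact (div_le_div_of_nonneg_right hpow (by positivity)).trans
    (pow_div_factorial_le_exp _ (by positivity) _)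

section DyadicBlock

variable {θ c μ : ℝ} {N : ℕ}

theorem card_filter_abs_sub_round_le (hc : 0 < c) (hμ : 1 ≤ μ)
    (h : ∀ (q : ℕ) (p : ℤ), 0 < q → c * (q : ℝ) ^ (1 - μ) ≤ |q * θ - p|) (hN : 0 < N) (γ : ℝ)
    {D : ℝ} (hD : 0 ≤ D) :
    (((Finset.Ico N (2 * N)).filter fun n : ℕ =>
      |n * θ - γ - round (n * θ - γ)| ≤ D).card : ℝ) ≤ 2 * D / (c * (N : ℝ) ^ (1 - μ)) + 2 := by
  set y : ℕ → ℝ := fun n => n * θ - γ - round (n * θ - γ) with hy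
  have hsep : ∀ i ∈ Finset.Ico N (2 * N), ∀ j ∈ Finset.Ico N (2 * N), i < j →
      c * (N : ℝ) ^ (1 - μ) ≤ |y j - y i| := by
    intro i hi j hj hij
    rw [Finset.mem_Ico] at hi hj
    have hdiff : y j - y i = (j - i : ℕ) * θ -
        (round (j * θ - γ) - round (i * θ - γ) : ℤ) := by
      rw [hy, Nat.cast_sub hij.le]
      push_cast
      ring
    have hpos : (0 : ℝ) < (j - i : ℕ) := by exact_mod_cast Nat.sub_pos_of_lt hij
    have hle : ((j - i : ℕ) : ℝ) ≤ N := by exact_mod_cast (show j - i ≤ N by omega)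
    rw [hdiff]
    refine le_trans ?_ (h (j - i) _ (Nat.sub_pos_of_lt hij))
    exact mul_le_mul_of_nonneg_left (rpow_le_rpow_of_nonpos hpos hle (by linarith)) hc.le
  have : (0 : ℝ) < N := by exact_mod_cast hN
  refine card_le_of_pairwise_le_abs_sub (y := y) (by positivity) hD
    (fun n hn => (Finset.mem_filter.1 hn).2) fun i hi j hj hij => ?_
  have hi' := (Finset.mem_filter.1 hi).1
  have hj' := (Finset.mem_filter.1 hj).1
  rcases hij.lt_or_gt with hlt | hgt
  · exact (hsep i hi' j hj' hlt).trans_eq (abs_sub_comm _ _)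
  · exact hsep j hj' i hi' hgt

theorem sum_abs_cos_pow_le_card_add (γ : ℝ) {D : ℝ} (hD : 0 ≤ D) :
    ∑ n ∈ Finset.Ico N (2 * N), |cos (π * (n * θ - γ))| ^ n ≤
      ((Finset.Ico N (2 * N)).filter fun n : ℕ =>
        |n * θ - γ - round (n * θ - γ)| ≤ D).card + N * exp (-(N * D ^ 2)) := by
  have hterm : ∀ n ∈ Finset.Ico N (2 * N), |cos (π * (n * θ - γ))| ^ n ≤
      (if |n * θ - γ - round (n * θ - γ)| ≤ D then 1 else 0) + exp (-(N * D ^ 2)) := by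
    intro n hn
    split_ifs with hy
    · exact (pow_le_one₀ (abs_nonneg _) (abs_cos_le_one _)).trans
        (le_add_of_nonneg_right (exp_pos _).le)
    · have hNn : (N : ℝ) ≤ n := by exact_mod_cast (Finset.mem_Ico.1 hn).1
      have hsq : D ^ 2 ≤ (n * θ - γ - round (n * θ - γ)) ^ 2 :=
        sq_le_sq.2 ((abs_of_nonneg hD).trans_le (not_le.1 hy).le)
      rw [zero_add]
      exact abs_cos_pi_mul_pow_le (by gcongr)
  refine (Finset.sum_le_sum hterm).trans_eq ?_
  rw [Finset.sum_add_distrib, ← Finset.sum_filter, Finset.sum_const, Finset.sum_const,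
    Nat.card_Ico, nsmul_eq_mul, nsmul_eq_mul, mul_one, two_mul, Nat.add_sub_cancel]

theorem sum_abs_cos_pow_le (hc : 0 < c) (hμ : 3 / 2 ≤ μ)
    (h : ∀ (q : ℕ) (p : ℤ), 0 < q → c * (q : ℝ) ^ (1 - μ) ≤ |q * θ - p|) (hN : 0 < N) (γ : ℝ)
    {δ : ℝ} (hδ : 0 < δ) :
    ∑ n ∈ Finset.Ico N (2 * N), |cos (π * (n * θ - γ))| ^ n ≤
      (2 / c + 2 + (⌈1 / (2 * δ)⌉₊.factorial : ℝ)) * (N : ℝ) ^ (μ - 3 / 2 + δ) := by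
  have hN1 : (1 : ℝ) ≤ N := by exact_mod_cast hN
  have hN0 : (0 : ℝ) < N := by linarith
  set D := (N : ℝ) ^ (-(1 / 2) + δ) with hD
  have hD0 : 0 ≤ D := by positivity
  have hratio : 2 * D / (c * (N : ℝ) ^ (1 - μ)) = 2 / c * (N : ℝ) ^ (μ - 3 / 2 + δ) := by
    rw [hD, mul_div_mul_comm, ← rpow_sub hN0]
    congr 2
    ring
  have hsq : N * D ^ 2 = (N : ℝ) ^ (2 * δ) := by
    rw [hD, ← rpow_natCast, ← rpow_mul hN0.le, mul_comm (N : ℝ), ← rpow_add_one hN0.ne']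
    congr 1
    push_cast
    ring
  have hone : (1 : ℝ) ≤ (N : ℝ) ^ (μ - 3 / 2 + δ) := one_le_rpow hN1 (by linarith)
  have hcard := card_filter_abs_sub_round_le hc (by linarith) h hN γ hD0
  have hexp := mul_exp_neg_rpow_le (a := 2 * δ) (by positivity) hN1
  calc ∑ n ∈ Finset.Ico N (2 * N), |cos (π * (n * θ - γ))| ^ n
      ≤ 2 / c * (N : ℝ) ^ (μ - 3 / 2 + δ) + (2 + (⌈1 / (2 * δ)⌉₊.factorial : ℝ)) := by
        refine (sum_abs_cos_pow_le_card_add γ hD0).trans ?_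
        rw [hsq]
        linarith
    _ ≤ 2 / c * (N : ℝ) ^ (μ - 3 / 2 + δ) +
          (2 + (⌈1 / (2 * δ)⌉₊.factorial : ℝ)) * (N : ℝ) ^ (μ - 3 / 2 + δ) := by
        gcongr
        exact le_mul_of_one_le_right (by positivity) hone
    _ = _ := by ring

end DyadicBlock

theorem summable_abs_cos_pow_div_rpow {θ α μ : ℝ} (hirr : Irrational θ) (hμ : 3 / 2 ≤ μ)
    (hθ : ¬ LiouvilleWith μ θ) (hα : μ - 3 / 2 < α) (γ : ℝ) :
    Summable fun n : ℕ => |cos (π * (n * θ - γ))| ^ n / (n : ℝ) ^ α := by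
  obtain ⟨δ, hδ, rfl⟩ : ∃ δ : ℝ, 0 < δ ∧ α = μ - 3 / 2 + 2 * δ :=
    ⟨(α - (μ - 3 / 2)) / 2, by linarith, by ring⟩
  obtain ⟨c, hc, h⟩ := exists_forall_mul_rpow_le_abs_sub hirr (by linarith) hθ
  set K := 2 / c + 2 + (⌈1 / (2 * δ)⌉₊.factorial : ℝ)
  refine summable_of_dyadic_le (fun n => by positivity) (K := K) (ρ := 2 ^ (-δ)) (by positivity)
    (rpow_lt_one_of_one_lt_of_neg one_lt_two (neg_lt_zero.2 hδ)) fun k => ?_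
  have hpos : (0 : ℝ) < (2 ^ k : ℕ) := by positivity
  calc ∑ n ∈ Finset.Ico (2 ^ k : ℕ) (2 ^ (k + 1)),
        |cos (π * (n * θ - γ))| ^ n / (n : ℝ) ^ (μ - 3 / 2 + 2 * δ)
      ≤ ∑ n ∈ Finset.Ico (2 ^ k : ℕ) (2 ^ (k + 1)),
        |cos (π * (n * θ - γ))| ^ n / ((2 ^ k : ℕ) : ℝ) ^ (μ - 3 / 2 + 2 * δ) := by
        refine Finset.sum_le_sum fun n hn => ?_
        have hn' : ((2 ^ k : ℕ) : ℝ) ≤ n := by exact_mod_cast (Finset.mem_Ico.1 hn).1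
        gcongr
    _ ≤ K * ((2 ^ k : ℕ) : ℝ) ^ (μ - 3 / 2 + δ) /
        ((2 ^ k : ℕ) : ℝ) ^ (μ - 3 / 2 + 2 * δ) := by
        rw [← Finset.sum_div, pow_succ']
        gcongr
        exact sum_abs_cos_pow_le hc hμ h (by positivity) γ hδ
    _ = K * (2 ^ (-δ)) ^ k := by
        rw [mul_div_assoc, ← rpow_sub hpos, Nat.cast_pow, Nat.cast_ofNat, ← rpow_natCast,
          ← rpow_natCast, ← rpow_mul two_pos.le, ← rpow_mul two_pos.le]
        congr 2
        ring

end Roth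

theorem stmt12_general (θ α μ : ℝ) (hirr : Irrational θ) (hμ : 3 / 2 ≤ μ)
    (hθ : ¬ LiouvilleWith μ θ) (hα : μ - 3 / 2 < α) :
    Summable (fun n : ℕ =>
      |Real.sin (Real.pi * ((n : ℝ) + 1) * θ) ^ (n + 1) / ((n : ℝ) + 1) ^ α|) ∧
    Summable (fun n : ℕ =>
      |Real.cos (Real.pi * ((n : ℝ) + 1) * θ) ^ (n + 1) / ((n : ℝ) + 1) ^ α|) := by
  have hphase (γ : ℝ) : Summable fun n : ℕ =>
      |cos (π * (((n : ℝ) + 1) * θ - γ)) ^ (n + 1) / ((n : ℝ) + 1) ^ α| := by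
    refine ((summable_nat_add_iff 1).2
      (Roth.summable_abs_cos_pow_div_rpow hirr hμ hθ hα γ)).congr fun n => ?_
    have hden : (0 : ℝ) ≤ ((n : ℝ) + 1) ^ α := by positivity
    rw [abs_div, abs_pow, abs_of_nonneg hden, Nat.cast_add_one]
  constructor
  · refine (hphase (1 / 2)).congr fun n => ?_
    rw [mul_sub, ← mul_assoc, mul_one_div, cos_sub_pi_div_two]
  · refine (hphase 0).congr fun n => ?_
    rw [sub_zero, mul_assoc]

/-- If θ is an irrational algebraic number and α > 1/2, then both
∑ sinⁿ(π n θ)/n^α and ∑ cosⁿ(π n θ)/n^α converge absolutely. -/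
theorem stmt12 (θ α : ℝ) (hirr : Irrational θ) (halg : IsAlgebraic ℚ θ)
    (hα : 1 / 2 < α) :
    Summable (fun n : ℕ =>
      |Real.sin (Real.pi * ((n : ℝ) + 1) * θ) ^ (n + 1) / ((n : ℝ) + 1) ^ α|) ∧
    Summable (fun n : ℕ =>
      |Real.cos (Real.pi * ((n : ℝ) + 1) * θ) ^ (n + 1) / ((n : ℝ) + 1) ^ α|) := by
  obtain ⟨μ, hμ, hμα⟩ := exists_between (show 2 < α + 3 / 2 by linarith)
  exact stmt12_general θ α μ hirr (by linarith)
    (Roth.not_liouvilleWith_of_isAlgebraic halg hμ) (by linarith)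
end

section
/- There exists a set E of irrational real numbers, dense in ℝ, such that for every ξ ∈ E and every α ≤ 1, both series ∑_{n=1}^∞ sin^n(π n ξ)/n^α and ∑_{n=1}^∞ cos^n(π n ξ)/n^α diverge. -/
open Real Filter Finset

/-!
Baire category replaces an explicit construction of `ξ`. If `ξ = p / (4s)` with `p` odd, then
`|sin (π n ξ)|` and `|cos (π n ξ)|` are periodic in `n`, take the value `1` on a residue class, and
stay below some `ρ < 1` at odd `n`. Hence the terms with `n` even are nonnegative and contain a
divergent part of the harmonic series, those with `n` odd are dominated by `∑ ρ ^ n`, and the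
partial sums of `∑ sin (π n ξ) ^ n / n` and `∑ cos (π n ξ) ^ n / n` are unbounded above. Such `ξ`
are dense and the partial sums are continuous in `ξ`, so this unboundedness persists at generic `ξ`.
Abel summation carries this from the exponent `1` to every `α ≤ 1` at once, so the generic set
does not depend on `α`.
-/

lemma sum_Icc_mul_le_of_antitoneOn {R : Type*} [CommRing R] [PartialOrder R] [IsOrderedRing R]
    {a w : ℕ → R} {C : R} (hw : AntitoneOn w (Set.Ici 1)) (hw₀ : ∀ n, 0 ≤ w n)
    (ha : ∀ N, ∑ n ∈ Icc 1 N, a n ≤ C) (N : ℕ) :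
    ∑ n ∈ Icc 1 N, a n * w n ≤ C * w 1 := by
  -- With the slack weighted by `w (N + 1)` added, the left-hand side is nonincreasing in `N`.
  have key : ∑ n ∈ Icc 1 N, a n * w n + (C - ∑ n ∈ Icc 1 N, a n) * w (N + 1) ≤ C * w 1 := by
    induction N with
    | zero => simp
    | succ N ih =>
      have hstep : w (N + 2) ≤ w (N + 1) := hw (by simp) (by simp) (Nat.le_succ _)
      have hmul := mul_le_mul_of_nonneg_left hstep (sub_nonneg.2 (ha (N + 1)))
      calc ∑ n ∈ Icc 1 (N + 1), a n * w n + (C - ∑ n ∈ Icc 1 (N + 1), a n) * w (N + 2)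
        _ ≤ ∑ n ∈ Icc 1 (N + 1), a n * w n + (C - ∑ n ∈ Icc 1 (N + 1), a n) * w (N + 1) :=
          add_le_add_right hmul _
        _ = ∑ n ∈ Icc 1 N, a n * w n + (C - ∑ n ∈ Icc 1 N, a n) * w (N + 1) := by
          rw [sum_Icc_succ_top (by lia), sum_Icc_succ_top (by lia)]
          ring
        _ ≤ C * w 1 := ih
  exact (le_add_of_nonneg_right (mul_nonneg (sub_nonneg.2 (ha N)) (hw₀ _))).trans key

lemma bddAbove_sum_div_rpow_mono {a : ℕ → ℝ} {α β : ℝ} (hαβ : α ≤ β)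
    (h : BddAbove (Set.range fun N : ℕ => ∑ n ∈ Icc 1 N, a n / (n : ℝ) ^ α)) :
    BddAbove (Set.range fun N : ℕ => ∑ n ∈ Icc 1 N, a n / (n : ℝ) ^ β) := by
  obtain ⟨C, hC⟩ := h
  have hanti : AntitoneOn (fun n : ℕ => (n : ℝ) ^ (α - β)) (Set.Ici 1) := fun m hm n _ hmn =>
    rpow_le_rpow_of_nonpos (by exact_mod_cast hm) (by exact_mod_cast hmn) (by linarith)
  refine ⟨C * ((1 : ℕ) : ℝ) ^ (α - β), Set.forall_mem_range.2 fun N => ?_⟩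
  refine (sum_congr rfl fun n hn => ?_).trans_le
    (sum_Icc_mul_le_of_antitoneOn hanti (fun n => by positivity) (Set.forall_mem_range.1 hC) N)
  have hn₀ : (0 : ℝ) < n := by exact_mod_cast (mem_Icc.1 hn).1
  rw [rpow_sub hn₀]
  field_simp

lemma not_bddAbove_sum_of_le_add {u v w : ℕ → ℝ} (hu₀ : ∀ n, 0 ≤ u n) (hu : ¬ Summable u)
    (hw : Summable w) (huvw : ∀ n, u n ≤ v n + w n) :
    ¬ BddAbove (Set.range fun N : ℕ => ∑ n ∈ Icc 1 N, v n) := by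
  rintro ⟨C, hC⟩
  refine hu ((summable_nat_add_iff 1).1 (summable_of_sum_range_le (c := C + ∑' n, |w n|)
    (fun n => hu₀ _) fun N => ?_))
  have hreindex : ∑ n ∈ range N, u (n + 1) = ∑ n ∈ Icc 1 N, u n := by
    rw [range_eq_Ico, sum_Ico_add' u 0 N 1]
    rfl
  have hw_le : ∑ n ∈ Icc 1 N, w n ≤ ∑' n, |w n| :=
    (sum_le_sum fun n _ => le_abs_self (w n)).trans
      (hw.abs.sum_le_tsum _ fun n _ => abs_nonneg (w n))
  calc ∑ n ∈ range N, u (n + 1) = ∑ n ∈ Icc 1 N, u n := hreindex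
    _ ≤ ∑ n ∈ Icc 1 N, v n + ∑ n ∈ Icc 1 N, w n := by
      rw [← sum_add_distrib]
      exact sum_le_sum fun n _ => huvw n
    _ ≤ C + ∑' n, |w n| := add_le_add (hC ⟨N, rfl⟩) hw_le

lemma not_bddAbove_sum_pow_div {g : ℕ → ℝ} {ρ : ℝ} {S : Set ℕ} (hρ : ρ < 1)
    (hodd : ∀ n, Odd n → |g n| ≤ ρ) (hS : ∀ n ∈ S, |g n| = 1)
    (hdiv : ¬ Summable (S.indicator fun n : ℕ => (1 / n : ℝ))) :
    ¬ BddAbove (Set.range fun N : ℕ => ∑ n ∈ Icc 1 N, g n ^ n / (n : ℝ)) := by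
  have hρ₀ : 0 ≤ ρ := (abs_nonneg _).trans (hodd 1 odd_one)
  refine not_bddAbove_sum_of_le_add (Set.indicator_nonneg fun n _ => by positivity) hdiv
    (summable_geometric_of_lt_one hρ₀ hρ) fun n => ?_
  rcases n.even_or_odd with hn | hn
  · refine le_add_of_le_of_nonneg (Set.indicator_apply_le' (fun hnS => ?_) fun _ => ?_)
      (pow_nonneg hρ₀ n)
    · rw [← hn.pow_abs, hS n hnS, one_pow]
    · exact div_nonneg (hn.pow_nonneg _) n.cast_nonneg
  · have hnS : n ∉ S := fun hnS => ((hodd n hn).trans_lt hρ).ne (hS n hnS)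
    have habs : |g n ^ n / n| ≤ ρ ^ n := by
      rw [abs_div, abs_pow, Nat.abs_cast]
      exact (div_le_self (by positivity) (by exact_mod_cast hn.pos)).trans
        (pow_le_pow_left₀ (abs_nonneg _) (hodd n hn) n)
    rw [Set.indicator_of_notMem hnS]
    linarith [neg_le_of_abs_le habs]

lemma exists_lt_forall_lt_of_periodic {R : Type*} [LinearOrder R] [DenselyOrdered R] [NoMinOrder R]
    [NoMaxOrder R] {h : ℕ → R} {q : ℕ} {c : R} {S : Set ℕ} (hq : q ≠ 0)
    (hper : Function.Periodic h q) (hS : ∀ n ∈ S, h n < c) :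
    ∃ ρ < c, ∀ n ∈ S, h n < ρ := by
  classical
  have : Nonempty R := ⟨c⟩
  obtain ⟨ρ, hlt, hρ⟩ := Order.exists_between_finsets {x ∈ (range q).image h | x < c} {c}
    fun x hx y hy => (mem_singleton.1 hy).symm ▸ (mem_filter.1 hx).2
  refine ⟨ρ, hρ c (mem_singleton_self c), fun n hn => hlt _ (mem_filter.2 ⟨?_, hS n hn⟩)⟩
  rw [← hper.map_mod_nat n]
  exact mem_image_of_mem h (mem_range.2 (Nat.mod_lt n hq.pos))

lemma not_bddAbove_sum_pow_div_of_periodic {g : ℕ → ℝ} {q n₀ : ℕ} (hq : q ≠ 0)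
    (hper : Function.Periodic (fun n => |g n|) q) (hodd : ∀ n, Odd n → |g n| < 1)
    (hn₀ : |g n₀| = 1) :
    ¬ BddAbove (Set.range fun N : ℕ => ∑ n ∈ Icc 1 N, g n ^ n / (n : ℝ)) := by
  obtain ⟨ρ, hρ, hlt⟩ := exists_lt_forall_lt_of_periodic (S := {n | Odd n}) hq hper hodd
  refine not_bddAbove_sum_pow_div hρ (fun n hn => (hlt n hn).le) (fun n hn => ?_)
    (Real.not_summable_indicator_one_div_natCast hq (n₀ : ZMod q))
  rw [← hper.map_mod_nat n, (ZMod.natCast_eq_natCast_iff' _ _ _).1 hn, hper.map_mod_nat n₀, hn₀]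

lemma eventually_residual_not_bddAbove_range {X ι : Type*} [TopologicalSpace X] {F : ι → X → ℝ}
    {D : Set X} (hF : ∀ i, LowerSemicontinuous (F i)) (hD : Dense D)
    (h : ∀ x ∈ D, ¬ BddAbove (Set.range fun i => F i x)) :
    ∀ᶠ x in residual X, ¬ BddAbove (Set.range fun i => F i x) := by
  have hlarge : ∀ᶠ x in residual X, ∀ C : ℕ, ∃ i, (C : ℝ) < F i x := by
    refine eventually_countable_forall.2 fun C => residual_of_dense_open ?_ (hD.mono fun x hx => ?_)
    · simp only [Set.ofPred_exists]
      exact isOpen_iUnion fun i => (hF i).isOpen_preimage C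
    · simpa using not_bddAbove_iff.1 (h x hx) C
  filter_upwards [hlarge] with x hx
  refine not_bddAbove_iff.2 fun B => ?_
  obtain ⟨C, hC⟩ := exists_nat_ge B
  obtain ⟨i, hi⟩ := hx C
  exact ⟨_, ⟨i, rfl⟩, hC.trans_lt hi⟩

lemma exists_odd_abs_sub_mul_le {K : Type*} [Field K] [LinearOrder K] [IsStrictOrderedRing K]
    [FloorRing K] {r : K} (hr : 0 < r) (x : K) : ∃ p : ℤ, Odd p ∧ |x - p * r| ≤ r := by
  have hlow := Int.sub_floor_div_mul_nonneg x (mul_pos two_pos hr)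
  have hupp := Int.sub_floor_div_mul_lt x (mul_pos two_pos hr)
  refine ⟨2 * ⌊x / (2 * r)⌋ + 1, odd_two_mul_add_one _, abs_le.2 ⟨?_, ?_⟩⟩ <;>
    push_cast <;> linarith

/-- The rational numbers `p / (4s)` with `p` odd, that is, those whose reduced denominator is
divisible by `4`. Clearing the denominator makes `s ≠ 0` automatic, because `p ≠ 0`. -/
def oddQuarters : Set ℝ := {ξ | ∃ (s : ℕ) (p : ℤ), Odd p ∧ 4 * s * ξ = p}

lemma dense_oddQuarters : Dense oddQuarters := by
  refine Metric.dense_iff.2 fun x ε hε => ?_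
  obtain ⟨m, hm⟩ := exists_nat_one_div_lt hε
  have hr : (0 : ℝ) < 1 / (4 * (m + 1)) := by positivity
  obtain ⟨p, hp, hxp⟩ := exists_odd_abs_sub_mul_le hr x
  refine ⟨p * (1 / (4 * (m + 1))), ?_, m + 1, p, hp, by push_cast; field_simp⟩
  rw [Metric.mem_ball, dist_comm, Real.dist_eq]
  refine (hxp.trans ?_).trans_lt hm
  gcongr
  linarith [m.cast_nonneg (α := ℝ)]

lemma int_mul_pi_div_two_ne_of_mem_oddQuarters {ξ : ℝ} (hξ : ξ ∈ oddQuarters) {n : ℕ}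
    (hn : Odd n) (k : ℤ) : k * (π / 2) ≠ π * n * ξ := by
  obtain ⟨s, p, hp, hsp⟩ := hξ
  intro hk
  have hreal : (n * p : ℝ) = 2 * (s * k) := by
    rw [← hsp]
    refine mul_left_cancel₀ pi_ne_zero ?_
    linear_combination -4 * s * hk
  have hint : (n * p : ℤ) = 2 * (s * k) := by exact_mod_cast hreal
  have hodd : Odd (n * p : ℤ) := (hn.natCast).mul hp
  exact Int.not_even_iff_odd.2 hodd (hint ▸ even_two_mul _)

/-- The properties common to `sin` and `cos` on which the divergence of `∑ f (π n ξ) ^ n / n ^ α`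
rests: `f` is continuous and `π`-antiperiodic, and `|f|` has maximum `1`, attained at some
nonnegative integer multiple of `π / 2` and only at integer multiples of `π / 2`. -/
structure IsTrigLike (f : ℝ → ℝ) : Prop where
  continuous : Continuous f
  antiperiodic : Function.Antiperiodic f π
  abs_le_one : ∀ x, |f x| ≤ 1
  eq_mul_pi_div_two : ∀ x, |f x| = 1 → ∃ k : ℤ, k * (π / 2) = x
  exists_abs_eq_one : ∃ k : ℕ, |f (k * (π / 2))| = 1

lemma isTrigLike_sin : IsTrigLike sin where
  continuous := continuous_sin
  antiperiodic := sin_antiperiodic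
  abs_le_one := abs_sin_le_one
  eq_mul_pi_div_two x hx := by
    obtain ⟨k, rfl⟩ := abs_sin_eq_one_iff.1 hx
    exact ⟨2 * k + 1, by push_cast; ring⟩
  exists_abs_eq_one := ⟨1, by simp⟩

lemma isTrigLike_cos : IsTrigLike cos where
  continuous := continuous_cos
  antiperiodic := cos_antiperiodic
  abs_le_one := abs_cos_le_one
  eq_mul_pi_div_two x hx := by
    obtain ⟨k, rfl⟩ := abs_cos_eq_one_iff.1 hx
    exact ⟨2 * k, by push_cast; ring⟩
  exists_abs_eq_one := ⟨0, by simp⟩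

namespace IsTrigLike

variable {f : ℝ → ℝ}

lemma abs_add_int_mul_pi (hf : IsTrigLike f) (x : ℝ) (k : ℤ) : |f (x + k * π)| = |f x| := by
  have hper : Function.Periodic (fun x => |f x|) π := fun x => by
    simp only [hf.antiperiodic x, abs_neg]
  exact hper.int_mul k x

lemma not_bddAbove_sum_of_mem_oddQuarters (hf : IsTrigLike f) {ξ : ℝ} (hξ : ξ ∈ oddQuarters) :
    ¬ BddAbove (Set.range fun N : ℕ => ∑ n ∈ Icc 1 N, f (π * n * ξ) ^ n / (n : ℝ)) := by
  have hodd (n : ℕ) (hn : Odd n) : |f (π * n * ξ)| < 1 :=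
    (hf.abs_le_one _).lt_of_ne fun h =>
      let ⟨k, hk⟩ := hf.eq_mul_pi_div_two _ h
      int_mul_pi_div_two_ne_of_mem_oddQuarters hξ hn k hk
  obtain ⟨s, p, hp, hsp⟩ := hξ
  have hs : s ≠ 0 := by
    rintro rfl
    have hp₀ : p = 0 := by simpa [eq_comm] using hsp
    simp [hp₀] at hp
  obtain ⟨j, rfl⟩ := hp
  obtain ⟨k, hk⟩ := hf.exists_abs_eq_one
  have hper : Function.Periodic (fun n : ℕ => |f (π * n * ξ)|) (4 * s) := fun n => by
    beta_reduce
    rw [← hf.abs_add_int_mul_pi (π * n * ξ) (2 * j + 1), ← hsp]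
    congr 2
    push_cast
    ring
  have hone : |f (π * (2 * s * k : ℕ) * ξ)| = 1 := by
    rw [← hk, ← hf.abs_add_int_mul_pi (k * (π / 2)) (k * j)]
    congr 2
    push_cast at hsp ⊢
    linear_combination π * k / 2 * hsp
  exact not_bddAbove_sum_pow_div_of_periodic (by lia) hper hodd hone

theorem eventually_residual_not_bddAbove_sum (hf : IsTrigLike f) :
    ∀ᶠ ξ in residual ℝ, ∀ α : ℝ, α ≤ 1 →
      ¬ BddAbove (Set.range fun N : ℕ => ∑ n ∈ Icc 1 N, f (π * n * ξ) ^ n / (n : ℝ) ^ α) := by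
  have hcont (N : ℕ) : Continuous fun ξ => ∑ n ∈ Icc 1 N, f (π * n * ξ) ^ n / (n : ℝ) := by
    have := hf.continuous
    fun_prop
  filter_upwards [eventually_residual_not_bddAbove_range
    (fun N => (hcont N).lowerSemicontinuous) dense_oddQuarters
    fun _ hξ => hf.not_bddAbove_sum_of_mem_oddQuarters hξ] with ξ hξ α hα hbdd
  exact hξ (by simpa only [rpow_one] using bddAbove_sum_div_rpow_mono hα hbdd)

end IsTrigLike

theorem stmt19_general :
    ∀ᶠ ξ in residual ℝ, ∀ α : ℝ, α ≤ 1 →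
      ¬ BddAbove (Set.range fun N : ℕ => ∑ n ∈ Icc 1 N, sin (π * n * ξ) ^ n / (n : ℝ) ^ α) ∧
      ¬ BddAbove (Set.range fun N : ℕ => ∑ n ∈ Icc 1 N, cos (π * n * ξ) ^ n / (n : ℝ) ^ α) := by
  filter_upwards [isTrigLike_sin.eventually_residual_not_bddAbove_sum,
    isTrigLike_cos.eventually_residual_not_bddAbove_sum] with ξ hsin hcos α hα
  exact ⟨hsin α hα, hcos α hα⟩

/-- There is a dense set E of irrational numbers such that for every ξ ∈ E and
every α ≤ 1 both series ∑ sinⁿ(π n ξ)/n^α and ∑ cosⁿ(π n ξ)/n^α diverge. -/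
theorem stmt19 :
    ∃ E : Set ℝ, Dense E ∧ (∀ ξ ∈ E, Irrational ξ) ∧
      ∀ ξ ∈ E, ∀ α : ℝ, α ≤ 1 →
        (¬ ∃ l : ℝ, Tendsto (fun N : ℕ => ∑ n ∈ Finset.Icc 1 N,
            Real.sin (Real.pi * n * ξ) ^ n / (n : ℝ) ^ α) atTop (nhds l)) ∧
        (¬ ∃ l : ℝ, Tendsto (fun N : ℕ => ∑ n ∈ Finset.Icc 1 N,
            Real.cos (Real.pi * n * ξ) ^ n / (n : ℝ) ^ α) atTop (nhds l)) := by
  refine ⟨_, dense_of_mem_residual (eventually_residual_irrational.and stmt19_general),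
    fun ξ hξ => hξ.1, fun ξ hξ α hα => ?_⟩
  obtain ⟨hsin, hcos⟩ := hξ.2 α hα
  exact ⟨fun ⟨_, hl⟩ => hsin hl.bddAbove_range, fun ⟨_, hl⟩ => hcos hl.bddAbove_range⟩
end
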